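/- Let μ ∈ {1,-1}, s₀ > 0, u₀ ∈ H^{s₀}(𝕋), and let η : ℝ → ℝ be smooth and compactly supported. For τ ∈ (0,1] let u_τ ∈ C(ℝ, H^{s₀}(𝕋)) be the mild solution of the projected equation with datum u₀. Then for every s₁ with 0 ≤ s₁ < s₀ there exists C > 0 (depending on u₀, s₀, s₁, η but not on τ) such that for every τ ∈ (0,1], sup_{t' ∈ [0,4τ]} ‖(η(nτ) u_τ(nτ + t'))_{n∈ℤ}‖_{X^{s₁,3/8}_τ} ≤ C. -/

import Mathlib

noncomputable section

open MeasureTheory Complex Filter Topology AddCircle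
open scoped ENNReal

abbrev Torus := AddCircle (2 * Real.pi)

instance : Fact (0 < 2 * Real.pi) := ⟨by positivity⟩

/-- Japanese bracket `⟨x⟩ = (1+|x|²)^{1/2}`. -/
def jbr (x : ℝ) : ℝ := Real.sqrt (1 + x ^ 2)

/-- The Sobolev `H^s` norm on the torus, via Fourier coefficients. -/
def hsNorm (s : ℝ) (f : Torus → ℂ) : ℝ :=
  Real.sqrt (∑' k : ℤ, jbr k ^ (2 * s) * ‖fourierCoeff f k‖ ^ 2)

/-- Membership in `H^s(𝕋)` (as a function): square integrable with finite `H^s` norm. -/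
def InHs (s : ℝ) (f : Torus → ℂ) : Prop :=
  MemLp f 2 haarAddCircle ∧ Summable fun k : ℤ => jbr k ^ (2 * s) * ‖fourierCoeff f k‖ ^ 2

/-- The frequency cutoff `Π_τ`, keeping the Fourier modes `|k| ≤ τ^{-1/2}`. -/
def projC (τ : ℝ) (f : Torus → ℂ) : Torus → ℂ := fun x =>
  ∑' k : ℤ, if |(k : ℝ)| ≤ τ ^ (-(1 : ℝ) / 2) then fourierCoeff f k * fourier k x else 0

/-- The free Schrödinger group `e^{it∂_x²}`, given by the Fourier multiplier `e^{-itk²}`. -/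
def schrod (t : ℝ) (f : Torus → ℂ) : Torus → ℂ := fun x =>
  ∑' k : ℤ, Complex.exp (-Complex.I * t * (k : ℂ) ^ 2) * fourierCoeff f k * fourier k x

/-- Continuity on `I` with values in `L²(𝕋)`. -/
def ContL2On (I : Set ℝ) (u : ℝ → Torus → ℂ) : Prop :=
  (∀ t ∈ I, MemLp (u t) 2 haarAddCircle) ∧
  ∀ t ∈ I, Tendsto (fun t' => eLpNorm (u t' - u t) 2 haarAddCircle) (nhdsWithin t I) (nhds 0)

/-- Continuity on `I` with values in `H^s(𝕋)`. -/
def ContHsOn (s : ℝ) (I : Set ℝ) (u : ℝ → Torus → ℂ) : Prop :=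
  (∀ t ∈ I, InHs s (u t)) ∧
  ∀ t ∈ I, Tendsto (fun t' => hsNorm s (u t' - u t)) (nhdsWithin t I) (nhds 0)

/-- The cubic nonlinearity `|f|² f` (pointwise). -/
def cubic (f : Torus → ℂ) : Torus → ℂ := fun x => (‖f x‖ : ℂ) ^ 2 * f x

/-- The filtered cubic nonlinearity `Π_τ(|Π_τ f|² Π_τ f)`. -/
def projCubic (τ : ℝ) (f : Torus → ℂ) : Torus → ℂ := projC τ (cubic (projC τ f))

/-- `v` is the (global-in-time) mild solution of the projected equation
`i∂_t v = -∂_x² v - μ Π_τ(|Π_τ v|² Π_τ v)`, `v(0) = Π_τ u₀`. -/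
def IsProjSolution (μ τ : ℝ) (u₀ : Torus → ℂ) (v : ℝ → Torus → ℂ) : Prop :=
  ContL2On Set.univ v ∧
  ∀ t : ℝ, ∀ x : Torus,
    v t x = schrod t (projC τ u₀) x
      + Complex.I * μ * ∫ s in (0 : ℝ)..t, schrod (t - s) (projCubic τ (v s)) x

/-- The cubic NLS `i∂_t u = -∂_x² u - μ |u|² u` holds in the sense of space-time
distributions on `(0,T) × 𝕋` (tested against `ψ(t) e^{-ikx}`). -/
def DistribSolOn (μ T : ℝ) (u : ℝ → Torus → ℂ) : Prop :=
  ∀ k : ℤ, ∀ ψ : ℝ → ℂ, ContDiff ℝ (⊤ : ℕ∞) ψ → tsupport ψ ⊆ Set.Ioo 0 T →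
    -Complex.I * ∫ t : ℝ, deriv ψ t * fourierCoeff (u t) k
      = (k : ℂ) ^ 2 * ∫ t : ℝ, ψ t * fourierCoeff (u t) k
        - (μ : ℂ) * ∫ t : ℝ, ψ t * fourierCoeff (cubic (u t)) k

/-- `u ∈ L⁴((0,T) × 𝕋)`. -/
def SpaceTimeL4 (T : ℝ) (u : ℝ → Torus → ℂ) : Prop :=
  MemLp (fun p : ℝ × Torus => u p.1 p.2) 4
    ((volume.restrict (Set.Ioo 0 T)).prod haarAddCircle)

/-- Space-time Fourier transform `ṽ(σ,k)` of `v : ℝ × 𝕋 → ℂ`. -/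
def stFT (v : ℝ → Torus → ℂ) (σ : ℝ) (k : ℤ) : ℂ :=
  ∫ t : ℝ, Complex.exp (-Complex.I * σ * t) * fourierCoeff (v t) k

/-- The (continuous) Bourgain `X^{s,b}` norm, valued in `ℝ≥0∞`. -/
def XcNorm (s b : ℝ) (v : ℝ → Torus → ℂ) : ℝ≥0∞ :=
  (∫⁻ σ : ℝ, ∑' k : ℤ,
      ENNReal.ofReal ((1 + |(k : ℝ)|) ^ (2 * s) * (1 + |σ + (k : ℝ) ^ 2|) ^ (2 * b)
        * ‖stFT v σ k‖ ^ 2)) ^ (1 / 2 : ℝ)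

/-- The restriction norm `‖u‖_{X^{s,b}(T)}` is bounded by `M`: some extension of `u`
from `(0,T)` has `X^{s,b}` norm at most `M`. -/
def XresBounded (s b T : ℝ) (u : ℝ → Torus → ℂ) (M : ℝ≥0∞) : Prop :=
  ∃ v : ℝ → Torus → ℂ, (∀ t ∈ Set.Ioo 0 T, v t = u t) ∧ XcNorm s b v ≤ M

/-- `u` is a Bourgain-class solution of cubic NLS on `[0,T]` with datum `u₀`. -/
def IsNLSSolution (μ T : ℝ) (u₀ : Torus → ℂ) (u : ℝ → Torus → ℂ) : Prop :=
  ContL2On (Set.Icc 0 T) u ∧ SpaceTimeL4 T u ∧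
  (∃ b ∈ Set.Ioo (1 / 2 : ℝ) (5 / 8 : ℝ), ∃ v : ℝ → Torus → ℂ,
      (∀ t ∈ Set.Ioo 0 T, v t = u t) ∧ XcNorm 0 b v < ⊤) ∧
  u 0 = u₀ ∧ DistribSolOn μ T u

/-- One step of the pointwise nonlinear flow `e^{iμτ|Π_τ f|²} Π_τ f`. -/
def lieFlow (μ τ : ℝ) (f : Torus → ℂ) : Torus → ℂ := fun x =>
  Complex.exp (Complex.I * μ * τ * (‖projC τ f x‖ : ℂ) ^ 2) * projC τ f x

/-- The filtered Lie splitting scheme `u⁰ = Π_τ u₀`,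
`u^{n+1} = e^{iτ∂_x²} Π_τ (e^{iμτ|Π_τ uⁿ|²} Π_τ uⁿ)`. -/
def lieScheme (μ τ : ℝ) (u₀ : Torus → ℂ) : ℕ → Torus → ℂ
  | 0 => projC τ u₀
  | n + 1 => schrod τ (projC τ (lieFlow μ τ (lieScheme μ τ u₀ n)))

/-- `d_τ(σ) = (e^{iτσ}-1)/τ`. -/
def dtau (τ σ : ℝ) : ℂ := (Complex.exp (Complex.I * τ * σ) - 1) / τ

/-- The discrete Bourgain `X^{s,b}_τ` norm of a sequence of functions on the torus. -/
def XdNorm (τ s b : ℝ) (u : ℤ → Torus → ℂ) : ℝ :=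
  Real.sqrt (∫ σ in Set.Ioc (-(Real.pi / τ)) (Real.pi / τ),
    ∑' k : ℤ, jbr k ^ (2 * s) * jbr ‖dtau τ (σ - (k : ℝ) ^ 2)‖ ^ (2 * b) *
      ‖(τ : ℂ) * ∑' m : ℤ, fourierCoeff (u m) k * Complex.exp (Complex.I * m * τ * σ)‖ ^ 2)

/-- The discrete space-time Lebesgue norm `‖(u_n)‖_{ℓ^p_τ L^q}`. -/
def lpLqNorm (τ p q : ℝ) (u : ℤ → Torus → ℂ) : ℝ :=
  (τ * ∑' n : ℤ, (eLpNorm (u n) (ENNReal.ofReal q) haarAddCircle).toReal ^ p) ^ (1 / p)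


abbrev hm : Measure Torus := haarAddCircle

abbrev ES (S : Finset ℤ) := EuclideanSpace ℂ S

/-- free evolution of the profile `z`. -/
def UU {S : Finset ℤ} (z : ES S) (t : ℝ) (x : Torus) : ℂ :=
  ∑ k : S, z k * (Complex.exp (-Complex.I * t * ((k : ℤ) : ℂ) ^ 2) * fourier (k : ℤ) x)

def dbl (a b : ℝ) (f : ℝ → Torus → ℝ) : ℝ := ∫ t in a..b, ∫ x, f t x ∂hm

theorem cont_inner {F : Type*} [NormedAddCommGroup F] [NormedSpace ℝ F]
    [SecondCountableTopology F] {f : ℝ → Torus → F}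
    (hf : Continuous (Function.uncurry f)) : Continuous fun t => ∫ x, f t x ∂hm := by
  have := continuous_parametric_integral_of_continuous (μ := hm) hf (s := Set.univ) isCompact_univ
  simpa using this

theorem integrable_cont {F : Type*} [NormedAddCommGroup F] [SecondCountableTopology F]
    {f : Torus → F} (hf : Continuous f) : Integrable f hm := by
  have := hf.continuousOn.integrableOn_compact (μ := hm) (isCompact_univ (X := Torus))
  simpa using this

theorem cont_slice {F : Type*} [TopologicalSpace F] {f : ℝ → Torus → F}
    (hf : Continuous (Function.uncurry f)) (t : ℝ) : Continuous (f t) :=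
  hf.comp (Continuous.prodMk_right t)

theorem dbl_mono {a b : ℝ} (hab : a ≤ b) {f g : ℝ → Torus → ℝ}
    (hf : Continuous (Function.uncurry f)) (hg : Continuous (Function.uncurry g))
    (h : ∀ t ∈ Set.Icc a b, ∀ x, f t x ≤ g t x) : dbl a b f ≤ dbl a b g := by
  unfold dbl
  apply intervalIntegral.integral_mono_on hab
    ((cont_inner hf).intervalIntegrable _ _) ((cont_inner hg).intervalIntegrable _ _)
  intro t ht
  exact integral_mono (integrable_cont (cont_slice hf t)) (integrable_cont (cont_slice hg t))
    (h t ht)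

theorem dbl_add {a b : ℝ} {f g : ℝ → Torus → ℝ}
    (hf : Continuous (Function.uncurry f)) (hg : Continuous (Function.uncurry g)) :
    dbl a b (fun t x => f t x + g t x) = dbl a b f + dbl a b g := by
  unfold dbl
  rw [← intervalIntegral.integral_add ((cont_inner hf).intervalIntegrable _ _)
    ((cont_inner hg).intervalIntegrable _ _)]
  congr 1
  ext t
  exact integral_add (integrable_cont (cont_slice hf t)) (integrable_cont (cont_slice hg t))

theorem dbl_smul {a b : ℝ} {f : ℝ → Torus → ℝ} (c : ℝ) :
    dbl a b (fun t x => c * f t x) = c * dbl a b f := by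
  unfold dbl
  simp [integral_const_mul, intervalIntegral.integral_const_mul]

theorem dbl_const {a b : ℝ} (c : ℝ) :
    dbl a b (fun _ _ => c) = c * (b - a) := by
  unfold dbl
  simp [mul_comm]

theorem dbl_adj {a b c : ℝ} {f : ℝ → Torus → ℝ} (hf : Continuous (Function.uncurry f)) :
    dbl a b f + dbl b c f = dbl a c f :=
  intervalIntegral.integral_add_adjacent_intervals
    ((cont_inner hf).intervalIntegrable _ _) ((cont_inner hf).intervalIntegrable _ _)

theorem UU_cont {S : Finset ℤ} {z : ℝ → ES S} (hz : Continuous z) :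
    Continuous (Function.uncurry fun t x => UU (z t) t x) := by
  unfold UU Function.uncurry
  apply continuous_finsetSum
  intro k _
  have h1 : Continuous fun p : ℝ × Torus => (z p.1) k :=
    ((EuclideanSpace.proj (𝕜 := ℂ) k).continuous).comp (hz.comp continuous_fst)
  have h2 : Continuous fun p : ℝ × Torus => fourier (k : ℤ) p.2 :=
    (fourier (k : ℤ)).continuous.comp continuous_snd
  fun_prop

theorem UU_add {S : Finset ℤ} (z w : ES S) (t : ℝ) (x : Torus) :
    UU (z + w) t x = UU z t x + UU w t x := by
  simp [UU, add_mul, Finset.sum_add_distrib]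

theorem UU_sub {S : Finset ℤ} (z w : ES S) (t : ℝ) (x : Torus) :
    UU (z - w) t x = UU z t x - UU w t x := by
  simp [UU, sub_mul, Finset.sum_sub_distrib]

theorem norm_fourier (k : ℤ) (x : Torus) : ‖fourier k x‖ = 1 := by
  rw [fourier_apply]; exact Circle.norm_coe _

theorem norm_phase (t : ℝ) (k : ℤ) : ‖Complex.exp (-Complex.I * t * (k : ℂ) ^ 2)‖ = 1 := by
  have : -Complex.I * t * (k : ℂ) ^ 2 = ((-t * (k:ℝ)^2 : ℝ) : ℂ) * Complex.I := by
    push_cast; ring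
  rw [this, Complex.norm_exp_ofReal_mul_I]

theorem UU_crude {S : Finset ℤ} (z : ES S) (t : ℝ) (x : Torus) :
    ‖UU z t x‖ ≤ S.card * ‖z‖ := by
  unfold UU
  refine (norm_sum_le _ _).trans ?_
  have : ∀ k ∈ (Finset.univ : Finset S),
      ‖z k * (Complex.exp (-Complex.I * t * ((k : ℤ) : ℂ) ^ 2) * fourier (k : ℤ) x)‖ ≤ ‖z‖ := by
    intro k _
    rw [norm_mul, norm_mul, norm_phase, norm_fourier, mul_one, mul_one]
    exact PiLp.norm_apply_le z k
  refine (Finset.sum_le_sum this).trans ?_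
  simp

theorem fourier_int (k : ℤ) : ∫ x, fourier k x ∂hm = if k = 0 then (1:ℂ) else 0 := by
  have h := congrFun (fourierCoeff_fourier (T := 2 * Real.pi) k) 0
  simp only [fourierCoeff, neg_zero, fourier_zero, one_smul] at h
  rw [show (∫ x, fourier k x ∂hm) = ∫ x, fourier k x ∂haarAddCircle from rfl, h]
  by_cases hk : k = 0
  · simp [hk]
  · simp [hk, Pi.single_apply, eq_comm]


theorem kern_bound (a l lam : ℝ) (hl : 0 ≤ l) :
    ‖∫ t in a..(a + l), Complex.exp (-Complex.I * t * (lam : ℂ))‖ ≤ 2 * l / (1 + l * |lam| / 2) := by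
  have hpos : 0 < 1 + l * |lam| / 2 := by positivity
  have hn : ∀ t : ℝ, ‖Complex.exp (-Complex.I * t * (lam : ℂ))‖ = 1 := by
    intro t
    have : -Complex.I * t * (lam : ℂ) = ((-t * lam : ℝ) : ℂ) * Complex.I := by push_cast; ring
    rw [this, Complex.norm_exp_ofReal_mul_I]
  have h1 : ‖∫ t in a..(a + l), Complex.exp (-Complex.I * t * (lam : ℂ))‖ ≤ l := by
    have := intervalIntegral.norm_integral_le_of_norm_le_const (a := a) (b := a + l) (C := 1)
      (f := fun t : ℝ => Complex.exp (-Complex.I * t * (lam : ℂ))) (fun t _ => (hn t).le)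
    simpa [abs_of_nonneg hl] using this
  rcases le_or_gt (l * |lam| / 2) 1 with h | h
  · refine h1.trans ?_
    rw [le_div_iff₀ hpos]
    nlinarith
  · have hlam : 0 < |lam| := by
      rcases (abs_nonneg lam).eq_or_lt with h0 | h0
      · rw [← h0] at h; norm_num at h
      · exact h0
    have hne : (-Complex.I * (lam : ℂ)) ≠ 0 := by
      have : lam ≠ 0 := abs_pos.mp hlam
      simp [this]
    have h2 : ‖∫ t in a..(a + l), Complex.exp (-Complex.I * t * (lam : ℂ))‖ ≤ 2 / |lam| := by
      have e : ∀ t : ℝ, Complex.exp (-Complex.I * t * (lam : ℂ))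
          = Complex.exp ((-Complex.I * (lam : ℂ)) * t) := fun t => by ring_nf
      simp_rw [e]
      rw [integral_exp_mul_complex hne, norm_div, ← e, ← e]
      have : ‖-Complex.I * (lam : ℂ)‖ = |lam| := by simp
      rw [this]
      gcongr
      refine (norm_sub_le _ _).trans ?_
      rw [hn, hn]; norm_num
    refine h2.trans ?_
    rw [div_le_div_iff₀ hlam hpos]
    nlinarith

theorem tele_bound (m : ℝ) (hm : 0 < m) (P : ℕ) :
    ∑ n ∈ Finset.range P, 1 / (1 + m ^ 2 * ((n : ℝ) + 1) ^ 2)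
      ≤ 2 / m * (1 - 1 / (1 + m * P)) := by
  induction P with
  | zero => simp
  | succ P ih =>
    rw [Finset.sum_range_succ]
    have hP : (0 : ℝ) ≤ P := P.cast_nonneg
    have h0 : 0 ≤ m * P := by positivity
    have key : 1 / (1 + m ^ 2 * ((P : ℝ) + 1) ^ 2)
        ≤ 2 / m * (1 / (1 + m * P) - 1 / (1 + m * (P + 1))) := by
      have e : 2 / m * (1 / (1 + m * P) - 1 / (1 + m * (P + 1)))
          = 2 / ((1 + m * P) * (1 + m * (P + 1))) := by
        have : (1 + m * P) ≠ 0 := by positivity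
        have : (1 + m * (P + 1 : ℝ)) ≠ 0 := by positivity
        field_simp
        ring
      rw [e, div_le_div_iff₀ (by positivity) (by positivity)]
      nlinarith [sq_nonneg (m * (P + 1) - 1), mul_pos hm hm]
    push_cast
    linarith

theorem half_sum (m : ℝ) (hm : 0 < m) (Q : Finset ℕ) :
    ∑ n ∈ Q, 1 / (1 + m ^ 2 * ((n : ℝ) + 1) ^ 2) ≤ 2 / m := by
  obtain ⟨P, hP⟩ := Q.exists_nat_subset_range
  refine (Finset.sum_le_sum_of_subset_of_nonneg hP (fun _ _ _ => by positivity)).trans ?_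
  refine (tele_bound m hm P).trans ?_
  have : 0 ≤ 1 / (1 + m * P) := by positivity
  have h2 : 0 < 2 / m := by positivity
  nlinarith

theorem int_sum (m : ℝ) (hm : 0 < m) (Q : Finset ℤ) :
    ∑ n ∈ Q, 1 / (1 + m ^ 2 * (n : ℝ) ^ 2) ≤ 1 + 4 / m := by
  have hs : ∀ F : Finset ℕ, ∑ n ∈ F, 1 / (1 + m ^ 2 * (n : ℝ) ^ 2) ≤ 1 + 2 / m := by
    intro F
    obtain ⟨P, hP⟩ := F.exists_nat_subset_range
    refine (Finset.sum_le_sum_of_subset_of_nonneg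
      (hP.trans (Finset.range_mono (Nat.le_succ P))) (fun _ _ _ => by positivity)).trans ?_
    rw [Finset.sum_range_succ']
    have := half_sum m hm (Finset.range P)
    push_cast
    norm_num at this ⊢
    linarith
  have hsplit : Q = Q.filter (0 ≤ ·) ∪ Q.filter (¬ 0 ≤ ·) :=
    (Finset.filter_union_filter_not_eq _ _).symm
  rw [hsplit, Finset.sum_union (Finset.disjoint_filter_filter_not _ _ _)]
  have a1 : ∑ n ∈ Q.filter (0 ≤ ·), 1 / (1 + m ^ 2 * (n : ℝ) ^ 2) ≤ 1 + 2 / m := by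
    refine le_trans (le_of_eq ?_) (hs ((Q.filter (0 ≤ ·)).image Int.natAbs))
    rw [Finset.sum_image]
    · apply Finset.sum_congr rfl
      intro n _
      rw [Nat.cast_natAbs]; simp
    · intro x hx y hy hxy
      simp at hx hy
      omega
  have a2 : ∑ n ∈ Q.filter (¬ 0 ≤ ·), 1 / (1 + m ^ 2 * (n : ℝ) ^ 2) ≤ 2 / m := by
    refine le_trans (le_of_eq ?_) (half_sum m hm ((Q.filter (¬ 0 ≤ ·)).image (fun n => n.natAbs - 1)))
    rw [Finset.sum_image]
    · apply Finset.sum_congr rfl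
      intro n hn
      simp at hn
      have : (((n.natAbs - 1 : ℕ) : ℝ) + 1) = -(n : ℝ) := by
        have : ((n.natAbs - 1 : ℕ) : ℤ) + 1 = -n := by omega
        exact_mod_cast this
      rw [this]; simp
    · intro x hx y hy hxy
      simp at hx hy hxy
      omega
  have : 4 / m = 2 / m + 2 / m := by ring
  linarith

theorem ksum (l : ℝ) (hl : 0 < l) (hl1 : l ≤ 1) (Q : Finset ℤ) :
    ∑ n ∈ Q, 2 * l / (1 + l * (n : ℝ) ^ 2) ≤ 10 * √l := by
  have h := int_sum (√l) (Real.sqrt_pos.mpr hl) Q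
  rw [Real.sq_sqrt hl.le] at h
  have e : ∑ n ∈ Q, 2 * l / (1 + l * (n : ℝ) ^ 2)
      = 2 * l * ∑ n ∈ Q, 1 / (1 + l * (n : ℝ) ^ 2) := by
    rw [Finset.mul_sum]; apply Finset.sum_congr rfl; intros; ring
  rw [e]
  have hq : √l ≤ 1 := Real.sqrt_le_one.mpr hl1
  have hq0 := Real.sqrt_pos.mpr hl
  have hll : l = √l * √l := (Real.mul_self_sqrt hl.le).symm
  calc 2 * l * ∑ n ∈ Q, 1 / (1 + l * (n : ℝ) ^ 2) ≤ 2 * l * (1 + 4 / √l) := by gcongr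
    _ = 2 * l + 8 * √l := by
      rw [mul_add, mul_one]
      have : 2 * l * (4 / √l) = 8 * √l := by
        rw [eq_comm]; nth_rw 2 [hll]; field_simp; norm_num
      linarith
    _ ≤ 10 * √l := by nlinarith

theorem sq_kern (n1 n2 : ℤ) (l : ℝ) (hl : 0 ≤ l) :
    2 * l / (1 + l * |2 * (n1 : ℝ) * n2| / 2)
      ≤ 2 * l / (1 + l * (n1 : ℝ) ^ 2) + 2 * l / (1 + l * (n2 : ℝ) ^ 2) := by
  have e : |2 * (n1 : ℝ) * n2| / 2 = |(n1 : ℝ)| * |(n2 : ℝ)| := by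
    rw [abs_mul, abs_mul]; norm_num; ring
  rw [mul_div_assoc l, e]
  rw [← sq_abs (n1 : ℝ), ← sq_abs (n2 : ℝ)]
  set x := |(n1 : ℝ)|
  set y := |(n2 : ℝ)|
  have hx : 0 ≤ x := abs_nonneg _
  have hy : 0 ≤ y := abs_nonneg _
  rcases le_total x y with h | h
  · have : 2 * l / (1 + l * (x * y)) ≤ 2 * l / (1 + l * x ^ 2) := by
      gcongr; nlinarith
    have : 0 ≤ 2 * l / (1 + l * y ^ 2) := by positivity
    linarith
  · have : 2 * l / (1 + l * (x * y)) ≤ 2 * l / (1 + l * y ^ 2) := by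
      gcongr; nlinarith
    have : 0 ≤ 2 * l / (1 + l * x ^ 2) := by positivity
    linarith

/-- row sum -/
theorem row_sum {S : Finset ℤ} (l : ℝ) (hl : 0 < l) (hl1 : l ≤ 1) (p : S × S) :
    ∑ q : S × S, (if ((p.1 : ℤ) + p.2) = (q.1 : ℤ) + q.2 then
      2 * l / (1 + l * |((((p.1 : ℤ) ^ 2 + (p.2 : ℤ) ^ 2 - ((q.1 : ℤ) ^ 2 + (q.2 : ℤ) ^ 2) : ℤ)) : ℝ)| / 2)
      else 0) ≤ 20 * √l := by
  classical
  rw [← Finset.sum_filter]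
  set Q := (Finset.univ : Finset (S × S)).filter
    (fun q => ((p.1 : ℤ) + p.2) = (q.1 : ℤ) + q.2)
  have hb : ∀ q ∈ Q, 2 * l / (1 + l * |((((p.1 : ℤ) ^ 2 + (p.2 : ℤ) ^ 2 - ((q.1 : ℤ) ^ 2 + (q.2 : ℤ) ^ 2) : ℤ)) : ℝ)| / 2)
      ≤ 2 * l / (1 + l * (((q.1 : ℤ) - p.1 : ℤ) : ℝ) ^ 2)
        + 2 * l / (1 + l * (((q.1 : ℤ) - p.2 : ℤ) : ℝ) ^ 2) := by
    intro q hq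
    simp only [Q, Finset.mem_filter, Finset.mem_univ, true_and] at hq
    refine le_trans (le_of_eq ?_) (sq_kern ((q.1 : ℤ) - p.1) ((q.1 : ℤ) - p.2) l hl.le)
    have e : (((p.1 : ℤ) ^ 2 + (p.2 : ℤ) ^ 2 - ((q.1 : ℤ) ^ 2 + (q.2 : ℤ) ^ 2) : ℤ))
        = -(2 * ((q.1 : ℤ) - p.1) * ((q.1 : ℤ) - p.2)) := by
      have : (q.2 : ℤ) = p.1 + p.2 - q.1 := by linarith
      rw [this]; ring
    rw [e]; push_cast; rw [abs_neg]
  refine (Finset.sum_le_sum hb).trans ?_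
  rw [Finset.sum_add_distrib]
  have hi : ∀ c : ℤ, ∑ q ∈ Q, 2 * l / (1 + l * (((q.1 : ℤ) - c : ℤ) : ℝ) ^ 2) ≤ 10 * √l := by
    intro c
    refine le_trans (le_of_eq ?_) (ksum l hl hl1 (Q.image (fun q => (q.1 : ℤ) - c)))
    rw [Finset.sum_image]
    intro x hx y hy hxy
    simp only [Q, Finset.coe_filter, Finset.mem_univ, true_and, Set.mem_ofPred_eq] at hx hy
    simp only at hxy
    have h1 : (x.1 : ℤ) = y.1 := by linarith
    have h2 : (x.2 : ℤ) = y.2 := by linarith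
    exact Prod.ext (Subtype.ext h1) (Subtype.ext h2)
  have := hi p.1
  have := hi p.2
  linarith


theorem pow4_expand {S : Finset ℤ} (z : ES S) (t : ℝ) (x : Torus) :
    ((‖UU z t x‖ ^ 4 : ℝ) : ℂ) = ∑ p : S × S, ∑ q : S × S,
      (z p.1 * z p.2 * (starRingEnd ℂ) (z q.1 * z q.2)) *
      (Complex.exp (-Complex.I * t * ((((p.1 : ℤ) ^ 2 + (p.2 : ℤ) ^ 2 - ((q.1 : ℤ) ^ 2 + (q.2 : ℤ) ^ 2) : ℤ) : ℝ) : ℂ))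
        * fourier (((p.1 : ℤ) + p.2) - ((q.1 : ℤ) + q.2)) x) := by
  have h2 : UU z t x ^ 2 = ∑ p : S × S, z p.1 * z p.2 *
      (Complex.exp (-Complex.I * t * (((p.1 : ℤ) ^ 2 + (p.2 : ℤ) ^ 2 : ℤ) : ℂ))
        * fourier ((p.1 : ℤ) + p.2) x) := by
    rw [sq, UU, Finset.sum_mul_sum, Fintype.sum_prod_type]
    apply Finset.sum_congr rfl; intro i _
    apply Finset.sum_congr rfl; intro j _
    rw [fourier_add]
    push_cast
    rw [mul_add, Complex.exp_add]
    ring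
  have h4 : ((‖UU z t x‖ ^ 4 : ℝ) : ℂ) = UU z t x ^ 2 * (starRingEnd ℂ) (UU z t x ^ 2) := by
    rw [Complex.mul_conj, Complex.normSq_eq_norm_sq, norm_pow]; push_cast; ring
  rw [h4, h2, map_sum, Finset.sum_mul_sum]
  apply Finset.sum_congr rfl; intro p _
  apply Finset.sum_congr rfl; intro q _
  rw [sub_eq_add_neg ((p.1 : ℤ) + (p.2 : ℤ)),
    fourier_add (m := (p.1 : ℤ) + p.2) (n := -((q.1 : ℤ) + q.2)), fourier_neg]
  simp only [map_mul, ← Complex.exp_conj]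
  push_cast
  rw [mul_sub, Complex.exp_sub, div_eq_mul_inv, ← Complex.exp_neg]
  have : (starRingEnd ℂ) (-Complex.I * ↑t * ((((q.1 : ℤ) : ℂ)) ^ 2 + (((q.2 : ℤ) : ℂ)) ^ 2))
      = -(-Complex.I * ↑t * ((((q.1 : ℤ) : ℂ)) ^ 2 + (((q.2 : ℤ) : ℂ)) ^ 2)) := by
    simp [Complex.conj_ofReal]
  rw [map_mul, map_mul] at this
  rw [this]
  ring

theorem dbl_ofReal (a b : ℝ) (f : ℝ → Torus → ℝ) :
    ((dbl a b f : ℝ) : ℂ) = ∫ t in a..b, ∫ x, (f t x : ℂ) ∂hm := by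
  unfold dbl
  rw [← intervalIntegral.integral_ofReal]
  congr 1
  ext t
  exact integral_ofReal.symm

theorem norm4 {S : Finset ℤ} (z : ES S) :
    ∑ p : S × S, ‖z p.1 * z p.2‖ ^ 2 = ‖z‖ ^ 4 := by
  have h := EuclideanSpace.norm_sq_eq z
  calc ∑ p : S × S, ‖z p.1 * z p.2‖ ^ 2 = (∑ i, ‖z i‖ ^ 2) * (∑ i, ‖z i‖ ^ 2) := by
        rw [Finset.sum_mul_sum, Fintype.sum_prod_type]
        simp [mul_pow]
    _ = ‖z‖ ^ 4 := by rw [← h]; ring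

theorem strichartz {S : Finset ℤ} (z : ES S) (a l : ℝ) (hl : 0 < l) (hl1 : l ≤ 1) :
    dbl a (a + l) (fun t x => ‖UU z t x‖ ^ 4) ≤ 20 * √l * ‖z‖ ^ 4 := by
  classical
  set b : S × S → ℂ := fun p => z p.1 * z p.2 with hb
  set L : S × S → S × S → ℝ := fun p q =>
    (((p.1 : ℤ) ^ 2 + (p.2 : ℤ) ^ 2 - ((q.1 : ℤ) ^ 2 + (q.2 : ℤ) ^ 2) : ℤ) : ℝ) with hL
  set K : S × S → S × S → ℝ := fun p q => if ((p.1 : ℤ) + p.2) = (q.1 : ℤ) + q.2 then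
      2 * l / (1 + l * |L p q| / 2) else 0 with hK
  have hK0 : ∀ p q, 0 ≤ K p q := by
    intro p q; simp only [hK]; split_ifs <;> positivity
  have hKs : ∀ p q, K p q = K q p := by
    intro p q
    simp only [hK]
    have : |L p q| = |L q p| := by
      rw [← abs_neg]; congr 1; simp only [hL]; push_cast; ring
    rw [this]
    congr 1
    exact propext eq_comm
  have e : ((dbl a (a + l) (fun t x => ‖UU z t x‖ ^ 4) : ℝ) : ℂ)
      = ∑ p : S × S, ∑ q : S × S, (b p * (starRingEnd ℂ) (b q)) *
        ((∫ t in a..(a + l), Complex.exp (-Complex.I * t * (L p q : ℂ))) *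
          (if ((p.1 : ℤ) + p.2) - ((q.1 : ℤ) + q.2) = 0 then 1 else 0)) := by
    rw [dbl_ofReal]
    have inner : ∀ t : ℝ, ∫ x, ((‖UU z t x‖ ^ 4 : ℝ) : ℂ) ∂hm = ∑ p : S × S, ∑ q : S × S,
        (b p * (starRingEnd ℂ) (b q)) * (Complex.exp (-Complex.I * t * (L p q : ℂ)) *
          (if ((p.1 : ℤ) + p.2) - ((q.1 : ℤ) + q.2) = 0 then 1 else 0)) := by
      intro t
      simp_rw [pow4_expand]
      rw [integral_finsetSum]
      · apply Finset.sum_congr rfl; intro p _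
        rw [integral_finsetSum]
        · apply Finset.sum_congr rfl; intro q _
          rw [integral_const_mul, integral_const_mul, fourier_int]
        · intro q _
          apply integrable_cont
          have := (fourier (T := 2 * Real.pi) (((p.1 : ℤ) + p.2) - ((q.1 : ℤ) + q.2))).continuous
          fun_prop
      · intro p _
        apply integrable_cont
        apply continuous_finsetSum; intro q _
        have := (fourier (T := 2 * Real.pi) (((p.1 : ℤ) + p.2) - ((q.1 : ℤ) + q.2))).continuous
        fun_prop
    simp_rw [inner]
    rw [intervalIntegral.integral_finsetSum]
    · apply Finset.sum_congr rfl; intro p _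
      rw [intervalIntegral.integral_finsetSum]
      · apply Finset.sum_congr rfl; intro q _
        rw [intervalIntegral.integral_const_mul, intervalIntegral.integral_mul_const]
      · intro q _
        apply Continuous.intervalIntegrable
        fun_prop
    · intro p _
      apply Continuous.intervalIntegrable
      fun_prop
  have h0 : dbl a (a + l) (fun t x => ‖UU z t x‖ ^ 4)
      ≤ ∑ p : S × S, ∑ q : S × S, ‖b p‖ * ‖b q‖ * K p q := by
    calc dbl a (a + l) (fun t x => ‖UU z t x‖ ^ 4)
        ≤ ‖((dbl a (a + l) (fun t x => ‖UU z t x‖ ^ 4) : ℝ) : ℂ)‖ := by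
          rw [Complex.norm_real]; exact Real.le_norm_self _
      _ ≤ _ := by
          rw [e]
          refine (norm_sum_le _ _).trans (Finset.sum_le_sum fun p _ => ?_)
          refine (norm_sum_le _ _).trans (Finset.sum_le_sum fun q _ => ?_)
          rw [norm_mul, norm_mul, RCLike.norm_conj, norm_mul]
          gcongr
          simp only [hK, sub_eq_zero]
          split_ifs
          · simpa using kern_bound a l (L p q) hl.le
          · simp
  have h1 : ∑ p : S × S, ∑ q : S × S, ‖b p‖ * ‖b q‖ * K p q
      ≤ ∑ p : S × S, ∑ q : S × S, (‖b p‖ ^ 2 / 2 * K p q + ‖b q‖ ^ 2 / 2 * K p q) := by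
    refine Finset.sum_le_sum fun p _ => Finset.sum_le_sum fun q _ => ?_
    nlinarith [sq_nonneg (‖b p‖ - ‖b q‖), hK0 p q, mul_nonneg (sq_nonneg (‖b p‖ - ‖b q‖)) (hK0 p q)]
  have hA : ∑ p : S × S, ∑ q : S × S, ‖b p‖ ^ 2 / 2 * K p q ≤ 10 * √l * ‖z‖ ^ 4 := by
    calc ∑ p : S × S, ∑ q : S × S, ‖b p‖ ^ 2 / 2 * K p q
        = ∑ p : S × S, ‖b p‖ ^ 2 / 2 * ∑ q : S × S, K p q := by
          simp_rw [Finset.mul_sum]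
      _ ≤ ∑ p : S × S, ‖b p‖ ^ 2 / 2 * (20 * √l) := by
          refine Finset.sum_le_sum fun p _ => ?_
          gcongr
          exact row_sum l hl hl1 p
      _ = 10 * √l * ‖z‖ ^ 4 := by
          rw [← norm4, Finset.mul_sum]
          refine Finset.sum_congr rfl fun p _ => ?_
          ring
  have hB : ∑ p : S × S, ∑ q : S × S, ‖b q‖ ^ 2 / 2 * K p q
      = ∑ p : S × S, ∑ q : S × S, ‖b p‖ ^ 2 / 2 * K p q := by
    rw [Finset.sum_comm]
    refine Finset.sum_congr rfl fun p _ => Finset.sum_congr rfl fun q _ => ?_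
    rw [hKs]
  simp_rw [Finset.sum_add_distrib] at h1
  linarith


/-- 1/2-Hölder on an interval -/
def Hol {F : Type*} [NormedAddCommGroup F] (D : ℝ → F) (a b L : ℝ) : Prop :=
  ∀ s t, a ≤ s → s ≤ t → t ≤ b → ‖D t - D s‖ ≤ L * √(t - s)

theorem pow4_split (a b : ℝ) (ha : 0 ≤ a) (hb : 0 ≤ b) : (a + b) ^ 4 ≤ 4 * a ^ 4 + 151 * b ^ 4 := by
  rcases le_total b (2 / 5 * a) with h | h
  · calc (a + b) ^ 4 ≤ (a + 2 / 5 * a) ^ 4 := by gcongr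
      _ = (2401 / 625) * a ^ 4 := by ring
      _ ≤ 4 * a ^ 4 + 151 * b ^ 4 := by nlinarith [pow_nonneg ha 4, pow_nonneg hb 4]
  · have : a ≤ 5 / 2 * b := by linarith
    calc (a + b) ^ 4 ≤ (5 / 2 * b + b) ^ 4 := by gcongr
      _ = (2401 / 16) * b ^ 4 := by ring
      _ ≤ 4 * a ^ 4 + 151 * b ^ 4 := by nlinarith [pow_nonneg ha 4, pow_nonneg hb 4]

theorem pow4_split8 (a b : ℝ) (ha : 0 ≤ a) (hb : 0 ≤ b) : (a + b) ^ 4 ≤ 8 * a ^ 4 + 8 * b ^ 4 := by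
  have := add_pow_le ha hb 4
  norm_num at this
  linarith

theorem contUU4 {S : Finset ℤ} {z : ℝ → ES S} (hz : Continuous z) :
    Continuous (Function.uncurry fun t x => ‖UU (z t) t x‖ ^ 4) :=
  (UU_cont hz).norm.pow 4

theorem embed0 {S : Finset ℤ} (l0 : ℝ) (hl0 : 0 < l0)
    (hl0S : (S.card : ℝ) ^ 4 * √l0 ≤ 5000) (n : ℕ) :
    ∀ (z : ℝ → ES S), Continuous z → ∀ a l L : ℝ, 0 < l → l ≤ 1 → l ≤ l0 * 2 ^ n → 0 ≤ L →
      Hol z a (a + l) L → z a = 0 →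
      dbl a (a + l) (fun t x => ‖UU (z t) t x‖ ^ 4) ≤ 5000 * L ^ 4 * l ^ 2 * √l := by
  induction n with
  | zero =>
    intro z hz a l L hl hl1 hln hL hH hza
    have hb : ∀ t ∈ Set.Icc a (a + l), ∀ x, ‖UU (z t) t x‖ ^ 4 ≤ (S.card : ℝ) ^ 4 * L ^ 4 * l ^ 2 := by
      intro t ht x
      have h1 := hH a t le_rfl ht.1 ht.2
      rw [hza, sub_zero] at h1
      have h2 : √(t - a) ≤ √l := Real.sqrt_le_sqrt (by linarith [ht.2])
      calc ‖UU (z t) t x‖ ^ 4 ≤ (S.card * (L * √l)) ^ 4 := by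
            gcongr
            refine (UU_crude _ _ _).trans ?_
            gcongr
            exact h1.trans (by gcongr)
        _ = (S.card : ℝ) ^ 4 * L ^ 4 * (√l ^ 2) ^ 2 := by ring
        _ = _ := by rw [Real.sq_sqrt hl.le]
    have h := dbl_mono (a := a) (b := a + l) (by linarith) (contUU4 hz) continuous_const hb
    refine h.trans ?_
    have h3 := dbl_const (a := a) (b := a + l) ((S.card : ℝ) ^ 4 * L ^ 4 * l ^ 2)
    have h4 : dbl a (a + l) (fun t x => (S.card : ℝ) ^ 4 * L ^ 4 * l ^ 2)
      = (S.card : ℝ) ^ 4 * L ^ 4 * l ^ 2 * (a + l - a) := h3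
    rw [h4]
    have h5 : √l ≤ √l0 := Real.sqrt_le_sqrt (by simpa using hln)
    have h6 : (S.card : ℝ) ^ 4 * √l ≤ 5000 := le_trans (by gcongr) hl0S
    have h7 : l = √l * √l := (Real.mul_self_sqrt hl.le).symm
    have : (S.card : ℝ) ^ 4 * L ^ 4 * l ^ 2 * (a + l - a) = ((S.card : ℝ) ^ 4 * √l) * (L ^ 4 * l ^ 2 * √l) := by
      rw [add_sub_cancel_left]; nth_rw 2 [h7]; ring
    rw [this]
    calc _ ≤ 5000 * (L ^ 4 * l ^ 2 * √l) := by gcongr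
      _ = _ := by ring
  | succ n ih =>
    intro z hz a l L hl hl1 hln hL hH hza
    have hl2 : 0 < l / 2 := by positivity
    have hln' : l / 2 ≤ l0 * 2 ^ n := by rw [pow_succ] at hln; linarith
    have A1 := ih z hz a (l / 2) L hl2 (by linarith) hln' hL
      (fun s t h1 h2 h3 => hH s t h1 h2 (by linarith)) hza
    set m := a + l / 2 with hm
    have hz' : Continuous fun t => z t - z m := hz.sub continuous_const
    have A2 := ih (fun t => z t - z m) hz' m (l / 2) L hl2 (by linarith) hln' hL
      (fun s t h1 h2 h3 => by
        have := hH s t (by linarith) h2 (by linarith)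
        simpa using this) (by simp)
    have hzm : ‖z m‖ ≤ L * √(l / 2) := by
      have := hH a m le_rfl (by linarith) (by linarith)
      rw [hza, sub_zero] at this
      simpa [hm] using this
    have A3 := strichartz (z m) m (l / 2) hl2 (by linarith)
    have hadj := dbl_adj (a := a) (b := m) (c := a + l) (contUU4 hz)
    have hme : m + l / 2 = a + l := by rw [hm]; ring
    rw [hme] at A2 A3
    have B : dbl m (a + l) (fun t x => ‖UU (z t) t x‖ ^ 4)
        ≤ 4 * dbl m (a + l) (fun t x => ‖UU (z t - z m) t x‖ ^ 4)
          + 151 * dbl m (a + l) (fun t x => ‖UU (z m) t x‖ ^ 4) := by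
      have c1 := contUU4 hz'
      have c2 := contUU4 (z := fun _ => z m) continuous_const
      rw [← dbl_smul, ← dbl_smul, ← dbl_add (by exact continuous_const.mul c1) (by exact continuous_const.mul c2)]
      apply dbl_mono (by linarith) (contUU4 hz)
      · exact (continuous_const.mul c1).add (continuous_const.mul c2)
      · intro t _ x
        refine le_trans ?_ (pow4_split _ _ (norm_nonneg _) (norm_nonneg _))
        gcongr
        have : UU (z t) t x = UU (z t - z m) t x + UU (z m) t x := by
          rw [← UU_add]; simp
        rw [this]
        exact norm_add_le _ _
    rw [← hadj]
    have hq : √(l / 2) = √l / √2 := Real.sqrt_div hl.le 2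
    have h2a : (1.413 : ℝ) < √2 := by
      rw [Real.lt_sqrt (by norm_num)]; norm_num
    have h2b : √2 * √2 = (2 : ℝ) := Real.mul_self_sqrt (by norm_num)
    have hzm4 : ‖z m‖ ^ 4 ≤ L ^ 4 * (l / 2) ^ 2 := by
      calc ‖z m‖ ^ 4 ≤ (L * √(l / 2)) ^ 4 := by gcongr
        _ = L ^ 4 * (√(l / 2) ^ 2) ^ 2 := by ring
        _ = _ := by rw [Real.sq_sqrt hl2.le]
    have A3' : dbl m (a + l) (fun t x => ‖UU (z m) t x‖ ^ 4) ≤ 20 * √(l / 2) * (L ^ 4 * (l / 2) ^ 2) :=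
      A3.trans (by gcongr)
    set X := L ^ 4 * l ^ 2 * √(l / 2) with hX
    have hXle : 4 * 1.413 * X ≤ 4 * (L ^ 4 * l ^ 2 * √l) := by
      rw [hX, hq]
      have : 1.413 * (√l / √2) ≤ √l := by
        rw [← mul_div_assoc, div_le_iff₀ (by linarith), mul_comm]
        gcongr
      have h0 : 0 ≤ L ^ 4 * l ^ 2 := by positivity
      nlinarith
    have hX0 : 0 ≤ X := by positivity
    have E1 : 5000 * L ^ 4 * (l / 2) ^ 2 * √(l / 2) = 1250 * X := by rw [hX]; ring
    have E2 : 20 * √(l / 2) * (L ^ 4 * (l / 2) ^ 2) = 5 * X := by rw [hX]; ring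
    rw [E1] at A1 A2
    rw [E2] at A3'
    have E3 : 5000 * L ^ 4 * l ^ 2 * √l = 1250 * (4 * (L ^ 4 * l ^ 2 * √l)) := by ring
    rw [E3]
    nlinarith

theorem embed {S : Finset ℤ} (z : ℝ → ES S) (hz : Continuous z) (a l L : ℝ) (hl : 0 < l)
    (hl1 : l ≤ 1) (hL : 0 ≤ L) (hH : Hol z a (a + l) L) :
    dbl a (a + l) (fun t x => ‖UU (z t) t x‖ ^ 4) ≤ 40000 * √l * (‖z a‖ + √l * L) ^ 4 := by
  obtain ⟨l0, hl0, hl0S⟩ : ∃ l0 : ℝ, 0 < l0 ∧ (S.card : ℝ) ^ 4 * √l0 ≤ 5000 := by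
    refine ⟨(1 / ((S.card : ℝ) ^ 4 + 1)) ^ 2, by positivity, ?_⟩
    rw [Real.sqrt_sq (by positivity), mul_one_div, div_le_iff₀ (by positivity)]
    nlinarith [pow_nonneg (Nat.cast_nonneg (α := ℝ) S.card) 4]
  obtain ⟨n, hn⟩ := pow_unbounded_of_one_lt (l / l0) (one_lt_two)
  have hln : l ≤ l0 * 2 ^ n := by
    rw [div_lt_iff₀ hl0] at hn; linarith
  have hz' : Continuous fun t => z t - z a := hz.sub continuous_const
  have A2 := embed0 l0 hl0 hl0S n (fun t => z t - z a) hz' a l L hl hl1 hln hL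
    (fun s t h1 h2 h3 => by simpa using hH s t h1 h2 h3) (by simp)
  have A3 := strichartz (z a) a l hl hl1
  have B : dbl a (a + l) (fun t x => ‖UU (z t) t x‖ ^ 4)
        ≤ 8 * dbl a (a + l) (fun t x => ‖UU (z t - z a) t x‖ ^ 4)
          + 8 * dbl a (a + l) (fun t x => ‖UU (z a) t x‖ ^ 4) := by
    have c1 := contUU4 hz'
    have c2 := contUU4 (z := fun _ => z a) continuous_const
    rw [← dbl_smul, ← dbl_smul, ← dbl_add (by exact continuous_const.mul c1) (by exact continuous_const.mul c2)]
    apply dbl_mono (by linarith) (contUU4 hz)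
    · exact (continuous_const.mul c1).add (continuous_const.mul c2)
    · intro t _ x
      refine le_trans ?_ (pow4_split8 _ _ (norm_nonneg _) (norm_nonneg _))
      gcongr
      have : UU (z t) t x = UU (z t - z a) t x + UU (z a) t x := by
        rw [← UU_add]; simp
      rw [this]
      exact norm_add_le _ _
  have hs : l ^ 2 = √l ^ 4 := by
    rw [show √l ^ 4 = (√l ^ 2) ^ 2 by ring, Real.sq_sqrt hl.le]
  have h0 : 0 ≤ ‖z a‖ := norm_nonneg _
  have h1 : 0 ≤ √l * L := by positivity
  have h2 : ‖z a‖ ^ 4 + (√l * L) ^ 4 ≤ (‖z a‖ + √l * L) ^ 4 := by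
    have : (‖z a‖ + √l * L) ^ 4 = ‖z a‖ ^ 4 + (√l * L) ^ 4 + (4 * ‖z a‖ ^ 3 * (√l * L)
      + 6 * ‖z a‖ ^ 2 * (√l * L) ^ 2 + 4 * ‖z a‖ * (√l * L) ^ 3) := by ring
    rw [this]
    have : 0 ≤ 4 * ‖z a‖ ^ 3 * (√l * L)
      + 6 * ‖z a‖ ^ 2 * (√l * L) ^ 2 + 4 * ‖z a‖ * (√l * L) ^ 3 := by positivity
    linarith
  have h3 : 0 ≤ √l := Real.sqrt_nonneg _
  calc _ ≤ 8 * (5000 * L ^ 4 * l ^ 2 * √l) + 8 * (20 * √l * ‖z a‖ ^ 4) := by linarith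
    _ = √l * (40000 * (√l * L) ^ 4 + 160 * ‖z a‖ ^ 4) := by rw [hs]; ring
    _ ≤ √l * (40000 * (‖z a‖ + √l * L) ^ 4) := by
        gcongr
        nlinarith [pow_nonneg h0 4]
    _ = _ := by ring

theorem young0 (a b c d : ℝ) : a * b * c * d ≤ (a ^ 4 + b ^ 4 + c ^ 4 + d ^ 4) / 4 := by
  nlinarith [sq_nonneg (a * b - c * d), sq_nonneg (a ^ 2 - b ^ 2), sq_nonneg (c ^ 2 - d ^ 2)]

theorem young1 {a b Y : ℝ} (hab : a ≤ b) {f1 f2 f3 f4 : ℝ → Torus → ℝ}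
    (c1 : Continuous (Function.uncurry f1)) (c2 : Continuous (Function.uncurry f2))
    (c3 : Continuous (Function.uncurry f3)) (c4 : Continuous (Function.uncurry f4))
    {m1 m2 m3 m4 : ℝ} (h1 : 0 < m1) (h2 : 0 < m2) (h3 : 0 < m3) (h4 : 0 < m4)
    (b1 : dbl a b (fun t x => f1 t x ^ 4) ≤ Y * m1 ^ 4)
    (b2 : dbl a b (fun t x => f2 t x ^ 4) ≤ Y * m2 ^ 4)
    (b3 : dbl a b (fun t x => f3 t x ^ 4) ≤ Y * m3 ^ 4)
    (b4 : dbl a b (fun t x => f4 t x ^ 4) ≤ Y * m4 ^ 4) :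
    dbl a b (fun t x => f1 t x * f2 t x * f3 t x * f4 t x) ≤ Y * (m1 * m2 * m3 * m4) := by
  set P := m1 * m2 * m3 * m4 with hP
  have hP0 : 0 < P := by positivity
  have key : dbl a b (fun t x => f1 t x * f2 t x * f3 t x * f4 t x) ≤
      dbl a b (fun t x => P / 4 / m1 ^ 4 * f1 t x ^ 4 + P / 4 / m2 ^ 4 * f2 t x ^ 4
        + P / 4 / m3 ^ 4 * f3 t x ^ 4 + P / 4 / m4 ^ 4 * f4 t x ^ 4) := by
    apply dbl_mono hab
    · exact ((c1.mul c2).mul c3).mul c4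
    · exact (((continuous_const.mul (c1.pow 4)).add (continuous_const.mul (c2.pow 4))).add
        (continuous_const.mul (c3.pow 4))).add (continuous_const.mul (c4.pow 4))
    · intro t _ x
      have := young0 (f1 t x / m1) (f2 t x / m2) (f3 t x / m3) (f4 t x / m4)
      have h := mul_le_mul_of_nonneg_left this hP0.le
      refine le_trans (le_of_eq ?_) (h.trans (le_of_eq ?_))
      · rw [hP]; field_simp
      · field_simp
  rw [dbl_add, dbl_add, dbl_add, dbl_smul, dbl_smul, dbl_smul, dbl_smul] at key
  · have e : ∀ m : ℝ, 0 < m → ∀ X, X ≤ Y * m ^ 4 → P / 4 / m ^ 4 * X ≤ P / 4 * Y := by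
      intro m hm X hX
      calc P / 4 / m ^ 4 * X ≤ P / 4 / m ^ 4 * (Y * m ^ 4) := by gcongr
        _ = P / 4 * Y := by field_simp
    have := e m1 h1 _ b1
    have := e m2 h2 _ b2
    have := e m3 h3 _ b3
    have := e m4 h4 _ b4
    linarith
  · exact (continuous_const.mul (c1.pow 4))
  · exact (continuous_const.mul (c2.pow 4))
  · exact (continuous_const.mul (c1.pow 4)).add (continuous_const.mul (c2.pow 4))
  · exact (continuous_const.mul (c3.pow 4))
  · exact ((continuous_const.mul (c1.pow 4)).add (continuous_const.mul (c2.pow 4))).add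
        (continuous_const.mul (c3.pow 4))
  · exact (continuous_const.mul (c4.pow 4))

theorem young {a b Y : ℝ} (hab : a ≤ b) (hY : 0 ≤ Y) {f1 f2 f3 f4 : ℝ → Torus → ℝ}
    (c1 : Continuous (Function.uncurry f1)) (c2 : Continuous (Function.uncurry f2))
    (c3 : Continuous (Function.uncurry f3)) (c4 : Continuous (Function.uncurry f4))
    {m1 m2 m3 m4 : ℝ} (h1 : 0 ≤ m1) (h2 : 0 ≤ m2) (h3 : 0 ≤ m3) (h4 : 0 ≤ m4)
    (b1 : dbl a b (fun t x => f1 t x ^ 4) ≤ Y * m1 ^ 4)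
    (b2 : dbl a b (fun t x => f2 t x ^ 4) ≤ Y * m2 ^ 4)
    (b3 : dbl a b (fun t x => f3 t x ^ 4) ≤ Y * m3 ^ 4)
    (b4 : dbl a b (fun t x => f4 t x ^ 4) ≤ Y * m4 ^ 4) :
    dbl a b (fun t x => f1 t x * f2 t x * f3 t x * f4 t x) ≤ Y * (m1 * m2 * m3 * m4) := by
  have hlim : Tendsto (fun e : ℝ => Y * ((m1 + e) * (m2 + e) * (m3 + e) * (m4 + e)))
      (𝓝[>] 0) (𝓝 (Y * (m1 * m2 * m3 * m4))) := by
    have : Continuous (fun e : ℝ => Y * ((m1 + e) * (m2 + e) * (m3 + e) * (m4 + e))) := by fun_prop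
    have h := this.tendsto 0
    simp only [add_zero] at h
    exact h.mono_left nhdsWithin_le_nhds
  refine ge_of_tendsto hlim ?_
  filter_upwards [self_mem_nhdsWithin] with e he
  have he : (0 : ℝ) < e := he
  refine young1 hab c1 c2 c3 c4 (by linarith) (by linarith) (by linarith) (by linarith)
    (b1.trans ?_) (b2.trans ?_) (b3.trans ?_) (b4.trans ?_) <;> gcongr <;> linarith



def cub (c : ℂ) : ℂ := (‖c‖ : ℂ) ^ 2 * c

structure IsSol {S : Finset ℤ} (μ : ℝ) (w : ℝ → ES S) : Prop where
  cont : Continuous w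
  der : ∀ (k : S) (t : ℝ), HasDerivAt (fun t => w t k)
    (Complex.I * μ * (Complex.exp (Complex.I * t * ((k : ℤ) : ℂ) ^ 2) *
      ∫ x, cub (UU (w t) t x) * (starRingEnd ℂ) (fourier (k : ℤ) x) ∂hm)) t

theorem cub_cont : Continuous cub := by
  unfold cub
  fun_prop

theorem norm_cub (c : ℂ) : ‖cub c‖ = ‖c‖ ^ 3 := by
  simp [cub]; ring

theorem cub_diff (a b : ℂ) :
    ‖cub a - cub b‖ ≤ ‖a‖ * ‖a‖ * ‖a - b‖ + ‖a‖ * ‖b‖ * ‖a - b‖ + ‖b‖ * ‖b‖ * ‖a - b‖ := by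
  have e : cub a - cub b = (‖a‖ : ℂ) ^ 2 * (a - b) + ((‖a‖ ^ 2 - ‖b‖ ^ 2 : ℝ) : ℂ) * b := by
    simp only [cub]; push_cast; ring
  rw [e]
  refine (norm_add_le _ _).trans ?_
  rw [norm_mul, norm_mul, norm_pow, Complex.norm_real, Complex.norm_real, norm_norm]
  have h1 : ‖(‖a‖ ^ 2 - ‖b‖ ^ 2 : ℝ)‖ ≤ (‖a‖ + ‖b‖) * ‖a - b‖ := by
    rw [Real.norm_eq_abs, sq_sub_sq, abs_mul, abs_of_nonneg (by positivity)]
    gcongr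
    exact abs_norm_sub_norm_le a b
  nlinarith [norm_nonneg b, norm_nonneg a, norm_nonneg (a - b)]

theorem zero_sol {S : Finset ℤ} (μ : ℝ) : IsSol μ (fun _ => (0 : ES S)) where
  cont := continuous_const
  der := by
    intro k t
    have : ∀ x, UU (0 : ES S) t x = 0 := by intro x; simp [UU]
    simp only [this, cub]
    simpa using hasDerivAt_const t (0 : ℂ)

theorem conj_UU {S : Finset ℤ} (g : ES S) (t : ℝ) (x : Torus) :
    (starRingEnd ℂ) (UU g t x) = ∑ k : S, (starRingEnd ℂ) (g k) *
      (Complex.exp (Complex.I * t * ((k : ℤ) : ℂ) ^ 2) * (starRingEnd ℂ) (fourier (k : ℤ) x)) := by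
  unfold UU
  rw [map_sum]
  refine Finset.sum_congr rfl fun k _ => ?_
  rw [map_mul, map_mul, ← Complex.exp_conj]
  simp [Complex.conj_ofReal]

theorem pair_pt {S : Finset ℤ} (f : Torus → ℂ) (hf : Continuous f) (g : ES S) (t : ℝ) :
    ∑ k : S, (Complex.exp (Complex.I * t * ((k : ℤ) : ℂ) ^ 2) *
      ∫ x, f x * (starRingEnd ℂ) (fourier (k : ℤ) x) ∂hm) * (starRingEnd ℂ) (g k)
    = ∫ x, f x * (starRingEnd ℂ) (UU g t x) ∂hm := by
  simp_rw [conj_UU, Finset.mul_sum]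
  rw [integral_finsetSum]
  · refine Finset.sum_congr rfl fun k _ => ?_
    have : ∀ x, f x * ((starRingEnd ℂ) (g k) * (Complex.exp (Complex.I * t * ((k : ℤ) : ℂ) ^ 2) *
        (starRingEnd ℂ) (fourier (k : ℤ) x))) = ((starRingEnd ℂ) (g k) *
        Complex.exp (Complex.I * t * ((k : ℤ) : ℂ) ^ 2)) * (f x *
        (starRingEnd ℂ) (fourier (k : ℤ) x)) := fun x => by ring
    simp_rw [this]
    rw [integral_const_mul]
    ring
  · intro k _
    apply integrable_cont
    have := (fourier (T := 2 * Real.pi) (k : ℤ)).continuous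
    have h2 : Continuous fun x : Torus => (starRingEnd ℂ) (fourier (k : ℤ) x) :=
      Complex.continuous_conj.comp this
    fun_prop

theorem cubU_cont {S : Finset ℤ} {w : ℝ → ES S} (hw : Continuous w) :
    Continuous (Function.uncurry fun t x => cub (UU (w t) t x)) :=
  cub_cont.comp (UU_cont hw)

theorem conjU_cont {S : Finset ℤ} (g : ES S) :
    Continuous (Function.uncurry fun t x => (starRingEnd ℂ) (UU g t x)) :=
  Complex.continuous_conj.comp (UU_cont (z := fun _ => g) continuous_const)

theorem weak {S : Finset ℤ} {μ : ℝ} {w : ℝ → ES S} (h : IsSol μ w) (g : ES S) (s t : ℝ) :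
    ∑ k : S, (w t k - w s k) * (starRingEnd ℂ) (g k) =
      ∫ r in s..t, Complex.I * μ * ∫ x, cub (UU (w r) r x) * (starRingEnd ℂ) (UU g r x) ∂hm := by
  have hd : ∀ r, HasDerivAt (fun t => ∑ k : S, w t k * (starRingEnd ℂ) (g k))
      (Complex.I * μ * ∫ x, cub (UU (w r) r x) * (starRingEnd ℂ) (UU g r x) ∂hm) r := by
    intro r
    have h1 := HasDerivAt.fun_sum (u := Finset.univ) (fun k _ =>
      (h.der k r).mul_const ((starRingEnd ℂ) (g k)))
    refine h1.congr_deriv ?_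
    rw [← pair_pt _ (cont_slice (cubU_cont h.cont) r) g r, Finset.mul_sum]
    refine Finset.sum_congr rfl fun k _ => ?_
    ring
  have hc : Continuous fun r => Complex.I * μ *
      ∫ x, cub (UU (w r) r x) * (starRingEnd ℂ) (UU g r x) ∂hm :=
    continuous_const.mul (cont_inner (f := fun r x => cub (UU (w r) r x) * (starRingEnd ℂ) (UU g r x))
      ((cubU_cont h.cont).mul (conjU_cont g)))
  rw [intervalIntegral.integral_eq_sub_of_hasDerivAt (fun r _ => hd r) (hc.intervalIntegrable _ _),
    ← Finset.sum_sub_distrib]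
  refine Finset.sum_congr rfl fun k _ => ?_
  ring

theorem norm_sq_sum {S : Finset ℤ} (d : ES S) :
    ((‖d‖ ^ 2 : ℝ) : ℂ) = ∑ k : S, d k * (starRingEnd ℂ) (d k) := by
  rw [EuclideanSpace.norm_sq_eq]
  push_cast
  refine Finset.sum_congr rfl fun k _ => ?_
  rw [Complex.mul_conj, Complex.normSq_eq_norm_sq]
  push_cast; rfl

theorem diff_bound {S : Finset ℤ} {μ : ℝ} (hμ : |μ| ≤ 1) {w1 w2 : ℝ → ES S} (h1 : IsSol μ w1)
    (h2 : IsSol μ w2) {s t : ℝ} (hst : s ≤ t) (g : ES S) :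
    ‖∑ k : S, ((w1 t - w2 t) - (w1 s - w2 s)) k * (starRingEnd ℂ) (g k)‖
      ≤ dbl s t (fun r x => ‖cub (UU (w1 r) r x) - cub (UU (w2 r) r x)‖ * ‖UU g r x‖) := by
  have cU := conjU_cont g
  have c1 : Continuous (Function.uncurry fun r x => cub (UU (w1 r) r x) * (starRingEnd ℂ) (UU g r x)) :=
    (cubU_cont h1.cont).mul cU
  have c2 : Continuous (Function.uncurry fun r x => cub (UU (w2 r) r x) * (starRingEnd ℂ) (UU g r x)) :=
    (cubU_cont h2.cont).mul cU
  have e : ∑ k : S, ((w1 t - w2 t) - (w1 s - w2 s)) k * (starRingEnd ℂ) (g k)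
      = ∫ r in s..t, Complex.I * μ * ∫ x, (cub (UU (w1 r) r x) - cub (UU (w2 r) r x)) *
        (starRingEnd ℂ) (UU g r x) ∂hm := by
    have : ∑ k : S, ((w1 t - w2 t) - (w1 s - w2 s)) k * (starRingEnd ℂ) (g k)
      = ∑ k : S, (w1 t k - w1 s k) * (starRingEnd ℂ) (g k)
        - ∑ k : S, (w2 t k - w2 s k) * (starRingEnd ℂ) (g k) := by
      rw [← Finset.sum_sub_distrib]
      refine Finset.sum_congr rfl fun k _ => ?_
      simp only [PiLp.sub_apply]
      ring
    rw [this, weak h1, weak h2, ← intervalIntegral.integral_sub]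
    · congr 1
      ext r
      rw [← mul_sub, ← integral_sub (integrable_cont (cont_slice c1 r))
        (integrable_cont (cont_slice c2 r))]
      simp_rw [sub_mul]
    · exact (continuous_const.mul (cont_inner c1)).intervalIntegrable _ _
    · exact (continuous_const.mul (cont_inner c2)).intervalIntegrable _ _
  rw [e]
  unfold dbl
  have cc : Continuous (Function.uncurry fun r x =>
      ‖cub (UU (w1 r) r x) - cub (UU (w2 r) r x)‖ * ‖UU g r x‖) :=
    (((cubU_cont h1.cont).sub (cubU_cont h2.cont)).norm).mul
      (UU_cont (z := fun _ => g) continuous_const).norm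
  refine intervalIntegral.norm_integral_le_of_norm_le hst ?_ ((cont_inner cc).intervalIntegrable _ _)
  refine Filter.Eventually.of_forall fun r _ => ?_
  rw [norm_mul, norm_mul, Complex.norm_I, one_mul, Complex.norm_real, Real.norm_eq_abs]
  calc |μ| * _ ≤ 1 * _ := by gcongr
    _ ≤ _ := by
      rw [one_mul]
      refine (norm_integral_le_integral_norm _).trans (le_of_eq ?_)
      congr 1
      ext x
      rw [norm_mul, RCLike.norm_conj]

theorem diff_bound' {S : Finset ℤ} {μ : ℝ} (hμ : |μ| ≤ 1) {w1 w2 : ℝ → ES S} (h1 : IsSol μ w1)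
    (h2 : IsSol μ w2) {s t : ℝ} (hst : s ≤ t) :
    ‖(w1 t - w2 t) - (w1 s - w2 s)‖ ^ 2
      ≤ dbl s t (fun r x => ‖cub (UU (w1 r) r x) - cub (UU (w2 r) r x)‖ *
        ‖UU ((w1 t - w2 t) - (w1 s - w2 s)) r x‖) := by
  refine le_trans ?_ (diff_bound hμ h1 h2 hst _)
  rw [← norm_sq_sum, Complex.norm_real]
  exact Real.le_norm_self _

theorem le_of_sq_le_mul {d K : ℝ} (hK : 0 ≤ K) (hd : 0 ≤ d) (h : d ^ 2 ≤ K * d) : d ≤ K := by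
  rcases hd.eq_or_lt with h0 | h0
  · rw [← h0]; exact hK
  · nlinarith

theorem step_bound {S : Finset ℤ} {μ : ℝ} (hμ : |μ| ≤ 1) {w1 w2 : ℝ → ES S} (h1 : IsSol μ w1)
    (h2 : IsSol μ w2) {s t : ℝ} (hst : s ≤ t) (hst1 : t - s ≤ 1) {L1 L2 L m1 m2 : ℝ}
    (hL1 : 0 ≤ L1) (hL2 : 0 ≤ L2) (hL : 0 ≤ L)
    (H1 : Hol w1 s t L1) (H2 : Hol w2 s t L2) (H : Hol (fun t => w1 t - w2 t) s t L)
    (hm1 : ‖w1 s‖ + √(t - s) * L1 ≤ m1) (hm2 : ‖w2 s‖ + √(t - s) * L2 ≤ m2) :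
    ‖(w1 t - w2 t) - (w1 s - w2 s)‖ ≤
      40000 * (m1 * m1 + m1 * m2 + m2 * m2) * (‖w1 s - w2 s‖ + √(t - s) * L) * √(t - s) := by
  rcases hst.eq_or_lt with h0 | hlt
  · subst h0; simp
  set l := t - s with hl
  have hl0 : 0 < l := by rw [hl]; linarith
  have ht : t = s + l := by rw [hl]; ring
  set d := (w1 t - w2 t) - (w1 s - w2 s) with hd
  set mD := ‖w1 s - w2 s‖ + √l * L with hmD
  set Y := 40000 * √l with hY
  have hY0 : 0 ≤ Y := by positivity
  have hm10 : 0 ≤ m1 := le_trans (by positivity) hm1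
  have hm20 : 0 ≤ m2 := le_trans (by positivity) hm2
  have hmD0 : 0 ≤ mD := by positivity
  have hcD : Continuous fun t => w1 t - w2 t := h1.cont.sub h2.cont
  have E1 : dbl s t (fun r x => ‖UU (w1 r) r x‖ ^ 4) ≤ Y * m1 ^ 4 := by
    have := embed w1 h1.cont s l L1 hl0 hst1 hL1 (by rw [← ht]; exact H1)
    rw [← ht] at this
    refine this.trans ?_
    gcongr
  have E2 : dbl s t (fun r x => ‖UU (w2 r) r x‖ ^ 4) ≤ Y * m2 ^ 4 := by
    have := embed w2 h2.cont s l L2 hl0 hst1 hL2 (by rw [← ht]; exact H2)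
    rw [← ht] at this
    refine this.trans ?_
    gcongr
  have ED : dbl s t (fun r x => ‖UU (w1 r - w2 r) r x‖ ^ 4) ≤ Y * mD ^ 4 := by
    have := embed (fun t => w1 t - w2 t) hcD s l L hl0 hst1 hL (by rw [← ht]; exact H)
    rw [← ht] at this
    exact this
  have Ed : dbl s t (fun r x => ‖UU d r x‖ ^ 4) ≤ Y * ‖d‖ ^ 4 := by
    have := strichartz d s l hl0 hst1
    rw [← ht] at this
    refine this.trans ?_
    gcongr
    rw [hY]
    nlinarith [Real.sqrt_nonneg l]
  have c1 := (UU_cont h1.cont).norm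
  have c2 := (UU_cont h2.cont).norm
  have cD := (UU_cont hcD).norm
  have cd := (UU_cont (z := fun _ => d) continuous_const).norm
  have Y1 := young hst hY0 (f1 := fun r x => ‖UU (w1 r) r x‖) (f2 := fun r x => ‖UU (w1 r) r x‖)
    (f3 := fun r x => ‖UU (w1 r - w2 r) r x‖) (f4 := fun r x => ‖UU d r x‖)
    c1 c1 cD cd hm10 hm10 hmD0 (norm_nonneg d) E1 E1 ED Ed
  have Y2 := young hst hY0 (f1 := fun r x => ‖UU (w1 r) r x‖) (f2 := fun r x => ‖UU (w2 r) r x‖)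
    (f3 := fun r x => ‖UU (w1 r - w2 r) r x‖) (f4 := fun r x => ‖UU d r x‖)
    c1 c2 cD cd hm10 hm20 hmD0 (norm_nonneg d) E1 E2 ED Ed
  have Y3 := young hst hY0 (f1 := fun r x => ‖UU (w2 r) r x‖) (f2 := fun r x => ‖UU (w2 r) r x‖)
    (f3 := fun r x => ‖UU (w1 r - w2 r) r x‖) (f4 := fun r x => ‖UU d r x‖)
    c2 c2 cD cd hm20 hm20 hmD0 (norm_nonneg d) E2 E2 ED Ed
  have hmain := diff_bound' hμ h1 h2 hst
  have hle : dbl s t (fun r x => ‖cub (UU (w1 r) r x) - cub (UU (w2 r) r x)‖ * ‖UU d r x‖)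
      ≤ dbl s t (fun r x => (‖UU (w1 r) r x‖ * ‖UU (w1 r) r x‖ * ‖UU (w1 r - w2 r) r x‖ * ‖UU d r x‖
        + ‖UU (w1 r) r x‖ * ‖UU (w2 r) r x‖ * ‖UU (w1 r - w2 r) r x‖ * ‖UU d r x‖)
        + ‖UU (w2 r) r x‖ * ‖UU (w2 r) r x‖ * ‖UU (w1 r - w2 r) r x‖ * ‖UU d r x‖) := by
    apply dbl_mono hst
    · exact (((cubU_cont h1.cont).sub (cubU_cont h2.cont)).norm).mul cd
    · exact ((((c1.mul c1).mul cD).mul cd).add (((c1.mul c2).mul cD).mul cd)).add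
        (((c2.mul c2).mul cD).mul cd)
    · intro r _ x
      have := mul_le_mul_of_nonneg_right (cub_diff (UU (w1 r) r x) (UU (w2 r) r x))
        (norm_nonneg (UU d r x))
      rw [UU_sub (w1 r) (w2 r)]
      linarith
  rw [dbl_add, dbl_add] at hle
  · apply le_of_sq_le_mul (by positivity) (norm_nonneg _)
    calc ‖d‖ ^ 2 ≤ _ := hmain.trans hle
      _ ≤ Y * (m1 * m1 * mD * ‖d‖) + Y * (m1 * m2 * mD * ‖d‖) + Y * (m2 * m2 * mD * ‖d‖) := by
        linarith
      _ = _ := by rw [hY]; ring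
  · exact ((c1.mul c1).mul cD).mul cd
  · exact ((c1.mul c2).mul cD).mul cd
  · exact (((c1.mul c1).mul cD).mul cd).add (((c1.mul c2).mul cD).mul cd)
  · exact ((c2.mul c2).mul cD).mul cd

theorem lip_sol {S : Finset ℤ} {μ : ℝ} (hμ : |μ| ≤ 1) {w : ℝ → ES S} (h : IsSol μ w) {M : ℝ}
    (hM : ∀ t, ‖w t‖ ≤ M) {s t : ℝ} (hst : s ≤ t) :
    ‖w t - w s‖ ≤ (S.card * M) ^ 3 * S.card * (t - s) := by
  have hM0 : 0 ≤ M := (norm_nonneg _).trans (hM 0)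
  have h1 := diff_bound' hμ h (zero_sol μ) hst
  simp only [sub_zero] at h1
  have cd := (UU_cont (z := fun _ => w t - w s) continuous_const).norm
  have h2 : dbl s t (fun r x => ‖cub (UU (w r) r x) - cub (UU (0 : ES S) r x)‖ * ‖UU (w t - w s) r x‖)
      ≤ dbl s t (fun _ _ => (S.card * M) ^ 3 * (S.card * ‖w t - w s‖)) := by
    apply dbl_mono hst
    · exact (((cubU_cont h.cont).sub (cubU_cont (zero_sol (S := S) μ).cont)).norm).mul cd
    · exact continuous_const
    · intro r _ x
      have : cub (UU (0 : ES S) r x) = 0 := by simp [UU, cub]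
      rw [this, sub_zero, norm_cub]
      gcongr
      · refine (UU_crude _ _ _).trans ?_
        gcongr
        exact hM r
      · exact UU_crude _ _ _
  rw [dbl_const] at h2
  have h0 : 0 ≤ t - s := by linarith
  apply le_of_sq_le_mul (by positivity) (norm_nonneg _)
  calc _ ≤ _ := h1.trans h2
    _ = _ := by ring

theorem mass {S : Finset ℤ} {μ : ℝ} {w : ℝ → ES S} (h : IsSol μ w) (t : ℝ) : ‖w t‖ = ‖w 0‖ := by
  have hd : ∀ r, HasDerivAt (fun t => ‖w t‖ ^ 2) 0 r := by
    intro r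
    have e : (fun t => ‖w t‖ ^ 2) = fun t => ∑ k : S, ‖w t k‖ ^ 2 := by
      ext t; exact EuclideanSpace.norm_sq_eq _
    rw [e]
    have h1 := HasDerivAt.fun_sum (u := Finset.univ) (fun k _ => (h.der k r).norm_sq)
    refine h1.congr_deriv ?_
    have h2 : ∀ k : S, 2 * inner ℝ (w r k) (Complex.I * μ * (Complex.exp (Complex.I * r * ((k : ℤ) : ℂ) ^ 2) *
      ∫ x, cub (UU (w r) r x) * (starRingEnd ℂ) (fourier (k : ℤ) x) ∂hm))
      = 2 * (Complex.I * μ * ((Complex.exp (Complex.I * r * ((k : ℤ) : ℂ) ^ 2) *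
      ∫ x, cub (UU (w r) r x) * (starRingEnd ℂ) (fourier (k : ℤ) x) ∂hm) * (starRingEnd ℂ) (w r k))).re := by
      intro k
      rw [Complex.inner]
      ring_nf
    simp_rw [h2]
    rw [← Finset.mul_sum, ← Complex.re_sum, ← Finset.mul_sum,
      pair_pt _ (cont_slice (cubU_cont h.cont) r) (w r) r]
    have h3 : ∀ x, cub (UU (w r) r x) * (starRingEnd ℂ) (UU (w r) r x) = ((‖UU (w r) r x‖ ^ 4 : ℝ) : ℂ) := by
      intro x
      rw [cub, mul_assoc, Complex.mul_conj, Complex.normSq_eq_norm_sq]; push_cast; ring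
    simp_rw [h3]
    have h4 : ∫ x, ((‖UU (w r) r x‖ ^ 4 : ℝ) : ℂ) ∂hm = ((∫ x, ‖UU (w r) r x‖ ^ 4 ∂hm : ℝ) : ℂ) :=
      integral_ofReal
    rw [h4]
    simp
  have := is_const_of_deriv_eq_zero (fun r => (hd r).differentiableAt) (fun r => (hd r).deriv) t 0
  exact (sq_eq_sq₀ (norm_nonneg _) (norm_nonneg _)).mp this



theorem hol_self {S : Finset ℤ} {μ : ℝ} (hμ : |μ| ≤ 1) {w : ℝ → ES S} (h : IsSol μ w) {M T : ℝ}
    (hM1 : 1 ≤ M) (hM : ∀ t, ‖w t‖ ≤ M) (hT0 : 0 < T) (hT1 : T ≤ 1)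
    (hT : √T * (640000 * M ^ 2) ≤ 1) {s t : ℝ} (hst : s ≤ t) (hts : t - s ≤ T) :
    ‖w t - w s‖ ≤ 640000 * M ^ 3 * √(t - s) := by
  set A := 640000 * M ^ 3 with hA
  have hA0 : 0 < A := by positivity
  set Lp := ((S.card : ℝ) * M) ^ 3 * S.card with hLp
  have hLp0 : 0 ≤ Lp := by positivity
  set l0 := (A / (Lp + 1)) ^ 2 with hl0
  have hl0p : 0 < l0 := by positivity
  have key : ∀ n : ℕ, ∀ s t : ℝ, s ≤ t → t - s ≤ T → t - s ≤ l0 * 2 ^ n →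
      ‖w t - w s‖ ≤ A * √(t - s) := by
    intro n
    induction n with
    | zero =>
      intro s t hst _ hl
      rw [pow_zero, mul_one] at hl
      have h1 := lip_sol hμ h hM hst
      have h2 : √(t - s) ≤ A / (Lp + 1) := by
        calc √(t - s) ≤ √l0 := Real.sqrt_le_sqrt hl
          _ = _ := Real.sqrt_sq (by positivity)
      have h3 : Lp * √(t - s) ≤ A := by
        rw [le_div_iff₀ (by positivity)] at h2
        nlinarith [Real.sqrt_nonneg (t - s)]
      calc ‖w t - w s‖ ≤ Lp * (t - s) := h1
        _ = Lp * √(t - s) * √(t - s) := by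
          rw [mul_assoc Lp, Real.mul_self_sqrt (by linarith)]
        _ ≤ _ := by gcongr
    | succ n ih =>
      intro s t hst hT' hl
      set m := (s + t) / 2 with hm
      have hp : (2:ℝ) ^ (n+1) = 2 * 2 ^ n := by ring
      rw [hp] at hl
      have half : ∀ a b : ℝ, a ≤ b → b - a = (t - s) / 2 → ‖w b - w a‖ ≤ A / 2 * √(t - s) := by
        intro a b hab hba
        have hH : Hol w a b A := by
          intro r r' h1 h2 h3
          apply ih r r' h2 <;> linarith
        have hq : √(b - a) ≤ √T := Real.sqrt_le_sqrt (by linarith)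
        have hmm : ‖w a‖ + √(b - a) * A ≤ 2 * M := by
          have : √(b - a) * A ≤ M := by
            calc √(b - a) * A ≤ √T * A := by gcongr
              _ = √T * (640000 * M ^ 2) * M := by rw [hA]; ring
              _ ≤ 1 * M := by gcongr
              _ = M := one_mul _
          linarith [hM a]
        have := step_bound hμ h (zero_sol μ) hab (by linarith) hA0.le le_rfl hA0.le hH
          (L2 := 0) (fun r r' _ _ _ => by simp) (by simpa using hH) hmm (m2 := 0) (by simp)
        simp only [sub_zero] at this
        refine this.trans ?_
        calc _ ≤ 40000 * (2 * M * (2 * M) + 2 * M * 0 + 0 * 0) * (2 * M) * √(b - a) := by gcongr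
          _ = A / 2 * √(b - a) := by rw [hA]; ring
          _ ≤ _ := by
            have : √(b - a) ≤ √(t - s) := Real.sqrt_le_sqrt (by linarith)
            gcongr
      have e : w t - w s = (w t - w m) + (w m - w s) := by abel
      rw [e]
      refine (norm_add_le _ _).trans ?_
      have h1 := half m t (by linarith) (by linarith)
      have h2 := half s m (by linarith) (by linarith)
      linarith
  obtain ⟨n, hn⟩ := pow_unbounded_of_one_lt (T / l0) (one_lt_two)
  rw [div_lt_iff₀ hl0p] at hn
  exact key n s t hst hts (by linarith)

theorem sqrt_sub_le {s t T : ℝ} (h : t - s ≤ T) : √(t - s) ≤ √T := Real.sqrt_le_sqrt h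

/-- abstract continuation lemma -/
theorem lemZ (κ T R : ℝ) (hκ : 0 ≤ κ) (hT0 : 0 < T) (hκT : 6 * κ * √T ≤ 1) (hR : 0 ≤ R) :
    ∃ K : ℝ, 0 ≤ K ∧ ∀ (S : Finset ℤ) (D : ℝ → ES S) (L0 : ℝ), 0 ≤ L0 →
      (∀ s t, -R ≤ s → s ≤ t → t ≤ R → ‖D t - D s‖ ≤ L0 * (t - s)) →
      (∀ a b Λ, -R ≤ a → a ≤ b → b ≤ R → b - a ≤ T → 0 ≤ Λ → Hol D a b Λ →
        Hol D a b (κ * (‖D a‖ + 2 * √T * Λ))) →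
      (∀ t, |t| ≤ R → ‖D t‖ ≤ K * ‖D 0‖) ∧ Hol D (-R) R (K * ‖D 0‖) := by
  set n := ⌈R / T⌉₊ with hn
  have hnR : R ≤ n * T := by
    have := Nat.le_ceil (R / T)
    rwa [div_le_iff₀ hT0] at this
  set sT := √T with hsT
  have hsT0 : 0 < sT := Real.sqrt_pos.mpr hT0
  refine ⟨2 ^ n * (1 + 2 * κ + 2 / sT), by positivity, ?_⟩
  intro S D L0 hL0 hLip hstep
  have H1 : ∀ a b r, -R ≤ a → b ≤ R → b - a ≤ T → a ≤ r → r ≤ b → Hol D a b (2 * κ * ‖D r‖) := by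
    intro a b r ha hb hab har hrb
    have hit : ∀ n : ℕ, Hol D a b (2 * κ * ‖D r‖ + L0 * sT / 2 ^ n) := by
      intro n
      induction n with
      | zero =>
        intro s t h1 h2 h3
        have := hLip s t (by linarith) h2 (by linarith)
        refine this.trans ?_
        have e : t - s = √(t - s) * √(t - s) := (Real.mul_self_sqrt (by linarith)).symm
        have hq : √(t - s) ≤ sT := sqrt_sub_le (by linarith)
        calc L0 * (t - s) = L0 * √(t - s) * √(t - s) := by rw [mul_assoc, ← e]
          _ ≤ L0 * sT * √(t - s) := by gcongr
          _ ≤ _ := by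
            gcongr
            have : 0 ≤ 2 * κ * ‖D r‖ := by positivity
            simp; linarith
      | succ n ih =>
        set Λ := 2 * κ * ‖D r‖ + L0 * sT / 2 ^ n with hΛ
        have hΛ0 : 0 ≤ Λ := by positivity
        have h1 := hstep a b Λ ha (by linarith) hb hab hΛ0 ih
        intro s t q1 q2 q3
        refine (h1 s t q1 q2 q3).trans ?_
        gcongr
        have hDa : ‖D a‖ ≤ ‖D r‖ + sT * Λ := by
          have h3 := ih a r le_rfl har hrb
          have h4 : √(r - a) ≤ sT := sqrt_sub_le (by linarith)
          have h5 : ‖D a‖ ≤ ‖D r‖ + ‖D r - D a‖ := by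
            have := norm_sub_norm_le (D a) (D r)
            rw [norm_sub_rev] at this; linarith
          have h6 : Λ * √(r - a) ≤ Λ * sT := by gcongr
          linarith
        have h7 : κ * (‖D a‖ + 2 * sT * Λ) ≤ κ * (‖D r‖ + 3 * sT * Λ) := by
          gcongr κ * ?_; linarith
        have h8 : 3 * κ * sT * Λ ≤ 1 / 2 * Λ := by gcongr ?_ * _; linarith
        have h9 : 1 / 2 * Λ = κ * ‖D r‖ + L0 * sT / 2 ^ (n+1) := by
          rw [hΛ, pow_succ]; field_simp
        nlinarith
    intro s t q1 q2 q3
    have hlim : Tendsto (fun n : ℕ => (2 * κ * ‖D r‖ + L0 * sT / 2 ^ n) * √(t - s)) atTop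
        (𝓝 ((2 * κ * ‖D r‖ + 0) * √(t - s))) := by
      refine Tendsto.mul_const _ (Tendsto.const_add _ ?_)
      have : Tendsto (fun n : ℕ => L0 * sT * (1 / 2 : ℝ) ^ n) atTop (𝓝 (L0 * sT * 0)) :=
        (tendsto_pow_atTop_nhds_zero_of_lt_one (by norm_num) (by norm_num)).const_mul _
      rw [mul_zero] at this
      refine this.congr fun n => ?_
      rw [one_div, inv_pow]; rfl
    rw [add_zero] at hlim
    exact ge_of_tendsto' hlim fun n => hit n s t q1 q2 q3
  have H2 : ∀ r t, |r| ≤ R → |t| ≤ R → |t - r| ≤ T → ‖D t‖ ≤ 2 * ‖D r‖ := by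
    intro r t hr ht hrt
    have hb : ‖D t - D r‖ ≤ 2 * κ * ‖D r‖ * √|t - r| := by
      rw [abs_le] at hr ht
      rcases le_total r t with h | h
      · have hab : |t - r| = t - r := abs_of_nonneg (by linarith)
        rw [hab] at hrt ⊢
        exact H1 r t r hr.1 ht.2 hrt le_rfl h r t le_rfl h le_rfl
      · have hab : |t - r| = r - t := by rw [abs_sub_comm]; exact abs_of_nonneg (by linarith)
        rw [hab] at hrt ⊢
        rw [norm_sub_rev]
        exact H1 t r r ht.1 hr.2 hrt h le_rfl t r le_rfl h le_rfl
    have h2 : √|t - r| ≤ sT := Real.sqrt_le_sqrt hrt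
    have h3 : 2 * κ * ‖D r‖ * √|t - r| ≤ 2 * κ * ‖D r‖ * sT := by gcongr
    have h4 : ‖D t‖ ≤ ‖D r‖ + ‖D t - D r‖ := by
      have := norm_sub_norm_le (D t) (D r); linarith
    nlinarith [norm_nonneg (D r)]
  have H3 : ∀ n : ℕ, ∀ t, |t| ≤ R → |t| ≤ n * T → ‖D t‖ ≤ 2 ^ n * ‖D 0‖ := by
    intro n
    induction n with
    | zero =>
      intro t _ ht
      simp at ht
      simp [ht]
    | succ n ih =>
      intro t htR ht
      have hn1 : (0:ℝ) < n + 1 := by positivity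
      push_cast at ht
      set r := t * (n / (n + 1)) with hr
      have hra : |r| = |t| * (n / (n + 1)) := by
        rw [hr, abs_mul, abs_of_nonneg (a := (n / (n + 1) : ℝ)) (by positivity)]
      have hq : |t| / (n + 1) ≤ T := by rw [div_le_iff₀ hn1]; linarith
      have h1 : |r| ≤ n * T := by
        rw [hra]
        calc |t| * (n / (n + 1)) = n * (|t| / (n + 1)) := by ring
          _ ≤ _ := by gcongr
      have h2 : |r| ≤ R := by
        rw [hra]
        refine le_trans ?_ htR
        apply mul_le_of_le_one_right (abs_nonneg _)
        rw [div_le_one hn1]; linarith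
      have h3 : |t - r| ≤ T := by
        have : t - r = t / (n + 1) := by rw [hr]; field_simp; ring
        rw [this, abs_div, abs_of_pos hn1]; exact hq
      calc ‖D t‖ ≤ 2 * ‖D r‖ := H2 r t h2 htR h3
        _ ≤ 2 * (2 ^ n * ‖D 0‖) := by gcongr; exact ih r h2 h1
        _ = _ := by ring
  have H4 : ∀ t, |t| ≤ R → ‖D t‖ ≤ 2 ^ n * ‖D 0‖ := fun t ht => H3 n t ht (ht.trans hnR)
  have hk : 0 ≤ 2 ^ n * ‖D 0‖ := by positivity
  have hi : 0 < 2 / sT := by positivity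
  refine ⟨fun t ht => (H4 t ht).trans ?_, ?_⟩
  · nlinarith [mul_nonneg hk hκ, mul_nonneg hk hi.le]
  · intro s t hs hst ht
    have hsR : |s| ≤ R := abs_le.mpr ⟨hs, by linarith⟩
    have htR : |t| ≤ R := abs_le.mpr ⟨by linarith, ht⟩
    rcases le_total (t - s) T with h | h
    · refine (H1 s t s hs ht h le_rfl hst s t le_rfl hst le_rfl).trans ?_
      refine mul_le_mul_of_nonneg_right ?_ (Real.sqrt_nonneg _)
      have := mul_le_mul_of_nonneg_left (H4 s hsR) (by positivity : 0 ≤ 2 * κ)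
      nlinarith [mul_nonneg hk hκ, mul_nonneg hk hi.le]
    · have h1 : sT ≤ √(t - s) := Real.sqrt_le_sqrt h
      have h2 := norm_sub_le (D t) (D s)
      have h3 : 2 ≤ 2 / sT * √(t - s) := by
        rw [div_mul_eq_mul_div, le_div_iff₀ hsT0]; linarith
      have h4 := H4 s hsR
      have h5 := H4 t htR
      have h6 : 2 ^ n * ‖D 0‖ * 2 ≤ 2 ^ n * ‖D 0‖ * (2 / sT * √(t - s)) := by gcongr
      have h7 : 0 ≤ 2 ^ n * ‖D 0‖ * (1 + 2 * κ) * √(t - s) := by positivity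
      nlinarith

/-- differences of two solutions -/
theorem diff_sol (M R : ℝ) (hM1 : 1 ≤ M) (hR : 0 ≤ R) :
    ∃ K : ℝ, 0 ≤ K ∧ ∀ (S : Finset ℤ) (μ : ℝ), |μ| ≤ 1 → ∀ w1 w2 : ℝ → ES S, IsSol μ w1 → IsSol μ w2 →
      ‖w1 0‖ ≤ M → ‖w2 0‖ ≤ M →
      (∀ t, |t| ≤ R → ‖w1 t - w2 t‖ ≤ K * ‖w1 0 - w2 0‖) ∧
      Hol (fun t => w1 t - w2 t) (-R) R (K * ‖w1 0 - w2 0‖) := by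
  set T := (1 / (2880000 * M ^ 2)) ^ 2 with hT
  have hsT : √T = 1 / (2880000 * M ^ 2) := Real.sqrt_sq (by positivity)
  have hT0 : 0 < T := by positivity
  have hle : 1 / (2880000 * M ^ 2) ≤ 1 := by
    rw [div_le_one (by positivity)]; nlinarith
  have hT1 : T ≤ 1 := pow_le_one₀ (by positivity) hle
  have hTM : √T * (640000 * M ^ 2) ≤ 1 := by
    rw [hsT, one_div, inv_mul_le_iff₀ (by positivity)]; nlinarith
  obtain ⟨K, hK, H⟩ := lemZ (480000 * M ^ 2) T R (by positivity) hT0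
    (by rw [hsT]; apply le_of_eq; field_simp; norm_num) hR
  refine ⟨K, hK, ?_⟩
  intro S μ hμ w1 w2 h1 h2 hM1' hM2'
  have b1 : ∀ t, ‖w1 t‖ ≤ M := fun t => by rw [mass h1]; exact hM1'
  have b2 : ∀ t, ‖w2 t‖ ≤ M := fun t => by rw [mass h2]; exact hM2'
  refine H S (fun t => w1 t - w2 t) (2 * ((S.card * M) ^ 3 * S.card)) (by positivity) ?_ ?_
  · intro s t _ hst _
    have q1 := lip_sol hμ h1 b1 hst
    have q2 := lip_sol hμ h2 b2 hst
    have e : w1 t - w2 t - (w1 s - w2 s) = (w1 t - w1 s) - (w2 t - w2 s) := by abel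
    simp only [e]
    refine (norm_sub_le _ _).trans ?_
    linarith
  · intro a b Λ _ hab _ hbT hΛ hH s t q1 q2 q3
    have hA : 0 ≤ 640000 * M ^ 3 := by positivity
    have hq : √(t - s) ≤ √T := sqrt_sub_le (by linarith)
    have hmm : √(t - s) * (640000 * M ^ 3) ≤ M := by
      calc √(t - s) * (640000 * M ^ 3) ≤ √T * (640000 * M ^ 3) := by gcongr
        _ = √T * (640000 * M ^ 2) * M := by ring
        _ ≤ 1 * M := by gcongr
        _ = M := one_mul _
    have := step_bound hμ h1 h2 q2 (by linarith) hA hA hΛ (L := Λ)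
      (fun r r' p1 p2 p3 => hol_self hμ h1 hM1 b1 hT0 hT1 hTM p2 (by linarith))
      (fun r r' p1 p2 p3 => hol_self hμ h2 hM1 b2 hT0 hT1 hTM p2 (by linarith))
      (fun r r' p1 p2 p3 => hH r r' (by linarith) p2 (by linarith))
      (m1 := 2 * M) (m2 := 2 * M) (by linarith [b1 s]) (by linarith [b2 s])
    refine this.trans (mul_le_mul_of_nonneg_right ?_ (Real.sqrt_nonneg _))
    have hDs : ‖w1 s - w2 s‖ ≤ ‖w1 a - w2 a‖ + √T * Λ := by
      have h3 := hH a s le_rfl q1 (by linarith)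
      have h4 : √(s - a) ≤ √T := sqrt_sub_le (by linarith)
      have h5 := norm_sub_norm_le (w1 s - w2 s) (w1 a - w2 a)
      have h6 : Λ * √(s - a) ≤ Λ * √T := by gcongr
      simp only at h3
      linarith
    have h8 : √(t - s) * Λ ≤ √T * Λ := by gcongr
    calc 40000 * (2 * M * (2 * M) + 2 * M * (2 * M) + 2 * M * (2 * M)) *
          (‖w1 s - w2 s‖ + √(t - s) * Λ) = 480000 * M ^ 2 * (‖w1 s - w2 s‖ + √(t - s) * Λ) := by ring
      _ ≤ _ := mul_le_mul_of_nonneg_left (by linarith) (by positivity)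


def tr {S : Finset ℤ} (y : Torus) (z : ES S) : ES S :=
  WithLp.toLp 2 (fun k : S => fourier (k : ℤ) y * z k)

theorem tr_apply {S : Finset ℤ} (y : Torus) (z : ES S) (k : S) :
    tr y z k = fourier (k : ℤ) y * z k := rfl

theorem fourier_arg_add (k : ℤ) (x y : Torus) : fourier k (x + y) = fourier k x * fourier k y := by
  rw [fourier_apply, fourier_apply, fourier_apply, smul_add, AddCircle.toCircle_add, Circle.coe_mul]

theorem UU_tr {S : Finset ℤ} (y : Torus) (z : ES S) (t : ℝ) (x : Torus) :
    UU (tr y z) t x = UU z t (x + y) := by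
  unfold UU
  refine Finset.sum_congr rfl fun k _ => ?_
  rw [tr_apply, fourier_arg_add]; ring

theorem fourier_conj_mul (k : ℤ) (y : Torus) : fourier k y * (starRingEnd ℂ) (fourier k y) = 1 := by
  rw [Complex.mul_conj, Complex.normSq_eq_norm_sq, norm_fourier]; simp

theorem tr_sol {S : Finset ℤ} {μ : ℝ} {w : ℝ → ES S} (h : IsSol μ w) (y : Torus) :
    IsSol μ (fun t => tr y (w t)) where
  cont := by
    unfold tr
    refine (PiLp.continuous_toLp 2 _).comp (continuous_pi fun k => ?_)
    have h1 : Continuous fun t => (w t) k :=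
      ((EuclideanSpace.proj (𝕜 := ℂ) k).continuous).comp h.cont
    exact continuous_const.mul h1
  der := by
    intro k t
    simp only [tr_apply]
    refine ((h.der k t).const_mul (fourier (k : ℤ) y)).congr_deriv ?_
    have h1 : ∀ x, cub (UU (tr y (w t)) t x) * (starRingEnd ℂ) (fourier (k : ℤ) x)
        = fourier (k : ℤ) y * (fun x => cub (UU (w t) t x) * (starRingEnd ℂ) (fourier (k : ℤ) x)) (x + y) := by
      intro x
      simp only
      rw [UU_tr, fourier_arg_add, map_mul]
      linear_combination (-cub (UU (w t) t (x + y)) * (starRingEnd ℂ) (fourier (k : ℤ) x)) *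
        fourier_conj_mul k y
    simp_rw [h1]
    rw [integral_const_mul, integral_add_right_eq_self
      (fun x => cub (UU (w t) t x) * (starRingEnd ℂ) (fourier (k : ℤ) x)) y]
    ring

def rho (y : Torus) (k : ℤ) : ℝ := ‖fourier k y - 1‖ ^ 2

theorem norm_tr_sub {S : Finset ℤ} (y : Torus) (z : ES S) :
    ‖tr y z - z‖ ^ 2 = ∑ k : S, rho y k * ‖z k‖ ^ 2 := by
  rw [EuclideanSpace.norm_sq_eq]
  refine Finset.sum_congr rfl fun k _ => ?_
  rw [PiLp.sub_apply, tr_apply, rho, ← mul_pow, ← norm_mul]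
  ring_nf

theorem norm_tr {S : Finset ℤ} (y : Torus) (z : ES S) : ‖tr y z‖ = ‖z‖ := by
  rw [EuclideanSpace.norm_eq, EuclideanSpace.norm_eq]
  simp only [tr_apply, norm_mul, norm_fourier, one_mul]

theorem tr_sub {S : Finset ℤ} (y : Torus) (z z' : ES S) : tr y (z - z') = tr y z - tr y z' := by
  ext k
  simp [tr_apply, mul_sub]

/-- bounds with weights for one translation -/
theorem one_tr (M R : ℝ) (hM1 : 1 ≤ M) (hR : 0 ≤ R) :
    ∃ K : ℝ, 0 ≤ K ∧ ∀ (S : Finset ℤ) (μ : ℝ), |μ| ≤ 1 → ∀ w : ℝ → ES S, IsSol μ w →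
      ‖w 0‖ ≤ M → ∀ W : ℤ → ℝ, (W = (fun _ => 1) ∨ ∃ y, W = rho y) →
      (∀ t, |t| ≤ R → ∑ k : S, W k * ‖w t k‖ ^ 2 ≤ K * ∑ k : S, W k * ‖w 0 k‖ ^ 2) ∧
      (∀ s t, -R ≤ s → s ≤ t → t ≤ R → ∑ k : S, W k * ‖(w t - w s) k‖ ^ 2 ≤
        (K * ∑ k : S, W k * ‖w 0 k‖ ^ 2) * (t - s)) := by
  obtain ⟨K, hK, H⟩ := diff_sol M R hM1 hR
  refine ⟨K ^ 2, by positivity, ?_⟩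
  intro S μ hμ w hw hw0 W hW
  rcases hW with rfl | ⟨y, rfl⟩
  · have := H S μ hμ w (fun _ => 0) hw (zero_sol μ) hw0 (by simp; linarith)
    simp only [sub_zero] at this
    simp only [one_mul, ← EuclideanSpace.norm_sq_eq]
    refine ⟨fun t ht => ?_, fun s t h1 h2 h3 => ?_⟩
    · rw [← mul_pow]
      exact pow_le_pow_left₀ (norm_nonneg _) (this.1 t ht) 2
    · have q := pow_le_pow_left₀ (norm_nonneg _) (this.2 s t h1 h2 h3) 2
      rwa [mul_pow, mul_pow, Real.sq_sqrt (by linarith)] at q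
  · have := H S μ hμ (fun t => tr y (w t)) w (tr_sol hw y) hw (by rw [norm_tr]; exact hw0) hw0
    simp only [← norm_tr_sub]
    refine ⟨fun t ht => ?_, fun s t h1 h2 h3 => ?_⟩
    · rw [← mul_pow]
      exact pow_le_pow_left₀ (norm_nonneg _) (this.1 t ht) 2
    · have q := pow_le_pow_left₀ (norm_nonneg _) (this.2 s t h1 h2 h3) 2
      rw [mul_pow, mul_pow, Real.sq_sqrt (by linarith)] at q
      have e : tr y (w t - w s) - (w t - w s) = tr y (w t) - w t - (tr y (w s) - w s) := by
        rw [tr_sub]; abel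
      rw [e]; exact q

def yj (j : ℕ) : ℝ := Real.pi / 2 / 2 ^ j

theorem norm_exp_sub_one_sq (θ : ℝ) : ‖Complex.exp (θ * Complex.I) - 1‖ ^ 2 = 2 - 2 * Real.cos θ := by
  rw [← Complex.normSq_eq_norm_sq, Complex.normSq_apply]
  simp only [Complex.sub_re, Complex.sub_im, Complex.exp_ofReal_mul_I_re, Complex.exp_ofReal_mul_I_im,
    Complex.one_re, Complex.one_im]
  nlinarith [Real.sin_sq_add_cos_sq θ]

theorem rho_coe (y : ℝ) (k : ℤ) : rho (y : Torus) k = 2 - 2 * Real.cos (k * y) := by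
  rw [rho, fourier_coe_apply, ← norm_exp_sub_one_sq]
  congr 4
  push_cast
  field_simp

theorem rho_nonneg (y : Torus) (k : ℤ) : 0 ≤ rho y k := by unfold rho; positivity

def WJ (s : ℝ) (J : ℕ) (k : ℤ) : ℝ := 1 + ∑ j ∈ Finset.range J, (4:ℝ) ^ (s * j) * rho (yj j : Torus) k

theorem jbr_pos' (x : ℝ) : 1 ≤ jbr x := by
  unfold jbr
  rw [Real.one_le_sqrt]; nlinarith [sq_nonneg x]

theorem jbr_rpow (x s : ℝ) : jbr x ^ (2 * s) = (1 + x ^ 2) ^ s := by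
  unfold jbr
  rw [Real.rpow_mul (Real.sqrt_nonneg _), Real.rpow_two, Real.sq_sqrt (by positivity)]

theorem WJ_lower (s : ℝ) (hs : 0 ≤ s) (J : ℕ) (k : ℤ) (hk : |(k:ℝ)| < 2 ^ J) :
    jbr (k:ℝ) ^ (2 * s) ≤ 8 ^ s * WJ s J k := by
  rw [jbr_rpow]
  have h8 : (1:ℝ) ≤ 8 ^ s := Real.one_le_rpow (by norm_num) hs
  have hsum : 0 ≤ ∑ j ∈ Finset.range J, (4:ℝ) ^ (s * j) * rho (yj j : Torus) k :=
    Finset.sum_nonneg fun j _ => mul_nonneg (by positivity) (rho_nonneg _ _)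
  rcases eq_or_ne k 0 with rfl | h0
  · simp only [Int.cast_zero]
    rw [show (1 + (0:ℝ) ^ 2) = 1 by norm_num, Real.one_rpow]
    unfold WJ
    nlinarith
  · have hk1 : 1 ≤ |(k:ℝ)| := by
      rw [← Int.cast_abs]; exact_mod_cast Int.one_le_abs h0
    obtain ⟨j, hj1, hj2⟩ := exists_nat_pow_near hk1 (one_lt_two)
    have hjJ : j < J := by
      have : (2:ℝ) ^ j < 2 ^ J := lt_of_le_of_lt hj1 hk
      exact (pow_lt_pow_iff_right₀ one_lt_two).mp this
    have hr : 2 ≤ rho (yj j : Torus) k := by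
      rw [rho_coe]
      have e : Real.cos (k * yj j) = Real.cos (|(k:ℝ)| * yj j) := by
        rw [← Real.cos_abs, abs_mul, abs_of_nonneg (a := yj j) (by unfold yj; positivity)]
      have hpi := Real.pi_pos
      have e2 : |(k:ℝ)| * yj j = (|(k:ℝ)| / 2 ^ j) * (Real.pi / 2) := by unfold yj; ring
      have g1 : 1 ≤ |(k:ℝ)| / 2 ^ j := by rw [le_div_iff₀ (by positivity)]; linarith
      have g2 : |(k:ℝ)| / 2 ^ j ≤ 2 := by
        rw [div_le_iff₀ (by positivity)]; rw [pow_succ] at hj2; linarith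
      have := Real.cos_nonpos_of_pi_div_two_le_of_le (x := |(k:ℝ)| * yj j)
        (by rw [e2]; nlinarith) (by rw [e2]; nlinarith)
      rw [e]; linarith
    have h1 : (4:ℝ) ^ (s * j) * 2 ≤ WJ s J k := by
      have := Finset.single_le_sum (f := fun j : ℕ => (4:ℝ) ^ (s * j) * rho (yj j : Torus) k)
        (fun j _ => mul_nonneg (by positivity) (rho_nonneg _ _)) (Finset.mem_range.mpr hjJ)
      unfold WJ
      have h2 : (4:ℝ) ^ (s * j) * 2 ≤ (4:ℝ) ^ (s * j) * rho (yj j : Torus) k := by gcongr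
      linarith
    have h4 : (1 + (k:ℝ) ^ 2) ≤ 8 * 4 ^ (j:ℝ) := by
      rw [Real.rpow_natCast]
      have q : (k:ℝ) ^ 2 < (2 ^ (j+1)) ^ 2 := by
        rw [← sq_abs (k:ℝ)]; gcongr
      have q1 : ((2:ℝ) ^ (j+1)) ^ 2 = 4 * 4 ^ j := by
        rw [← pow_mul, mul_comm, pow_mul, pow_succ]; norm_num; ring
      have q2 : 1 ≤ (k:ℝ) ^ 2 := by rw [← sq_abs]; nlinarith
      linarith
    calc (1 + (k:ℝ) ^ 2) ^ s ≤ (8 * 4 ^ (j:ℝ)) ^ s := by gcongr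
      _ = 8 ^ s * 4 ^ (s * j) := by
        rw [Real.mul_rpow (by norm_num) (by positivity), ← Real.rpow_mul (by norm_num), mul_comm s]
      _ ≤ 8 ^ s * WJ s J k := by
        gcongr
        have : 0 ≤ (4:ℝ) ^ (s * j) := by positivity
        linarith

theorem rho_upper (y : ℝ) (k : ℤ) (s' : ℝ) (h0 : 0 ≤ s') (h1 : s' ≤ 1) :
    rho (y : Torus) k ≤ 4 * ((k * y) ^ 2) ^ s' := by
  rw [rho_coe]
  set θ := (k : ℝ) * y
  rcases le_total (θ ^ 2) 1 with h | h
  · have := Real.one_sub_sq_div_two_le_cos (x := θ)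
    have h2 : θ ^ 2 ≤ (θ ^ 2) ^ s' := by
      rcases eq_or_ne (θ ^ 2) 0 with hz | hz
      · rw [hz]; positivity
      · calc θ ^ 2 = (θ ^ 2) ^ (1:ℝ) := (Real.rpow_one _).symm
          _ ≤ (θ ^ 2) ^ s' := Real.rpow_le_rpow_of_exponent_ge (lt_of_le_of_ne (sq_nonneg _) hz.symm) h h1
    have : 0 ≤ (θ ^ 2) ^ s' := by positivity
    linarith
  · have : 1 ≤ (θ ^ 2) ^ s' := Real.one_le_rpow h h0
    linarith [Real.neg_one_le_cos θ]

theorem WJ_upper (s s' : ℝ) (h0 : 0 ≤ s') (h1 : s' ≤ 1) (hss : s < s') :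
    ∃ C : ℝ, 0 ≤ C ∧ ∀ J k, WJ s J k ≤ C * jbr (k:ℝ) ^ (2 * s') := by
  set q := (4:ℝ) ^ (s - s') with hq
  have hq0 : 0 < q := by positivity
  have hq1 : q < 1 := Real.rpow_lt_one_of_one_lt_of_neg (by norm_num) (by linarith)
  refine ⟨1 + 16 * (1 - q)⁻¹, ?_, ?_⟩
  · have : 0 < 1 - q := by linarith
    positivity
  intro J k
  rw [jbr_rpow]
  set X := (1 + (k:ℝ) ^ 2) ^ s' with hX
  have hX1 : 1 ≤ X := Real.one_le_rpow (by nlinarith [sq_nonneg (k:ℝ)]) h0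
  have hterm : ∀ j : ℕ, (4:ℝ) ^ (s * j) * rho (yj j : Torus) k ≤ 16 * X * q ^ j := by
    intro j
    have h2 := rho_upper (yj j) k s' h0 h1
    have h3 : ((k * yj j) ^ 2) ≤ (1 + (k:ℝ) ^ 2) * 4 * (4 ^ (-(j:ℝ))) := by
      have hy : yj j ^ 2 ≤ 4 * (4 ^ (-(j:ℝ))) := by
        unfold yj
        rw [Real.rpow_neg (by norm_num), Real.rpow_natCast, div_pow, ← pow_mul, mul_comm j 2, pow_mul]
        have : (Real.pi / 2) ^ 2 ≤ 4 := by nlinarith [Real.pi_le_four, Real.pi_pos]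
        norm_num
        rw [div_eq_mul_inv]
        gcongr
      rw [mul_pow, mul_assoc]
      have hy0 : 0 ≤ yj j ^ 2 := sq_nonneg _
      nlinarith [sq_nonneg (k:ℝ)]
    have h4 : ((k * yj j) ^ 2) ^ s' ≤ X * 4 * (4 ^ (-(s' * j))) := by
      calc _ ≤ ((1 + (k:ℝ) ^ 2) * 4 * (4 ^ (-(j:ℝ)))) ^ s' := by gcongr
        _ = X * 4 ^ s' * (4 ^ (-(s' * j))) := by
          rw [Real.mul_rpow (by positivity) (by positivity), Real.mul_rpow (by positivity) (by positivity),
            ← Real.rpow_mul (by norm_num), neg_mul, mul_comm (j:ℝ) s']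
        _ ≤ X * 4 * _ := by
          gcongr
          calc (4:ℝ) ^ s' ≤ 4 ^ (1:ℝ) := Real.rpow_le_rpow_of_exponent_le (by norm_num) h1
            _ = 4 := Real.rpow_one _
    have h5 : (4:ℝ) ^ (s * j) * 4 ^ (-(s' * j)) = q ^ j := by
      rw [← Real.rpow_add (by norm_num), hq, ← Real.rpow_natCast, ← Real.rpow_mul (by norm_num)]
      ring_nf
    calc _ ≤ (4:ℝ) ^ (s * j) * (4 * (X * 4 * (4 ^ (-(s' * j))))) := by gcongr; linarith
      _ = 16 * X * ((4:ℝ) ^ (s * j) * 4 ^ (-(s' * j))) := by ring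
      _ = _ := by rw [h5]
  have hg : ∑ j ∈ Finset.range J, q ^ j ≤ (1 - q)⁻¹ := by
    rw [← tsum_geometric_of_lt_one hq0.le hq1]
    exact (summable_geometric_of_lt_one hq0.le hq1).sum_le_tsum _ (fun _ _ => by positivity)
  have hs : ∑ j ∈ Finset.range J, (4:ℝ) ^ (s * j) * rho (yj j : Torus) k ≤ 16 * X * (1 - q)⁻¹ := by
    calc _ ≤ ∑ j ∈ Finset.range J, 16 * X * q ^ j := Finset.sum_le_sum fun j _ => hterm j
      _ = 16 * X * ∑ j ∈ Finset.range J, q ^ j := by rw [Finset.mul_sum]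
      _ ≤ _ := by gcongr
  unfold WJ
  nlinarith

theorem sum_WJ {S : Finset ℤ} (s : ℝ) (J : ℕ) (z : ES S) :
    ∑ k : S, WJ s J k * ‖z k‖ ^ 2 = ∑ k : S, (fun _ => (1:ℝ)) (k:ℤ) * ‖z k‖ ^ 2 +
      ∑ j ∈ Finset.range J, (4:ℝ) ^ (s * j) * ∑ k : S, rho (yj j : Torus) k * ‖z k‖ ^ 2 := by
  simp_rw [Finset.mul_sum]
  rw [Finset.sum_comm, ← Finset.sum_add_distrib]
  refine Finset.sum_congr rfl fun k _ => ?_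
  rw [WJ, add_mul, Finset.sum_mul]
  congr 1
  refine Finset.sum_congr rfl fun j _ => ?_
  ring

theorem hs_low (M R s s' : ℝ) (hM1 : 1 ≤ M) (hR : 0 ≤ R) (hs : 0 ≤ s) (hss : s < s') (hs1 : s' ≤ 1) :
    ∃ K : ℝ, 0 ≤ K ∧ ∀ (S : Finset ℤ) (μ : ℝ), |μ| ≤ 1 → ∀ w : ℝ → ES S, IsSol μ w →
      ‖w 0‖ ≤ M →
      (∀ t, |t| ≤ R → ∑ k : S, jbr (k:ℤ) ^ (2 * s) * ‖w t k‖ ^ 2 ≤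
        K * ∑ k : S, jbr (k:ℤ) ^ (2 * s') * ‖w 0 k‖ ^ 2) ∧
      (∀ r t, -R ≤ r → r ≤ t → t ≤ R → ∑ k : S, jbr (k:ℤ) ^ (2 * s) * ‖(w t - w r) k‖ ^ 2 ≤
        (K * ∑ k : S, jbr (k:ℤ) ^ (2 * s') * ‖w 0 k‖ ^ 2) * (t - r)) := by
  obtain ⟨K, hK, H⟩ := one_tr M R hM1 hR
  obtain ⟨C, hC, hU⟩ := WJ_upper s s' (by linarith) hs1 hss
  refine ⟨8 ^ s * K * C, by positivity, ?_⟩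
  intro S μ hμ w hw hw0
  obtain ⟨J, hJ⟩ : ∃ J : ℕ, ∀ k : S, |((k:ℤ):ℝ)| < 2 ^ J := by
    obtain ⟨J, hJ⟩ := pow_unbounded_of_one_lt (∑ k : S, |((k:ℤ):ℝ)|) (one_lt_two)
    refine ⟨J, fun k => lt_of_le_of_lt ?_ hJ⟩
    exact Finset.single_le_sum (f := fun k : S => |((k:ℤ):ℝ)|) (fun _ _ => abs_nonneg _) (Finset.mem_univ k)
  have hlow : ∀ z : ES S, ∑ k : S, jbr (k:ℤ) ^ (2 * s) * ‖z k‖ ^ 2 ≤ 8 ^ s * ∑ k : S, WJ s J k * ‖z k‖ ^ 2 := by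
    intro z
    rw [Finset.mul_sum]
    refine Finset.sum_le_sum fun k _ => ?_
    rw [← mul_assoc]
    gcongr
    exact WJ_lower s hs J k (hJ k)
  have hup : ∑ k : S, WJ s J k * ‖w 0 k‖ ^ 2 ≤ C * ∑ k : S, jbr (k:ℤ) ^ (2 * s') * ‖w 0 k‖ ^ 2 := by
    rw [Finset.mul_sum]
    refine Finset.sum_le_sum fun k _ => ?_
    rw [← mul_assoc]
    gcongr
    exact hU J k
  have A := H S μ hμ w hw hw0 (fun _ => 1) (Or.inl rfl)
  have B := fun j : ℕ => H S μ hμ w hw hw0 (rho (yj j : Torus)) (Or.inr ⟨_, rfl⟩)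
  constructor
  · intro t ht
    have h1 : ∑ k : S, WJ s J k * ‖w t k‖ ^ 2 ≤ K * ∑ k : S, WJ s J k * ‖w 0 k‖ ^ 2 := by
      rw [sum_WJ, sum_WJ, mul_add, Finset.mul_sum (Finset.range J) _ K]
      refine add_le_add (A.1 t ht) (Finset.sum_le_sum fun j _ => ?_)
      rw [mul_left_comm]
      gcongr
      exact (B j).1 t ht
    calc _ ≤ _ := hlow _
      _ ≤ 8 ^ s * (K * (C * ∑ k : S, jbr (k:ℤ) ^ (2 * s') * ‖w 0 k‖ ^ 2)) := by
        gcongr; exact h1.trans (by gcongr)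
      _ = _ := by ring
  · intro r t h1 h2 h3
    have h1 : ∑ k : S, WJ s J k * ‖(w t - w r) k‖ ^ 2 ≤ (K * ∑ k : S, WJ s J k * ‖w 0 k‖ ^ 2) * (t - r) := by
      rw [sum_WJ, sum_WJ, mul_add, add_mul, Finset.mul_sum (Finset.range J) _ K, Finset.sum_mul]
      refine add_le_add (A.2 r t h1 h2 h3) (Finset.sum_le_sum fun j _ => ?_)
      rw [mul_left_comm K, mul_assoc ((4:ℝ) ^ (s * (j:ℝ)))]
      gcongr
      exact (B j).2 r t h1 h2 h3
    have htr : 0 ≤ t - r := by linarith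
    calc _ ≤ _ := hlow _
      _ ≤ 8 ^ s * ((K * (C * ∑ k : S, jbr (k:ℤ) ^ (2 * s') * ‖w 0 k‖ ^ 2)) * (t - r)) := by
        gcongr; exact h1.trans (by gcongr)
      _ = _ := by ring


theorem match_sum {S : Finset ℤ} (α δ : S → ℝ) (P : S → S → Prop) [∀ i j, Decidable (P i j)]
    (h1 : ∀ i j j', P i j → P i j' → j = j') (h2 : ∀ i i' j, P i j → P i' j → i = i') :
    ∑ i, ∑ j, (if P i j then α i * δ j else 0) ≤ √(∑ i, α i ^ 2) * √(∑ j, δ j ^ 2) := by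
  have e : ∑ i, ∑ j, (if P i j then α i * δ j else 0)
      = ∑ p : S × S, (if P p.1 p.2 then α p.1 else 0) * (if P p.1 p.2 then δ p.2 else 0) := by
    rw [Fintype.sum_prod_type]
    refine Finset.sum_congr rfl fun i _ => Finset.sum_congr rfl fun j _ => ?_
    split_ifs <;> simp
  rw [e]
  refine (Real.sum_mul_le_sqrt_mul_sqrt _ _ _).trans ?_
  have one : ∀ Q : S → Prop, ∀ _ : DecidablePred Q, (∀ j j', Q j → Q j' → j = j') →
      ∀ c : ℝ, 0 ≤ c → ∑ j, (if Q j then c else 0) ≤ c := by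
    intro Q _ hQ c hc
    by_cases hex : ∃ j, Q j
    · obtain ⟨j, hj⟩ := hex
      rw [Finset.sum_eq_single j]
      · simp [hj]
      · intro b _ hb
        rw [if_neg]
        intro hb'; exact hb (hQ _ _ hb' hj)
      · simp
    · push Not at hex
      simp [hex, hc]
  gcongr
  · rw [Fintype.sum_prod_type]
    refine Finset.sum_le_sum fun i _ => ?_
    calc _ = ∑ j, (if P i j then α i ^ 2 else 0) := by
          refine Finset.sum_congr rfl fun j _ => ?_
          split_ifs <;> simp
      _ ≤ _ := one (P i) _ (h1 i) _ (sq_nonneg _)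
  · rw [Fintype.sum_prod_type_right]
    refine Finset.sum_le_sum fun j _ => ?_
    calc _ = ∑ i, (if P i j then δ j ^ 2 else 0) := by
          refine Finset.sum_congr rfl fun i _ => ?_
          split_ifs <;> simp
      _ ≤ _ := one (fun i => P i j) _ (fun i i' => h2 i i' j) _ (sq_nonneg _)

def quad {S : Finset ℤ} (α β γ δ : S → ℝ) : ℝ :=
  ∑ a : S, ∑ b : S, ∑ c : S, ∑ d : S,
    if (a:ℤ) - b + c = d then α a * β b * γ c * δ d else 0

theorem quad1 {S : Finset ℤ} (α β γ δ : S → ℝ) (hβ : ∀ k, 0 ≤ β k) (hγ : ∀ k, 0 ≤ γ k) :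
    quad α β γ δ ≤ (∑ b, β b) * (∑ c, γ c) * (√(∑ i, α i ^ 2) * √(∑ j, δ j ^ 2)) := by
  have e : quad α β γ δ = ∑ b : S, ∑ c : S, β b * γ c *
      ∑ a : S, ∑ d : S, if (a:ℤ) - b + c = d then α a * δ d else 0 := by
    unfold quad
    rw [Finset.sum_comm]
    refine Finset.sum_congr rfl fun b _ => ?_
    rw [Finset.sum_comm]
    refine Finset.sum_congr rfl fun c _ => ?_
    simp_rw [Finset.mul_sum]
    refine Finset.sum_congr rfl fun a _ => Finset.sum_congr rfl fun d _ => ?_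
    split_ifs
    · ring
    · simp
  rw [e, Finset.sum_mul_sum, Finset.sum_mul]
  refine Finset.sum_le_sum fun b _ => ?_
  rw [Finset.sum_mul]
  refine Finset.sum_le_sum fun c _ => ?_
  refine mul_le_mul_of_nonneg_left ?_ (mul_nonneg (hβ b) (hγ c))
  apply match_sum
  · intro i j j' q1 q2; ext; omega
  · intro i i' j q1 q2; ext; omega

theorem quad2 {S : Finset ℤ} (α β γ δ : S → ℝ) (hα : ∀ k, 0 ≤ α k) (hγ : ∀ k, 0 ≤ γ k) :
    quad α β γ δ ≤ (∑ b, α b) * (∑ c, γ c) * (√(∑ i, β i ^ 2) * √(∑ j, δ j ^ 2)) := by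
  have e : quad α β γ δ = ∑ a : S, ∑ c : S, α a * γ c *
      ∑ b : S, ∑ d : S, if (a:ℤ) - b + c = d then β b * δ d else 0 := by
    unfold quad
    refine Finset.sum_congr rfl fun a _ => ?_
    rw [Finset.sum_comm]
    refine Finset.sum_congr rfl fun c _ => ?_
    simp_rw [Finset.mul_sum]
    refine Finset.sum_congr rfl fun b _ => Finset.sum_congr rfl fun d _ => ?_
    split_ifs
    · ring
    · simp
  rw [e, Finset.sum_mul_sum, Finset.sum_mul]
  refine Finset.sum_le_sum fun a _ => ?_
  rw [Finset.sum_mul]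
  refine Finset.sum_le_sum fun c _ => ?_
  refine mul_le_mul_of_nonneg_left ?_ (mul_nonneg (hα a) (hγ c))
  apply match_sum
  · intro i j j' q1 q2; ext; omega
  · intro i i' j q1 q2; ext; omega

theorem quad_symm {S : Finset ℤ} (α β γ δ : S → ℝ) : quad α β γ δ = quad γ β α δ := by
  unfold quad
  rw [Finset.sum_comm]
  conv_rhs => rw [Finset.sum_comm]
  refine Finset.sum_congr rfl fun b _ => ?_
  rw [Finset.sum_comm]
  refine Finset.sum_congr rfl fun c _ => Finset.sum_congr rfl fun a _ => Finset.sum_congr rfl fun d _ => ?_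
  have : ((a:ℤ) - b + c = d) ↔ ((c:ℤ) - b + a = d) := by constructor <;> intro h <;> omega
  simp only [this]
  split_ifs
  · ring
  · rfl

theorem jbr_sum (a b c : ℝ) (s : ℝ) (hs : 0 ≤ s) :
    jbr (a - b + c) ^ s ≤ 3 ^ s * (jbr a ^ s + jbr b ^ s + jbr c ^ s) := by
  have ha := jbr_pos' a
  have hb := jbr_pos' b
  have hc := jbr_pos' c
  have la : |a| ≤ jbr a := by
    unfold jbr; rw [← Real.sqrt_sq_eq_abs]; apply Real.sqrt_le_sqrt; linarith
  have lb : |b| ≤ jbr b := by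
    unfold jbr; rw [← Real.sqrt_sq_eq_abs]; apply Real.sqrt_le_sqrt; linarith
  have sa : jbr a ^ 2 = 1 + a ^ 2 := by unfold jbr; exact Real.sq_sqrt (by positivity)
  have sb : jbr b ^ 2 = 1 + b ^ 2 := by unfold jbr; exact Real.sq_sqrt (by positivity)
  have sc : jbr c ^ 2 = 1 + c ^ 2 := by unfold jbr; exact Real.sq_sqrt (by positivity)
  have lc : |c| ≤ jbr c := by
    unfold jbr; rw [← Real.sqrt_sq_eq_abs]; apply Real.sqrt_le_sqrt; linarith
  have h1 : jbr (a - b + c) ≤ jbr a + jbr b + jbr c := by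
    unfold jbr
    rw [Real.sqrt_le_left (by positivity)]
    change 1 + (a - b + c) ^ 2 ≤ (jbr a + jbr b + jbr c) ^ 2
    rw [abs_le] at la lb lc
    have p1 : -(a * b) ≤ jbr a * jbr b := by nlinarith
    have p2 : a * c ≤ jbr a * jbr c := by nlinarith
    have p3 : -(b * c) ≤ jbr b * jbr c := by nlinarith
    nlinarith
  have key : ∀ m : ℝ, 1 ≤ m → jbr a ≤ m → jbr b ≤ m → jbr c ≤ m → jbr (a - b + c) ^ s ≤ 3 ^ s * m ^ s := by
    intro m hm h2 h3 h4
    rw [← Real.mul_rpow (by norm_num) (by linarith)]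
    have := jbr_pos' (a - b + c)
    gcongr
    linarith
  have pa : 0 ≤ jbr a ^ s := Real.rpow_nonneg (by linarith) _
  have pb : 0 ≤ jbr b ^ s := Real.rpow_nonneg (by linarith) _
  have pc : 0 ≤ jbr c ^ s := Real.rpow_nonneg (by linarith) _
  have fin : ∀ x, x ≤ jbr a ^ s + jbr b ^ s + jbr c ^ s → 3 ^ s * x ≤ 3 ^ s * (jbr a ^ s + jbr b ^ s + jbr c ^ s) :=
    fun x hx => by gcongr
  rcases le_total (jbr a) (jbr b) with hab | hab <;> rcases le_total (jbr b) (jbr c) with hbc | hbc <;>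
    rcases le_total (jbr a) (jbr c) with hac | hac
  all_goals first
    | exact (key _ ha le_rfl (by linarith) (by linarith)).trans (fin _ (by linarith))
    | exact (key _ hb (by linarith) le_rfl (by linarith)).trans (fin _ (by linarith))
    | exact (key _ hc (by linarith) (by linarith) le_rfl).trans (fin _ (by linarith))

theorem pair_quad {S : Finset ℤ} (z g : ES S) (r : ℝ) :
    ‖∫ x, cub (UU z r x) * (starRingEnd ℂ) (UU g r x) ∂hm‖ ≤
      quad (fun k => ‖z k‖) (fun k => ‖z k‖) (fun k => ‖z k‖) (fun k => ‖g k‖) := by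
  set c : S → ℂ := fun k => z k * Complex.exp (-Complex.I * r * ((k : ℤ) : ℂ) ^ 2) with hc
  set v : S → ℂ := fun k => g k * Complex.exp (-Complex.I * r * ((k : ℤ) : ℂ) ^ 2) with hv
  have nc : ∀ k, ‖c k‖ = ‖z k‖ := fun k => by rw [hc]; simp only [norm_mul, norm_phase, mul_one]
  have nv : ∀ k, ‖v k‖ = ‖g k‖ := fun k => by rw [hv]; simp only [norm_mul, norm_phase, mul_one]
  have eU : ∀ x, UU z r x = ∑ k, c k * fourier (k:ℤ) x := by
    intro x; unfold UU; refine Finset.sum_congr rfl fun k _ => ?_; rw [hc]; ring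
  have eV : ∀ x, UU g r x = ∑ k, v k * fourier (k:ℤ) x := by
    intro x; unfold UU; refine Finset.sum_congr rfl fun k _ => ?_; rw [hv]; ring
  have gen : ∀ f1 f2 f3 f4 : S → ℂ, (∑ a, f1 a) * ((∑ a, f2 a) * ((∑ a, f3 a) * (∑ a, f4 a))) =
      ∑ p : S × S × S × S, f1 p.1 * (f2 p.2.1 * (f3 p.2.2.1 * f4 p.2.2.2)) := by
    intro f1 f2 f3 f4
    simp only [Fintype.sum_prod_type]
    rw [Finset.sum_mul]
    refine Finset.sum_congr rfl fun a _ => ?_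
    rw [Finset.sum_mul, Finset.mul_sum]
    refine Finset.sum_congr rfl fun b _ => ?_
    rw [Finset.sum_mul, Finset.mul_sum, Finset.mul_sum]
    refine Finset.sum_congr rfl fun d _ => ?_
    rw [Finset.mul_sum, Finset.mul_sum, Finset.mul_sum]
  have e : ∀ x, cub (UU z r x) * (starRingEnd ℂ) (UU g r x) =
      ∑ p : S × S × S × S, (c p.1 * (starRingEnd ℂ) (c p.2.1) * c p.2.2.1 * (starRingEnd ℂ) (v p.2.2.2)) *
        fourier ((p.1:ℤ) + -p.2.1 + (p.2.2.1 + -p.2.2.2)) x := by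
    intro x
    have : cub (UU z r x) * (starRingEnd ℂ) (UU g r x) =
        UU z r x * ((starRingEnd ℂ) (UU z r x) * (UU z r x * (starRingEnd ℂ) (UU g r x))) := by
      rw [cub, ← Complex.ofReal_pow, ← Complex.normSq_eq_norm_sq, ← Complex.mul_conj]; ring
    rw [this, eU, eV, map_sum, map_sum, gen]
    refine Finset.sum_congr rfl fun p _ => ?_
    rw [fourier_add, fourier_add, fourier_add, fourier_neg, fourier_neg,
      map_mul (starRingEnd ℂ) (c p.2.1), map_mul (starRingEnd ℂ) (v p.2.2.2)]
    ring
  simp_rw [e]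
  rw [integral_finsetSum]
  · refine (norm_sum_le _ _).trans ?_
    unfold quad
    simp only [Fintype.sum_prod_type]
    refine Finset.sum_le_sum fun a _ => Finset.sum_le_sum fun b _ => Finset.sum_le_sum fun c' _ =>
      Finset.sum_le_sum fun d _ => ?_
    rw [integral_const_mul, fourier_int]
    have hiff : ((a:ℤ) + -b + (c' + -d) = 0) ↔ ((a:ℤ) - b + c' = d) := by
      constructor <;> intro h <;> omega
    simp only [hiff]
    split_ifs
    · simp only [norm_mul, RCLike.norm_conj, nc, nv, mul_one, norm_one]; exact le_rfl
    · simp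
  · intro p _
    apply integrable_cont
    exact continuous_const.mul (fourier (T := 2 * Real.pi) _).continuous

def wt {S : Finset ℤ} (s : ℝ) (z : ES S) : ES S :=
  WithLp.toLp 2 (fun k : S => ((jbr (k:ℤ) ^ s : ℝ) : ℂ) * z k)

theorem wt_apply {S : Finset ℤ} (s : ℝ) (z : ES S) (k : S) :
    wt s z k = ((jbr (k:ℤ) ^ s : ℝ) : ℂ) * z k := rfl

theorem wt_sub {S : Finset ℤ} (s : ℝ) (z z' : ES S) : wt s (z - z') = wt s z - wt s z' := by
  ext k
  simp [wt_apply, mul_sub]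

theorem jbr_nn (x s : ℝ) : 0 ≤ jbr x ^ s := Real.rpow_nonneg (by linarith [jbr_pos' x]) _

theorem norm_wt_apply {S : Finset ℤ} (s : ℝ) (z : ES S) (k : S) :
    ‖wt s z k‖ = jbr (k:ℤ) ^ s * ‖z k‖ := by
  rw [wt_apply, norm_mul, Complex.norm_real, Real.norm_of_nonneg (jbr_nn _ _)]

theorem jbr_two (x s : ℝ) : jbr x ^ (2 * s) = (jbr x ^ s) ^ 2 := by
  rw [mul_comm, Real.rpow_mul (by linarith [jbr_pos' x]), Real.rpow_two]

theorem norm_wt {S : Finset ℤ} (s : ℝ) (z : ES S) :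
    ‖wt s z‖ ^ 2 = ∑ k : S, jbr (k:ℤ) ^ (2 * s) * ‖z k‖ ^ 2 := by
  rw [EuclideanSpace.norm_sq_eq]
  refine Finset.sum_congr rfl fun k _ => ?_
  rw [norm_wt_apply, mul_pow, jbr_two]

theorem quad_wt {S : Finset ℤ} (s : ℝ) (hs : 0 ≤ s) (z d : ES S) {A : ℝ} (hA : ∑ k : S, ‖z k‖ ≤ A) :
    quad (fun k => ‖z k‖) (fun k => ‖z k‖) (fun k => ‖z k‖) (fun k => ‖wt s d k‖) ≤
      3 ^ s * 3 * A ^ 2 * ‖wt s z‖ * ‖d‖ := by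
  have h1 : quad (fun k => ‖z k‖) (fun k => ‖z k‖) (fun k => ‖z k‖) (fun k => ‖wt s d k‖) ≤
      3 ^ s * (quad (fun k => ‖wt s z k‖) (fun k => ‖z k‖) (fun k => ‖z k‖) (fun k => ‖d k‖)
      + quad (fun k => ‖z k‖) (fun k => ‖wt s z k‖) (fun k => ‖z k‖) (fun k => ‖d k‖)
      + quad (fun k => ‖z k‖) (fun k => ‖z k‖) (fun k => ‖wt s z k‖) (fun k => ‖d k‖)) := by
    unfold quad
    simp only [← Finset.sum_add_distrib, Finset.mul_sum]
    refine Finset.sum_le_sum fun a _ => Finset.sum_le_sum fun b _ => Finset.sum_le_sum fun c _ =>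
      Finset.sum_le_sum fun k _ => ?_
    split_ifs with h
    · simp only [norm_wt_apply]
      have hj := jbr_sum (a:ℤ) (b:ℤ) (c:ℤ) s hs
      have e : (((a:ℤ):ℝ) - ((b:ℤ):ℝ) + ((c:ℤ):ℝ)) = ((k:ℤ):ℝ) := by exact_mod_cast h
      rw [e] at hj
      have := mul_le_mul_of_nonneg_right hj
        (by positivity : 0 ≤ ‖z a‖ * ‖z b‖ * ‖z c‖ * ‖d k‖)
      linarith
    · simp
  have hA0 : 0 ≤ ∑ k : S, ‖z k‖ := Finset.sum_nonneg fun _ _ => norm_nonneg _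
  have hsq : (∑ k : S, ‖z k‖) * (∑ k : S, ‖z k‖) ≤ A ^ 2 := by nlinarith
  have nz : √(∑ i : S, ‖wt s z i‖ ^ 2) = ‖wt s z‖ := (EuclideanSpace.norm_eq _).symm
  have nd : √(∑ i : S, ‖d i‖ ^ 2) = ‖d‖ := (EuclideanSpace.norm_eq _).symm
  have q1 := quad1 (fun k => ‖wt s z k‖) (fun k => ‖z k‖) (fun k => ‖z k‖) (fun k => ‖d k‖)
    (fun _ => norm_nonneg _) (fun _ => norm_nonneg _)
  have q2 := quad2 (fun k => ‖z k‖) (fun k => ‖wt s z k‖) (fun k => ‖z k‖) (fun k => ‖d k‖)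
    (fun _ => norm_nonneg _) (fun _ => norm_nonneg _)
  rw [quad_symm (fun k => ‖z k‖) (fun k => ‖z k‖) (fun k => ‖wt s z k‖)] at h1
  simp only [nz, nd] at q1 q2
  have q3 : (∑ k : S, ‖z k‖) * (∑ k : S, ‖z k‖) * (‖wt s z‖ * ‖d‖) ≤ A ^ 2 * (‖wt s z‖ * ‖d‖) := by gcongr
  refine h1.trans ?_
  calc _ ≤ (3:ℝ) ^ s * (3 * (A ^ 2 * (‖wt s z‖ * ‖d‖))) := by gcongr; linarith
    _ = _ := by ring

theorem wt_diff {S : Finset ℤ} {μ : ℝ} (hμ : |μ| ≤ 1) {w : ℝ → ES S} (h : IsSol μ w) (s : ℝ) (hs : 0 ≤ s)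
    {A a b B : ℝ} (hab : a ≤ b) (hA : ∀ r, a ≤ r → r ≤ b → ∑ k : S, ‖w r k‖ ≤ A)
    (hB : ∀ r, a ≤ r → r ≤ b → ‖wt s (w r)‖ ≤ B) :
    ‖wt s (w b) - wt s (w a)‖ ≤ 3 ^ s * 3 * A ^ 2 * B * (b - a) := by
  have hB0 : 0 ≤ B := (norm_nonneg _).trans (hB a le_rfl hab)
  have hA0 : 0 ≤ A := le_trans (Finset.sum_nonneg fun _ _ => norm_nonneg _) (hA a le_rfl hab)
  set d := wt s (w b) - wt s (w a) with hd
  have hw := weak h (wt s d) a b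
  have e : ∑ k : S, (w b k - w a k) * (starRingEnd ℂ) (wt s d k) = ((‖d‖ ^ 2 : ℝ) : ℂ) := by
    rw [norm_sq_sum]
    refine Finset.sum_congr rfl fun k _ => ?_
    rw [wt_apply, map_mul, Complex.conj_ofReal, hd, PiLp.sub_apply, wt_apply, wt_apply]
    ring
  rw [e] at hw
  have hn : ‖d‖ ^ 2 ≤ (3 ^ s * 3 * A ^ 2 * B * ‖d‖) * |b - a| := by
    have : ‖((‖d‖ ^ 2 : ℝ) : ℂ)‖ ≤ (3 ^ s * 3 * A ^ 2 * B * ‖d‖) * |b - a| := by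
      rw [hw]
      apply intervalIntegral.norm_integral_le_of_norm_le_const
      intro r hr
      rw [Set.uIoc_of_le hab] at hr
      rw [norm_mul, norm_mul, Complex.norm_I, one_mul, Complex.norm_real, Real.norm_eq_abs]
      calc |μ| * _ ≤ 1 * _ := by gcongr
        _ = _ := one_mul _
        _ ≤ _ := pair_quad _ _ _
        _ ≤ _ := quad_wt s hs (w r) d (hA r hr.1.le hr.2)
        _ ≤ _ := by gcongr; exact hB r hr.1.le hr.2
    rw [Complex.norm_real, Real.norm_of_nonneg (by positivity)] at this
    exact this
  rw [abs_of_nonneg (by linarith)] at hn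
  have h0 : 0 ≤ b - a := by linarith
  apply le_of_sq_le_mul (by positivity) (norm_nonneg _)
  linarith

theorem wt_crude {S : Finset ℤ} (s : ℝ) (z : ES S) : ‖wt s z‖ ≤ (∑ k : S, jbr (k:ℤ) ^ s) * ‖z‖ := by
  have h0 : 0 ≤ ∑ k : S, jbr (k:ℤ) ^ s := Finset.sum_nonneg fun _ _ => jbr_nn _ _
  apply le_of_sq_le_sq _ (by positivity)
  rw [norm_wt, mul_pow, EuclideanSpace.norm_sq_eq, Finset.mul_sum]
  refine Finset.sum_le_sum fun k _ => ?_
  rw [jbr_two]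
  have := Finset.single_le_sum (f := fun k : S => jbr (k:ℤ) ^ s) (fun _ _ => jbr_nn _ _) (Finset.mem_univ k)
  have := jbr_nn (k:ℤ) s
  gcongr

theorem hs_high (A R s : ℝ) (hA : 0 ≤ A) (hR : 0 ≤ R) (hs : 0 ≤ s) :
    ∃ K : ℝ, 0 ≤ K ∧ ∀ (S : Finset ℤ) (μ : ℝ), |μ| ≤ 1 → ∀ w : ℝ → ES S, IsSol μ w →
      (∀ t, |t| ≤ R → ∑ k : S, ‖w t k‖ ≤ A) →
      (∀ t, |t| ≤ R → ‖wt s (w t)‖ ≤ K * ‖wt s (w 0)‖) ∧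
      Hol (fun t => wt s (w t)) (-R) R (K * ‖wt s (w 0)‖) := by
  set κ := (3:ℝ) ^ s * 3 * A ^ 2 with hκ
  have hκ0 : 0 ≤ κ := by positivity
  set T := (1 / (6 * κ + 1)) ^ 2 with hT
  have hsT : √T = 1 / (6 * κ + 1) := Real.sqrt_sq (by positivity)
  have hT0 : 0 < T := by positivity
  have hsT1 : √T ≤ 1 := by
    rw [hsT, div_le_one (by positivity)]; linarith
  obtain ⟨K, hK, H⟩ := lemZ κ T R hκ0 hT0 (by
    rw [hsT, mul_one_div, div_le_one (by positivity)]; linarith) hR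
  refine ⟨K, hK, ?_⟩
  intro S μ hμ w hw hwA
  refine H S (fun t => wt s (w t)) ((∑ k : S, jbr (k:ℤ) ^ s) * ((S.card * ‖w 0‖) ^ 3 * S.card)) ?_ ?_ ?_
  · have h0 : 0 ≤ ∑ k : S, jbr (k:ℤ) ^ s := Finset.sum_nonneg fun _ _ => jbr_nn _ _
    positivity
  · intro r t _ hst _
    have h0 : 0 ≤ ∑ k : S, jbr (k:ℤ) ^ s := Finset.sum_nonneg fun _ _ => jbr_nn _ _
    have q1 := lip_sol hμ hw (M := ‖w 0‖) (fun t => (mass hw t).le) hst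
    simp only [← wt_sub]
    refine (wt_crude _ _).trans ?_
    rw [mul_assoc]
    gcongr
  · intro a b Λ ha hab hb hbT hΛ hH r t q1 q2 q3
    have hB : ∀ x, r ≤ x → x ≤ t → ‖wt s (w x)‖ ≤ ‖wt s (w a)‖ + 2 * √T * Λ := by
      intro x p1 p2
      have h3 := hH a x le_rfl (by linarith) (by linarith)
      have h4 : √(x - a) ≤ √T := sqrt_sub_le (by linarith)
      have h5 := norm_sub_norm_le (wt s (w x)) (wt s (w a))
      have h6 : Λ * √(x - a) ≤ Λ * √T := by gcongr
      have h7 : 0 ≤ Λ * √T := by positivity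
      simp only at h3
      linarith
    have := wt_diff hμ hw s hs q2 (A := A) (fun x p1 p2 => hwA x (abs_le.mpr ⟨by linarith, by linarith⟩)) hB
    refine this.trans ?_
    have hq : √(t - r) ≤ 1 := (sqrt_sub_le (by linarith)).trans hsT1
    have hle : t - r ≤ √(t - r) := by
      have := Real.mul_self_sqrt (by linarith : 0 ≤ t - r)
      nlinarith [Real.sqrt_nonneg (t - r)]
    gcongr

theorem summ_jbr : Summable fun k : ℤ => jbr (k:ℝ) ^ (-(3/2) : ℝ) := by
  have h1 := Real.summable_abs_int_rpow (b := 3/2) (by norm_num)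
  have h2 : Summable fun k : ℤ => (if k = 0 then (1:ℝ) else 0) :=
    summable_of_ne_finset_zero (s := {0}) (by intro b hb; simp at hb; simp [hb])
  refine Summable.of_nonneg_of_le (fun k => jbr_nn _ _) (fun k => ?_) (h1.add h2)
  by_cases hk : k = 0
  · subst hk
    simp [jbr]
  · simp only [hk, if_false, add_zero]
    have : 0 < |(k:ℝ)| := by simpa using hk
    apply Real.rpow_le_rpow_of_nonpos this _ (by norm_num)
    unfold jbr; rw [← Real.sqrt_sq_eq_abs]; apply Real.sqrt_le_sqrt; linarith

theorem l1_bound : ∃ C : ℝ, 0 ≤ C ∧ ∀ (S : Finset ℤ) (z : ES S),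
    ∑ k : S, ‖z k‖ ≤ C * √(∑ k : S, jbr (k:ℤ) ^ (2 * (3/4) : ℝ) * ‖z k‖ ^ 2) := by
  refine ⟨√(∑' k : ℤ, jbr (k:ℝ) ^ (-(3/2) : ℝ)), Real.sqrt_nonneg _, ?_⟩
  intro S z
  have e : ∀ k : S, ‖z k‖ = jbr (k:ℤ) ^ (-(3/4) : ℝ) * (jbr (k:ℤ) ^ (3/4 : ℝ) * ‖z k‖) := by
    intro k
    rw [← mul_assoc, ← Real.rpow_add (by linarith [jbr_pos' (k:ℤ)])]
    norm_num
  rw [Finset.sum_congr rfl (fun k _ => e k)]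
  refine (Real.sum_mul_le_sqrt_mul_sqrt _ _ _).trans ?_
  have e2 : ∀ k : S, (jbr (k:ℤ) ^ (3/4 : ℝ) * ‖z k‖) ^ 2 = jbr (k:ℤ) ^ (2 * (3/4) : ℝ) * ‖z k‖ ^ 2 := by
    intro k; rw [mul_pow, jbr_two]
  simp_rw [e2]
  gcongr
  have e3 : ∀ k : S, (jbr (k:ℤ) ^ (-(3/4) : ℝ)) ^ 2 = jbr (k:ℤ) ^ (-(3/2) : ℝ) := by
    intro k; rw [← jbr_two]; norm_num
  simp_rw [e3]
  rw [Finset.sum_coe_sort S (fun k : ℤ => jbr (k:ℝ) ^ (-(3/2) : ℝ))]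
  exact summ_jbr.sum_le_tsum _ (fun k _ => jbr_nn _ _)

theorem hs_all (N R s₀ s₁ : ℝ) (hN : 0 ≤ N) (hR : 0 ≤ R) (h1 : 0 ≤ s₁) (h01 : s₁ < s₀) :
    ∃ K : ℝ, 0 ≤ K ∧ ∀ (S : Finset ℤ) (μ : ℝ), |μ| ≤ 1 → ∀ w : ℝ → ES S, IsSol μ w →
      ∑ k : S, jbr (k:ℤ) ^ (2 * s₀) * ‖w 0 k‖ ^ 2 ≤ N →
      (∀ t, |t| ≤ R → ∑ k : S, jbr (k:ℤ) ^ (2 * s₁) * ‖w t k‖ ^ 2 ≤ K) ∧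
      (∀ r t, -R ≤ r → r ≤ t → t ≤ R → ∑ k : S, jbr (k:ℤ) ^ (2 * s₁) * ‖(w t - w r) k‖ ^ 2 ≤
        K * (t - r)) := by
  have mono : ∀ s, s ≤ s₀ → ∀ (S : Finset ℤ) (z : ES S),
      ∑ k : S, jbr (k:ℤ) ^ (2 * s) * ‖z k‖ ^ 2 ≤ ∑ k : S, jbr (k:ℤ) ^ (2 * s₀) * ‖z k‖ ^ 2 := by
    intro s hs S z
    refine Finset.sum_le_sum fun k _ => ?_
    gcongr
    exact jbr_pos' _
  have hM : ∀ (S : Finset ℤ) (z : ES S), ∑ k : S, jbr (k:ℤ) ^ (2 * s₀) * ‖z k‖ ^ 2 ≤ N → ‖z‖ ≤ √N + 1 := by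
    intro S z hz
    have := (mono 0 (by linarith) S z).trans hz
    simp only [mul_zero, Real.rpow_zero, one_mul, ← EuclideanSpace.norm_sq_eq] at this
    have := Real.le_sqrt_of_sq_le this
    linarith
  have hM1 : 1 ≤ √N + 1 := by linarith [Real.sqrt_nonneg N]
  rcases lt_or_ge s₁ 1 with hlt | hge
  · obtain ⟨K, hK, H⟩ := hs_low (√N + 1) R s₁ (min s₀ 1) hM1 hR h1 (lt_min h01 hlt) (min_le_right _ _)
    refine ⟨K * N, by positivity, ?_⟩
    intro S μ hμ w hw hw0
    have G := H S μ hμ w hw (hM S _ hw0)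
    have hm := (mono (min s₀ 1) (min_le_left _ _) S (w 0)).trans hw0
    refine ⟨fun t ht => (G.1 t ht).trans (by gcongr), fun r t a b c => (G.2 r t a b c).trans ?_⟩
    have : 0 ≤ t - r := by linarith
    gcongr
  · obtain ⟨K, hK, H⟩ := hs_low (√N + 1) R (3/4) 1 hM1 hR (by norm_num) (by norm_num) le_rfl
    obtain ⟨C, hC, HC⟩ := l1_bound
    obtain ⟨K', hK', H'⟩ := hs_high (C * √(K * N)) R s₁ (by positivity) hR h1
    refine ⟨K' ^ 2 * N, by positivity, ?_⟩
    intro S μ hμ w hw hw0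
    have G := H S μ hμ w hw (hM S _ hw0)
    have hm := (mono 1 (by linarith) S (w 0)).trans hw0
    have G' := H' S μ hμ w hw (fun t ht => (HC S (w t)).trans (by
      gcongr
      exact (G.1 t ht).trans (by gcongr)))
    have hm1 : ‖wt s₁ (w 0)‖ ^ 2 ≤ N := by
      rw [norm_wt]; exact (mono s₁ h01.le S (w 0)).trans hw0
    refine ⟨fun t ht => ?_, fun r t a b c => ?_⟩
    · rw [← norm_wt]
      have := pow_le_pow_left₀ (norm_nonneg _) (G'.1 t ht) 2
      rw [mul_pow] at this
      exact this.trans (by gcongr)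
    · have q := pow_le_pow_left₀ (norm_nonneg _) (G'.2 r t a b c) 2
      simp only at q
      rw [mul_pow, mul_pow, Real.sq_sqrt (by linarith), ← wt_sub, norm_wt] at q
      have : 0 ≤ t - r := by linarith
      exact q.trans (by gcongr)


def SF (τ : ℝ) : Finset ℤ := Finset.Icc (-⌊τ ^ (-(1 : ℝ) / 2)⌋) ⌊τ ^ (-(1 : ℝ) / 2)⌋

theorem mem_SF (τ : ℝ) (k : ℤ) : k ∈ SF τ ↔ |(k : ℝ)| ≤ τ ^ (-(1 : ℝ) / 2) := by
  unfold SF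
  rw [Finset.mem_Icc, abs_le, Int.le_floor, neg_le, Int.le_floor]
  push_cast
  constructor
  · rintro ⟨h1, h2⟩; exact ⟨by linarith, h2⟩
  · rintro ⟨h1, h2⟩; exact ⟨by linarith, h2⟩

theorem projC_eq (τ : ℝ) (f : Torus → ℂ) (x : Torus) :
    projC τ f x = ∑ k ∈ SF τ, fourierCoeff f k * fourier k x := by
  unfold projC
  rw [tsum_eq_sum (s := SF τ)]
  · refine Finset.sum_congr rfl fun k hk => ?_
    rw [if_pos ((mem_SF τ k).mp hk)]
  · intro k hk
    rw [if_neg (fun h => hk ((mem_SF τ k).mpr h))]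

theorem coeff_poly (S : Finset ℤ) (a : ℤ → ℂ) (k : ℤ) :
    fourierCoeff (fun x : Torus => ∑ j ∈ S, a j * fourier j x) k = if k ∈ S then a k else 0 := by
  unfold fourierCoeff
  simp_rw [Finset.smul_sum]
  rw [integral_finsetSum]
  · have : ∀ j ∈ S, ∫ x : Torus, fourier (-k) x • (a j * fourier j x) ∂haarAddCircle
        = if j = k then a j else 0 := by
      intro j _
      have h1 : ∀ x : Torus, fourier (-k) x • (a j * fourier j x) = a j * fourier (-k + j) x := by
        intro x; rw [fourier_add, smul_eq_mul]; ring
      simp_rw [h1]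
      have h2 : ∫ x : Torus, fourier (-k + j) x ∂haarAddCircle = if (-k + j) = 0 then (1:ℂ) else 0 :=
        fourier_int (-k + j)
      rw [integral_const_mul, h2]
      by_cases h : j = k
      · simp [h]
      · rw [if_neg (by omega), if_neg h, mul_zero]
    rw [Finset.sum_congr rfl this, Finset.sum_ite_eq']
  · intro j _
    apply integrable_cont
    exact ((fourier (T := 2 * Real.pi) _).continuous).smul
      (continuous_const.mul (fourier (T := 2 * Real.pi) _).continuous)

theorem coeff_projC (τ : ℝ) (f : Torus → ℂ) (k : ℤ) :
    fourierCoeff (projC τ f) k = if k ∈ SF τ then fourierCoeff f k else 0 := by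
  rw [← coeff_poly (SF τ) (fun k => fourierCoeff f k) k]
  congr 1
  ext x
  exact projC_eq τ f x

theorem schrod_projC (t τ : ℝ) (f : Torus → ℂ) (x : Torus) :
    schrod t (projC τ f) x =
      ∑ k ∈ SF τ, Complex.exp (-Complex.I * t * (k : ℂ) ^ 2) * fourierCoeff f k * fourier k x := by
  unfold schrod
  rw [tsum_eq_sum (s := SF τ)]
  · refine Finset.sum_congr rfl fun k hk => ?_
    rw [coeff_projC, if_pos hk]
  · intro k hk
    rw [coeff_projC, if_neg hk]; simp

theorem coeff_le (g : Torus → ℂ) (hg : MemLp g 2 haarAddCircle) (k : ℤ) :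
    ‖fourierCoeff g k‖ ≤ (eLpNorm g 2 haarAddCircle).toReal := by
  unfold fourierCoeff
  refine (norm_integral_le_integral_norm _).trans ?_
  have e : ∀ x : Torus, ‖fourier (-k) x • g x‖ = ‖g x‖ := by
    intro x; rw [norm_smul, norm_fourier, one_mul]
  simp_rw [e]
  have h1 : MemLp g 1 haarAddCircle := hg.mono_exponent (by norm_num)
  have h2 : ∫ x, ‖g x‖ ∂haarAddCircle = (eLpNorm g 1 haarAddCircle).toReal := by
    rw [eLpNorm_one_eq_lintegral_enorm, integral_norm_eq_lintegral_enorm hg.1]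
  rw [h2]
  exact ENNReal.toReal_mono hg.2.ne (eLpNorm_le_eLpNorm_of_exponent_le (by norm_num) hg.1)

theorem coeff_sub (f g : Torus → ℂ) (hf : MemLp f 2 haarAddCircle) (hg : MemLp g 2 haarAddCircle) (k : ℤ) :
    fourierCoeff (f - g) k = fourierCoeff f k - fourierCoeff g k := by
  have hi : ∀ f : Torus → ℂ, MemLp f 2 haarAddCircle →
      Integrable (fun x => fourier (-k) x • f x) haarAddCircle := by
    intro f hf
    have h1 : Integrable f haarAddCircle := memLp_one_iff_integrable.mp (hf.mono_exponent (by norm_num))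
    refine h1.bdd_mul (c := 1) (fourier (T := 2 * Real.pi) (-k)).continuous.aestronglyMeasurable ?_
    exact Filter.Eventually.of_forall fun x => (norm_fourier _ _).le
  unfold fourierCoeff
  rw [← integral_sub (hi f hf) (hi g hg)]
  simp only [Pi.sub_apply, smul_sub]

theorem coeff_cont (v : ℝ → Torus → ℂ) (hv : ContL2On Set.univ v) (k : ℤ) :
    Continuous fun t => fourierCoeff (v t) k := by
  rw [continuous_iff_continuousAt]
  intro t
  have hlim := hv.2 t (Set.mem_univ t)
  rw [nhdsWithin_univ] at hlim
  have h2 : Tendsto (fun t' => (eLpNorm (v t' - v t) 2 haarAddCircle).toReal) (𝓝 t) (𝓝 0) := by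
    have := (ENNReal.tendsto_toReal ENNReal.zero_ne_top).comp hlim
    rw [ENNReal.toReal_zero] at this; exact this
  rw [ContinuousAt, tendsto_iff_norm_sub_tendsto_zero]
  refine squeeze_zero (fun _ => norm_nonneg _) (fun t' => ?_) h2
  rw [← coeff_sub _ _ (hv.1 t' (Set.mem_univ _)) (hv.1 t (Set.mem_univ _))]
  exact coeff_le _ ((hv.1 t' (Set.mem_univ _)).sub (hv.1 t (Set.mem_univ _))) k

theorem to_sol {μ τ : ℝ} {u₀ : Torus → ℂ} {v : ℝ → Torus → ℂ} (hv : IsProjSolution μ τ u₀ v) :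
    ∃ w : ℝ → ES (SF τ), IsSol μ w ∧ (∀ k : SF τ, w 0 k = fourierCoeff u₀ k) ∧
      (∀ t (k : SF τ), fourierCoeff (v t) k = Complex.exp (-Complex.I * t * ((k:ℤ) : ℂ) ^ 2) * w t k) ∧
      (∀ t, ∀ k ∉ SF τ, fourierCoeff (v t) k = 0) := by
  obtain ⟨hc, hm⟩ := hv
  have hcc := coeff_cont v hc
  set F : ℤ → ℝ → ℂ := fun k s => fourierCoeff (cubic (projC τ (v s))) k with hF
  have hFc : ∀ k, Continuous (F k) := by
    intro k
    have hj : Continuous (Function.uncurry fun (s : ℝ) (x : Torus) =>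
        fourier (-k) x • cubic (projC τ (v s)) x) := by
      unfold cubic Function.uncurry
      simp only [projC_eq]
      have h1 : Continuous fun p : ℝ × Torus => ∑ k ∈ SF τ, fourierCoeff (v p.1) k * fourier k p.2 := by
        apply continuous_finsetSum
        intro j _
        exact ((hcc j).comp continuous_fst).mul ((fourier (T := 2 * Real.pi) j).continuous.comp continuous_snd)
      exact ((fourier (T := 2 * Real.pi) (-k)).continuous.comp continuous_snd).smul
        (((Complex.continuous_ofReal.comp h1.norm).pow 2).mul h1)
    exact cont_inner hj
  have expc : ∀ k : ℤ, Continuous fun s : ℝ => Complex.exp (Complex.I * s * (k:ℂ) ^ 2) := by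
    intro k; fun_prop
  set G : ℤ → ℝ → ℂ := fun k t => fourierCoeff u₀ k + Complex.I * μ *
    ∫ s in (0:ℝ)..t, Complex.exp (Complex.I * s * (k:ℂ) ^ 2) * F k s with hG
  have hvx : ∀ t, v t = fun x => ∑ k ∈ SF τ, (Complex.exp (-Complex.I * t * (k : ℂ) ^ 2) * G k t) * fourier k x := by
    intro t
    ext x
    rw [hm t x, schrod_projC]
    have h1 : ∀ s : ℝ, schrod (t - s) (projCubic τ (v s)) x = ∑ k ∈ SF τ,
        (Complex.exp (-Complex.I * t * (k : ℂ) ^ 2) * fourier k x) *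
          (Complex.exp (Complex.I * s * (k:ℂ) ^ 2) * F k s) := by
      intro s
      rw [projCubic, schrod_projC]
      refine Finset.sum_congr rfl fun k _ => ?_
      have : Complex.exp (-Complex.I * ((t - s : ℝ) : ℂ) * (k : ℂ) ^ 2) =
          Complex.exp (-Complex.I * t * (k : ℂ) ^ 2) * Complex.exp (Complex.I * s * (k:ℂ) ^ 2) := by
        rw [← Complex.exp_add]; push_cast; ring_nf
      rw [this, hF]; ring
    simp_rw [h1]
    rw [intervalIntegral.integral_finsetSum]
    · rw [Finset.mul_sum, ← Finset.sum_add_distrib]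
      refine Finset.sum_congr rfl fun k _ => ?_
      rw [intervalIntegral.integral_const_mul, hG]
      ring
    · intro k _
      exact (continuous_const.mul ((expc k).mul (hFc k))).intervalIntegrable _ _
  have hcoef : ∀ t k, fourierCoeff (v t) k = if k ∈ SF τ then
      Complex.exp (-Complex.I * t * (k : ℂ) ^ 2) * G k t else 0 := by
    intro t k
    rw [hvx t, coeff_poly (SF τ) (fun k => Complex.exp (-Complex.I * t * (k : ℂ) ^ 2) * G k t) k]
  have hGd : ∀ (k : ℤ) (t : ℝ), HasDerivAt (G k) (Complex.I * μ * (Complex.exp (Complex.I * t * (k:ℂ) ^ 2) * F k t)) t := by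
    intro k t
    have hcont := (expc k).mul (hFc k)
    exact ((intervalIntegral.integral_hasDerivAt_right (hcont.intervalIntegrable _ _)
      (hcont.stronglyMeasurableAtFilter _ _) hcont.continuousAt).const_mul _).const_add _
  refine ⟨fun t => WithLp.toLp 2 (fun k : SF τ => G k t), ⟨?_, ?_⟩, ?_, ?_, ?_⟩
  · refine (PiLp.continuous_toLp 2 _).comp (continuous_pi fun k => ?_)
    exact continuous_iff_continuousAt.mpr fun t => (hGd k t).continuousAt
  · intro k t
    refine (hGd k t).congr_deriv ?_
    congr 2
    have hU : ∀ x, UU (S := SF τ) (WithLp.toLp 2 (fun k : SF τ => G k t)) t x = projC τ (v t) x := by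
      intro x
      rw [projC_eq, UU, ← Finset.sum_coe_sort (SF τ) (fun k => fourierCoeff (v t) k * fourier k x)]
      refine Finset.sum_congr rfl fun k _ => ?_
      rw [hcoef, if_pos k.2]
      ring
    simp only [hF, fourierCoeff]
    refine integral_congr_ae (Filter.Eventually.of_forall fun x => ?_)
    simp only
    rw [hU, fourier_neg, smul_eq_mul, mul_comm]
    rfl
  · intro k
    simp [hG]
  · intro t k
    rw [hcoef, if_pos k.2]
  · intro t k hk
    rw [hcoef, if_neg hk]


theorem exp_orth (τ : ℝ) (hτ : 0 < τ) (κ : ℝ) (m n : ℤ) :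
    ∫ σ in (-(Real.pi / τ))..(Real.pi / τ),
      Complex.exp (Complex.I * m * τ * ((σ - κ : ℝ) : ℂ)) *
        (starRingEnd ℂ) (Complex.exp (Complex.I * n * τ * ((σ - κ : ℝ) : ℂ)))
      = if m = n then ((2 * Real.pi / τ : ℝ) : ℂ) else 0 := by
  have hτ' : (τ : ℂ) ≠ 0 := by exact_mod_cast hτ.ne'
  have e : ∀ σ : ℝ, Complex.exp (Complex.I * m * τ * ((σ - κ : ℝ) : ℂ)) *
        (starRingEnd ℂ) (Complex.exp (Complex.I * n * τ * ((σ - κ : ℝ) : ℂ))) =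
      Complex.exp (-(Complex.I * (m - n) * τ * κ)) * Complex.exp ((Complex.I * (m - n) * τ) * σ) := by
    intro σ
    rw [← Complex.exp_conj, ← Complex.exp_add, ← Complex.exp_add]
    congr 1
    simp only [map_mul, Complex.conj_I, Complex.conj_ofReal, map_intCast]
    push_cast; ring
  simp_rw [e]
  split_ifs with h
  · subst h
    simp
    field_simp
    norm_num
  · have hmn : (m : ℂ) - n ≠ 0 := by
      rw [sub_ne_zero]; exact_mod_cast h
    rw [intervalIntegral.integral_const_mul, integral_exp_mul_complex (by simp [hmn, hτ'])]
    have : Complex.exp (Complex.I * (m - n) * τ * ((Real.pi / τ : ℝ) : ℂ)) =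
        Complex.exp (Complex.I * (m - n) * τ * ((-(Real.pi / τ) : ℝ) : ℂ)) := by
      rw [Complex.exp_eq_exp_iff_exists_int]
      refine ⟨m - n, ?_⟩
      push_cast
      field_simp
      ring
    rw [this]; simp

theorem parseval (τ : ℝ) (hτ : 0 < τ) (κ : ℝ) (F : Finset ℤ) (β : ℤ → ℂ) :
    ∫ σ in (-(Real.pi / τ))..(Real.pi / τ),
      ‖∑ m ∈ F, β m * Complex.exp (Complex.I * m * τ * ((σ - κ : ℝ) : ℂ))‖ ^ 2
      = 2 * Real.pi / τ * ∑ m ∈ F, ‖β m‖ ^ 2 := by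
  have key : ∫ σ in (-(Real.pi / τ))..(Real.pi / τ),
      ((‖∑ m ∈ F, β m * Complex.exp (Complex.I * m * τ * ((σ - κ : ℝ) : ℂ))‖ ^ 2 : ℝ) : ℂ)
      = ((2 * Real.pi / τ * ∑ m ∈ F, ‖β m‖ ^ 2 : ℝ) : ℂ) := by
    have e : ∀ σ : ℝ, ((‖∑ m ∈ F, β m * Complex.exp (Complex.I * m * τ * ((σ - κ : ℝ) : ℂ))‖ ^ 2 : ℝ) : ℂ)
        = ∑ m ∈ F, ∑ n ∈ F, (β m * (starRingEnd ℂ) (β n)) *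
          (Complex.exp (Complex.I * m * τ * ((σ - κ : ℝ) : ℂ)) *
            (starRingEnd ℂ) (Complex.exp (Complex.I * n * τ * ((σ - κ : ℝ) : ℂ)))) := by
      intro σ
      rw [Complex.ofReal_pow, ← Complex.mul_conj', map_sum, Finset.sum_mul_sum]
      refine Finset.sum_congr rfl fun m _ => Finset.sum_congr rfl fun n _ => ?_
      rw [map_mul]; ring
    simp_rw [e]
    have cc : ∀ m n : ℤ, Continuous fun σ : ℝ => (β m * (starRingEnd ℂ) (β n)) *
          (Complex.exp (Complex.I * m * τ * ((σ - κ : ℝ) : ℂ)) *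
            (starRingEnd ℂ) (Complex.exp (Complex.I * n * τ * ((σ - κ : ℝ) : ℂ)))) := by
      intro m n
      refine continuous_const.mul ((by fun_prop : Continuous _).mul (Complex.continuous_conj.comp (by fun_prop)))
    rw [intervalIntegral.integral_finsetSum]
    · rw [Complex.ofReal_mul, Complex.ofReal_sum, Finset.mul_sum]
      refine Finset.sum_congr rfl fun m hmF => ?_
      rw [intervalIntegral.integral_finsetSum]
      · simp_rw [intervalIntegral.integral_const_mul, exp_orth τ hτ κ]
        simp only [mul_ite, mul_zero, Finset.sum_ite_eq, hmF, if_true]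
        rw [Complex.mul_conj']
        push_cast; ring
      · intro n _; exact (cc m n).intervalIntegrable _ _
    · intro m _
      exact (continuous_finsetSum _ fun n _ => cc m n).intervalIntegrable _ _
  rw [intervalIntegral.integral_ofReal] at key
  exact_mod_cast key

theorem dyadic (z : ℂ) (hz : ‖z‖ = 1) (h1 : z ≠ 1) :
    ∃ j : ℕ, 2 ≤ ‖z ^ (2 ^ j) - 1‖ ^ 2 ∧ 2 ^ j * ‖z - 1‖ ≤ 4 := by
  set θ := z.arg with hθ
  have hzθ : z = Complex.exp (θ * Complex.I) := by
    have := Complex.norm_mul_exp_arg_mul_I z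
    rw [hz] at this
    simpa using this.symm
  have h0 : θ ≠ 0 := by
    intro h; rw [h] at hzθ; simp at hzθ; exact h1 hzθ
  have hpos : 0 < |θ| := abs_pos.mpr h0
  have hle : |θ| ≤ Real.pi := Complex.abs_arg_le_pi z
  have hex : ∃ j : ℕ, Real.pi / 2 ≤ 2 ^ j * |θ| := by
    obtain ⟨n, hn⟩ := pow_unbounded_of_one_lt (Real.pi / 2 / |θ|) (by norm_num : (1:ℝ) < 2)
    refine ⟨n, ?_⟩
    rw [div_lt_iff₀ hpos] at hn
    exact hn.le
  classical
  have hj := Nat.find_spec hex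
  have hj' : 2 ^ (Nat.find hex) * |θ| ≤ Real.pi := by
    rcases Nat.eq_zero_or_pos (Nat.find hex) with h | h
    · rw [h]; simpa using hle
    · have := Nat.find_min hex (Nat.sub_lt h one_pos)
      rw [not_le] at this
      have e : (2:ℝ) ^ (Nat.find hex) = 2 * 2 ^ (Nat.find hex - 1) := by
        rw [← pow_succ']; congr 1; omega
      rw [e]; linarith
  refine ⟨Nat.find hex, ?_, ?_⟩
  · set j := Nat.find hex
    have : z ^ (2 ^ j) = Complex.exp (((2 ^ j * θ : ℝ) : ℂ) * Complex.I) := by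
      rw [hzθ, ← Complex.exp_nat_mul]; congr 1; push_cast; ring
    rw [this, norm_exp_sub_one_sq]
    have hc : Real.cos (2 ^ j * θ) ≤ 0 := by
      rw [← Real.cos_abs, abs_mul, abs_of_pos (by positivity : (0:ℝ) < 2 ^ j)]
      exact Real.cos_nonpos_of_pi_div_two_le_of_le hj (by linarith [Real.pi_pos])
    linarith
  · have : ‖z - 1‖ ≤ |θ| := by
      have h2 := norm_exp_sub_one_sq θ
      rw [← hzθ] at h2
      have h3 := Real.one_sub_sq_div_two_le_cos (x := θ)
      refine abs_le_of_sq_le_sq' ?_ (abs_nonneg _) |>.2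
      rw [sq_abs]; linarith
    have h4 : 2 ^ (Nat.find hex) * ‖z - 1‖ ≤ 2 ^ (Nat.find hex) * |θ| := by gcongr
    linarith [Real.pi_le_four]

theorem jbr_le (x : ℝ) (hx : 0 ≤ x) : jbr x ^ (2 * (3 / 8) : ℝ) ≤ 1 + x ^ (3 / 4 : ℝ) := by
  have h1 : jbr x ≤ 1 + x := by
    unfold jbr
    rw [Real.sqrt_le_left (by linarith)]
    nlinarith
  have h0 : 0 ≤ jbr x := by linarith [jbr_pos' x]
  calc jbr x ^ (2 * (3 / 8) : ℝ) ≤ (1 + x) ^ (2 * (3 / 8) : ℝ) := by gcongr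
    _ = (1 + x) ^ (3 / 4 : ℝ) := by norm_num
    _ ≤ 1 ^ (3 / 4 : ℝ) + x ^ (3 / 4 : ℝ) :=
        Real.rpow_add_le_add_rpow (by norm_num) hx (by norm_num) (by norm_num)
    _ = _ := by simp

theorem four_pow : (4 : ℝ) ^ (3 / 4 : ℝ) ≤ 4 := by
  calc (4 : ℝ) ^ (3 / 4 : ℝ) ≤ 4 ^ (1 : ℝ) := Real.rpow_le_rpow_of_exponent_le (by norm_num) (by norm_num)
    _ = 4 := by simp

theorem ptwise (τ : ℝ) (hτ : 0 < τ) (J : ℕ) (hJ : 1 < 2 ^ (J + 1) * τ) (z : ℂ) (hz : ‖z‖ = 1) :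
    jbr (‖z - 1‖ / τ) ^ (2 * (3 / 8) : ℝ) ≤
      5 * (1 + ∑ j ∈ Finset.range (J + 1), (2 ^ j * τ) ^ (-(3 / 4) : ℝ) * ‖z ^ (2 ^ j) - 1‖ ^ 2) := by
  have hs : 0 ≤ ∑ j ∈ Finset.range (J + 1), (2 ^ j * τ) ^ (-(3 / 4) : ℝ) * ‖z ^ (2 ^ j) - 1‖ ^ 2 :=
    Finset.sum_nonneg fun j _ => by positivity
  refine (jbr_le _ (by positivity)).trans ?_
  by_cases h1 : z = 1
  · rw [h1, sub_self, norm_zero, zero_div, Real.zero_rpow (by norm_num)]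
    rw [h1] at hs; linarith
  obtain ⟨j, hj1, hj2⟩ := dyadic z hz h1
  have hg : ‖z - 1‖ / τ ≤ 4 * (2 ^ j * τ)⁻¹ := by
    rw [← div_eq_mul_inv, div_le_div_iff₀ hτ (by positivity)]
    nlinarith
  have hg2 : (‖z - 1‖ / τ) ^ (3 / 4 : ℝ) ≤ 4 * (2 ^ j * τ) ^ (-(3 / 4) : ℝ) := by
    calc (‖z - 1‖ / τ) ^ (3 / 4 : ℝ) ≤ (4 * (2 ^ j * τ)⁻¹) ^ (3 / 4 : ℝ) := by gcongr
      _ = 4 ^ (3 / 4 : ℝ) * (2 ^ j * τ) ^ (-(3 / 4) : ℝ) := by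
          rw [Real.mul_rpow (by norm_num) (by positivity), Real.inv_rpow (by positivity),
            Real.rpow_neg (by positivity)]
      _ ≤ _ := by gcongr; exact four_pow
  by_cases hjJ : j < J + 1
  · have := Finset.single_le_sum (f := fun j => (2 ^ j * τ) ^ (-(3 / 4) : ℝ) * ‖z ^ (2 ^ j) - 1‖ ^ 2)
      (fun j _ => by positivity) (Finset.mem_range.mpr hjJ)
    have h5 : (2 ^ j * τ) ^ (-(3 / 4) : ℝ) * 2 ≤ (2 ^ j * τ) ^ (-(3 / 4) : ℝ) * ‖z ^ (2 ^ j) - 1‖ ^ 2 := by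
      gcongr
    have h6 : 0 ≤ (2 ^ j * τ) ^ (-(3 / 4) : ℝ) := by positivity
    linarith
  · have h7 : (1:ℝ) ≤ 2 ^ j * τ := by
      have : (2:ℝ) ^ (J + 1) ≤ 2 ^ j := pow_le_pow_right₀ (by norm_num) (by omega)
      nlinarith
    have h8 : (2 ^ j * τ) ^ (-(3 / 4) : ℝ) ≤ 1 := Real.rpow_le_one_of_one_le_of_nonpos h7 (by norm_num)
    linarith

theorem shift_sum (F : Finset ℤ) (a : ℤ → ℂ) (n : ℕ) (z : ℂ) (hz : z ≠ 0)
    (h0 : ∀ m ∉ F, a m = 0) (h1 : ∀ m ∉ F, a (m - n) = 0) :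
    (z ^ n - 1) * ∑ m ∈ F, a m * z ^ m = ∑ m ∈ F, (a (m - n) - a m) * z ^ m := by
  have e1 : z ^ n * ∑ m ∈ F, a m * z ^ m = ∑ m ∈ F, a (m - n) * z ^ m := by
    rw [← tsum_eq_sum (L := SummationFilter.unconditional ℤ) (s := F) (f := fun m => a (m - n) * z ^ m) (by intro m hm; simp [h1 m hm]),
      ← tsum_eq_sum (L := SummationFilter.unconditional ℤ) (s := F) (f := fun m => a m * z ^ m) (by intro m hm; simp [h0 m hm]),
      ← tsum_mul_left, ← (Equiv.addRight (n : ℤ)).tsum_eq (fun m => a (m - n) * z ^ m)]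
    refine tsum_congr fun m => ?_
    simp only [Equiv.coe_addRight, add_sub_cancel_right]
    rw [zpow_add₀ hz, zpow_natCast]; ring
  rw [sub_mul, e1, one_mul, ← Finset.sum_sub_distrib]
  refine Finset.sum_congr rfl fun m _ => by ring

theorem geom_bd (τ : ℝ) (hτ : 0 < τ) (J : ℕ) (hJ : 2 ^ J * τ ≤ 1) :
    ∑ j ∈ Finset.range (J + 1), (2 ^ j * τ) ^ (1 / 4 : ℝ) ≤ (1 - (2⁻¹ : ℝ) ^ (1 / 4 : ℝ))⁻¹ := by
  set r : ℝ := (2⁻¹ : ℝ) ^ (1 / 4 : ℝ) with hr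
  have r0 : 0 ≤ r := by positivity
  have r1 : r < 1 := Real.rpow_lt_one (by norm_num) (by norm_num) (by norm_num)
  rw [← Finset.sum_range_reflect]
  refine le_trans (Finset.sum_le_sum (g := fun j => r ^ j) fun j hj => ?_) ?_
  · rw [Finset.mem_range] at hj
    have : (2:ℝ) ^ (J + 1 - 1 - j) * τ ≤ (2⁻¹ : ℝ) ^ j := by
      have e : (2:ℝ) ^ J = 2 ^ (J + 1 - 1 - j) * 2 ^ j := by
        rw [← pow_add]; congr 1; omega
      rw [e] at hJ
      rw [inv_pow, ← one_div, le_div_iff₀ (by positivity)]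
      linarith
    calc ((2:ℝ) ^ (J + 1 - 1 - j) * τ) ^ (1 / 4 : ℝ) ≤ ((2⁻¹ : ℝ) ^ j) ^ (1 / 4 : ℝ) := by gcongr
      _ = r ^ j := by
        rw [hr, ← Real.rpow_natCast, ← Real.rpow_natCast, ← Real.rpow_mul (by norm_num),
          ← Real.rpow_mul (by norm_num), mul_comm]
  · rw [← tsum_geometric_of_lt_one r0 r1]
    exact (summable_geometric_of_lt_one r0 r1).sum_le_tsum _ (fun _ _ => by positivity)


theorem disc_one (τ : ℝ) (hτ : 0 < τ) (J : ℕ) (hJ2 : 1 < 2 ^ (J + 1) * τ)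
    (F : Finset ℤ) (κ : ℝ) (a : ℤ → ℂ) (h0 : ∀ m ∉ F, a m = 0)
    (h1 : ∀ j ≤ J, ∀ m ∉ F, a (m - 2 ^ j) = 0) :
    ∫ σ in (-(Real.pi / τ))..(Real.pi / τ), jbr ‖dtau τ (σ - κ)‖ ^ (2 * (3 / 8) : ℝ) *
        ‖(τ : ℂ) * ∑ m ∈ F, a m * Complex.exp (Complex.I * m * τ * ((σ - κ : ℝ) : ℂ))‖ ^ 2 ≤
      10 * Real.pi * τ * (∑ m ∈ F, ‖a m‖ ^ 2 + ∑ j ∈ Finset.range (J + 1),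
        (2 ^ j * τ) ^ (-(3 / 4) : ℝ) * ∑ m ∈ F, ‖a (m - 2 ^ j) - a m‖ ^ 2) := by
  have hpos : -(Real.pi / τ) ≤ Real.pi / τ := by
    have : 0 < Real.pi / τ := by have := Real.pi_pos; positivity
    linarith
  have cE : ∀ β : ℤ → ℂ, Continuous fun σ : ℝ =>
      ∑ m ∈ F, β m * Complex.exp (Complex.I * m * τ * ((σ - κ : ℝ) : ℂ)) := by
    intro β; fun_prop
  have cN : ∀ β : ℤ → ℂ, Continuous fun σ : ℝ =>
      ‖∑ m ∈ F, β m * Complex.exp (Complex.I * m * τ * ((σ - κ : ℝ) : ℂ))‖ ^ 2 :=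
    fun β => ((cE β).norm).pow 2
  have pt : ∀ σ : ℝ, jbr ‖dtau τ (σ - κ)‖ ^ (2 * (3 / 8) : ℝ) *
        ‖(τ : ℂ) * ∑ m ∈ F, a m * Complex.exp (Complex.I * m * τ * ((σ - κ : ℝ) : ℂ))‖ ^ 2 ≤
      5 * τ ^ 2 * (‖∑ m ∈ F, a m * Complex.exp (Complex.I * m * τ * ((σ - κ : ℝ) : ℂ))‖ ^ 2 +
        ∑ j ∈ Finset.range (J + 1), (2 ^ j * τ) ^ (-(3 / 4) : ℝ) *
          ‖∑ m ∈ F, (a (m - 2 ^ j) - a m) * Complex.exp (Complex.I * m * τ * ((σ - κ : ℝ) : ℂ))‖ ^ 2) := by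
    intro σ
    set z : ℂ := Complex.exp (Complex.I * τ * ((σ - κ : ℝ) : ℂ)) with hz
    have hz1 : ‖z‖ = 1 := by
      rw [hz, show Complex.I * τ * ((σ - κ : ℝ) : ℂ) = ((τ * (σ - κ) : ℝ) : ℂ) * Complex.I by
        push_cast; ring]
      exact Complex.norm_exp_ofReal_mul_I _
    have hz0 : z ≠ 0 := Complex.exp_ne_zero _
    have hzm : ∀ m : ℤ, Complex.exp (Complex.I * m * τ * ((σ - κ : ℝ) : ℂ)) = z ^ m := by
      intro m
      rw [hz, ← Complex.exp_int_mul]; congr 1; ring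
    simp_rw [hzm]
    have hd : ‖dtau τ (σ - κ)‖ = ‖z - 1‖ / τ := by
      rw [dtau, norm_div, Complex.norm_real, Real.norm_of_nonneg hτ.le]
    rw [hd, norm_mul, Complex.norm_real, Real.norm_of_nonneg hτ.le, mul_pow]
    set E := ∑ m ∈ F, a m * z ^ m with hE
    have hsh : ∀ j ∈ Finset.range (J + 1), (2 ^ j * τ) ^ (-(3 / 4) : ℝ) *
          ‖∑ m ∈ F, (a (m - 2 ^ j) - a m) * z ^ m‖ ^ 2 =
          ((2 ^ j * τ) ^ (-(3 / 4) : ℝ) * ‖z ^ (2 ^ j) - 1‖ ^ 2) * ‖E‖ ^ 2 := by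
      intro j hj
      have hj' : j ≤ J := by rw [Finset.mem_range] at hj; omega
      have := shift_sum F a (2 ^ j) z hz0 h0 (by
        intro m hm; have := h1 j hj' m hm; push_cast; exact this)
      push_cast at this
      rw [← this, norm_mul, mul_pow]; ring
    rw [Finset.sum_congr rfl hsh, ← Finset.sum_mul]
    have := mul_le_mul_of_nonneg_right (ptwise τ hτ J hJ2 z hz1)
      (by positivity : 0 ≤ τ ^ 2 * ‖E‖ ^ 2)
    refine this.trans (le_of_eq ?_)
    ring
  have cL : Continuous fun σ : ℝ => jbr ‖dtau τ (σ - κ)‖ ^ (2 * (3 / 8) : ℝ) *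
        ‖(τ : ℂ) * ∑ m ∈ F, a m * Complex.exp (Complex.I * m * τ * ((σ - κ : ℝ) : ℂ))‖ ^ 2 := by
    refine Continuous.mul ?_ (((continuous_const.mul (cE a)).norm).pow 2)
    refine Continuous.rpow_const ?_ (fun _ => Or.inr (by norm_num))
    unfold jbr dtau
    refine Real.continuous_sqrt.comp (continuous_const.add (Continuous.pow (Continuous.norm ?_) 2))
    exact Continuous.div_const (by fun_prop) _
  have cR : Continuous fun σ : ℝ => ∑ j ∈ Finset.range (J + 1), (2 ^ j * τ) ^ (-(3 / 4) : ℝ) *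
          ‖∑ m ∈ F, (a (m - 2 ^ j) - a m) * Complex.exp (Complex.I * m * τ * ((σ - κ : ℝ) : ℂ))‖ ^ 2 :=
    continuous_finsetSum _ fun j _ => continuous_const.mul (cN fun m => a (m - 2 ^ j) - a m)
  refine (intervalIntegral.integral_mono hpos (cL.intervalIntegrable _ _)
    ((continuous_const.mul ((cN a).add cR)).intervalIntegrable _ _) pt).trans (le_of_eq ?_)
  simp only [Pi.mul_apply, Pi.add_apply]
  rw [intervalIntegral.integral_const_mul, intervalIntegral.integral_add
    ((cN a).intervalIntegrable _ _) (cR.intervalIntegrable _ _), parseval τ hτ κ F a,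
    intervalIntegral.integral_finsetSum]
  · have : ∀ j : ℕ, ∫ σ in (-(Real.pi / τ))..(Real.pi / τ), (2 ^ j * τ) ^ (-(3 / 4) : ℝ) *
          ‖∑ m ∈ F, (a (m - 2 ^ j) - a m) * Complex.exp (Complex.I * m * τ * ((σ - κ : ℝ) : ℂ))‖ ^ 2 =
        2 * Real.pi / τ * ((2 ^ j * τ) ^ (-(3 / 4) : ℝ) * ∑ m ∈ F, ‖a (m - 2 ^ j) - a m‖ ^ 2) := by
      intro j
      rw [intervalIntegral.integral_const_mul, parseval τ hτ κ F (fun m => a (m - 2 ^ j) - a m)]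
      ring
    simp_rw [this]
    rw [← Finset.mul_sum, ← mul_add]
    field_simp
    ring
  · intro j _
    exact (continuous_const.mul (cN fun m => a (m - 2 ^ j) - a m)).intervalIntegrable _ _

theorem disc_cont (τ κ : ℝ) (F : Finset ℤ) (a : ℤ → ℂ) :
    Continuous fun σ : ℝ => jbr ‖dtau τ (σ - κ)‖ ^ (2 * (3 / 8) : ℝ) *
        ‖(τ : ℂ) * ∑ m ∈ F, a m * Complex.exp (Complex.I * m * τ * ((σ - κ : ℝ) : ℂ))‖ ^ 2 := by
  have cE : Continuous fun σ : ℝ =>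
      ∑ m ∈ F, a m * Complex.exp (Complex.I * m * τ * ((σ - κ : ℝ) : ℂ)) := by
    fun_prop
  refine Continuous.mul ?_ (((continuous_const.mul cE).norm).pow 2)
  refine Continuous.rpow_const ?_ (fun _ => Or.inr (by norm_num))
  unfold jbr dtau
  refine Real.continuous_sqrt.comp (continuous_const.add (Continuous.pow (Continuous.norm ?_) 2))
  exact Continuous.div_const (by fun_prop) _

theorem disc_main (τ : ℝ) (hτ : 0 < τ) (J : ℕ) (hJ1 : 2 ^ J * τ ≤ 1) (hJ2 : 1 < 2 ^ (J + 1) * τ)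
    (F S : Finset ℤ) (om : ℤ → ℝ) (hom : ∀ k, 0 ≤ om k) (a : S → ℤ → ℂ) (B : ℝ)
    (h0 : ∀ k, ∀ m ∉ F, a k m = 0)
    (h1 : ∀ k, ∀ j ≤ J, ∀ m ∉ F, a k (m - 2 ^ j) = 0)
    (hB : ∀ m ∈ F, ∑ k : S, om k * ‖a k m‖ ^ 2 ≤ B)
    (hB' : ∀ j ≤ J, ∀ m ∈ F, ∑ k : S, om k * ‖a k (m - 2 ^ j) - a k m‖ ^ 2 ≤ B * (2 ^ j * τ)) (hB0 : 0 ≤ B) :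
    ∫ σ in (-(Real.pi / τ))..(Real.pi / τ), ∑ k : S, om k * (jbr ‖dtau τ (σ - ((k : ℤ) : ℝ) ^ 2)‖ ^ (2 * (3 / 8) : ℝ) *
        ‖(τ : ℂ) * ∑ m ∈ F, a k m * Complex.exp (Complex.I * m * τ * ((σ - ((k : ℤ) : ℝ) ^ 2 : ℝ) : ℂ))‖ ^ 2) ≤
      10 * Real.pi * (τ * F.card) * B * (1 + (1 - (2⁻¹ : ℝ) ^ (1 / 4 : ℝ))⁻¹) := by
  rw [intervalIntegral.integral_finsetSum]
  swap
  · intro k _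
    exact (continuous_const.mul (disc_cont τ _ F (a k))).intervalIntegrable _ _
  simp_rw [intervalIntegral.integral_const_mul]
  have s1 : ∑ k : S, om k * ∑ m ∈ F, ‖a k m‖ ^ 2 ≤ F.card * B := by
    simp_rw [Finset.mul_sum]
    rw [Finset.sum_comm]
    refine (Finset.sum_le_sum hB).trans (le_of_eq ?_)
    rw [Finset.sum_const, nsmul_eq_mul]
  have s2 : ∀ j ∈ Finset.range (J + 1), (2 ^ j * τ) ^ (-(3 / 4) : ℝ) *
      ∑ k : S, om k * ∑ m ∈ F, ‖a k (m - 2 ^ j) - a k m‖ ^ 2 ≤ (F.card * B) * (2 ^ j * τ) ^ (1 / 4 : ℝ) := by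
    intro j hj
    have hj' : j ≤ J := by rw [Finset.mem_range] at hj; omega
    have : ∑ k : S, om k * ∑ m ∈ F, ‖a k (m - 2 ^ j) - a k m‖ ^ 2 ≤ F.card * (B * (2 ^ j * τ)) := by
      simp_rw [Finset.mul_sum]
      rw [Finset.sum_comm]
      refine (Finset.sum_le_sum (hB' j hj')).trans (le_of_eq ?_)
      rw [Finset.sum_const, nsmul_eq_mul]
    calc _ ≤ (2 ^ j * τ) ^ (-(3 / 4) : ℝ) * (F.card * (B * (2 ^ j * τ))) := by gcongr
      _ = (F.card * B) * ((2 ^ j * τ) ^ (-(3 / 4) : ℝ) * (2 ^ j * τ) ^ (1 : ℝ)) := by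
        rw [Real.rpow_one]; ring
      _ = _ := by
        rw [← Real.rpow_add (by positivity)]; norm_num
  have s3 := geom_bd τ hτ J hJ1
  have hpi := Real.pi_pos
  calc _ ≤ ∑ k : S, om k * (10 * Real.pi * τ * (∑ m ∈ F, ‖a k m‖ ^ 2 + ∑ j ∈ Finset.range (J + 1),
        (2 ^ j * τ) ^ (-(3 / 4) : ℝ) * ∑ m ∈ F, ‖a k (m - 2 ^ j) - a k m‖ ^ 2)) := by
        refine Finset.sum_le_sum fun k _ => ?_
        exact mul_le_mul_of_nonneg_left (disc_one τ hτ J hJ2 F _ (a k) (h0 k) (h1 k)) (hom k)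
    _ = 10 * Real.pi * τ * (∑ k : S, om k * ∑ m ∈ F, ‖a k m‖ ^ 2 + ∑ j ∈ Finset.range (J + 1),
        (2 ^ j * τ) ^ (-(3 / 4) : ℝ) * ∑ k : S, om k * ∑ m ∈ F, ‖a k (m - 2 ^ j) - a k m‖ ^ 2) := by
        rw [show ∑ j ∈ Finset.range (J + 1),
          (2 ^ j * τ) ^ (-(3 / 4) : ℝ) * ∑ k : S, om k * ∑ m ∈ F, ‖a k (m - 2 ^ j) - a k m‖ ^ 2 =
          ∑ k : S, ∑ j ∈ Finset.range (J + 1), (2 ^ j * τ) ^ (-(3 / 4) : ℝ) *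
            (om k * ∑ m ∈ F, ‖a k (m - 2 ^ j) - a k m‖ ^ 2) by
          simp_rw [Finset.mul_sum]; exact Finset.sum_comm]
        rw [← Finset.sum_add_distrib, Finset.mul_sum]
        refine Finset.sum_congr rfl fun k _ => ?_
        rw [mul_left_comm, mul_add]
        congr 2
        rw [Finset.mul_sum]
        refine Finset.sum_congr rfl fun j _ => by ring
    _ ≤ 10 * Real.pi * τ * (F.card * B + ∑ j ∈ Finset.range (J + 1), (F.card * B) * (2 ^ j * τ) ^ (1 / 4 : ℝ)) := by
        exact mul_le_mul_of_nonneg_left (add_le_add s1 (Finset.sum_le_sum s2)) (by positivity)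
    _ ≤ 10 * Real.pi * τ * (F.card * B + (F.card * B) * (1 - (2⁻¹ : ℝ) ^ (1 / 4 : ℝ))⁻¹) := by
        rw [← Finset.mul_sum]
        gcongr
    _ = _ := by ring


theorem coeff_cmul (c : ℂ) (f : Torus → ℂ) (k : ℤ) :
    fourierCoeff (fun x => c * f x) k = c * fourierCoeff f k := by
  unfold fourierCoeff
  rw [← integral_const_mul]
  refine integral_congr_ae (Filter.Eventually.of_forall fun x => ?_)
  simp only [smul_eq_mul]
  ring

theorem XdNorm_le (τ s C : ℝ) (hτ : 0 < τ) (t' : ℝ) (η : ℝ → ℝ) (v : ℝ → Torus → ℂ) (S F : Finset ℤ)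
    (w : ℝ → ES S)
    (hv : ∀ t (k : S), fourierCoeff (v t) k = Complex.exp (-Complex.I * t * ((k:ℤ) : ℂ) ^ 2) * w t k)
    (hv0 : ∀ t, ∀ k ∉ S, fourierCoeff (v t) k = 0)
    (hF : ∀ m ∉ F, η ((m : ℝ) * τ) = 0)
    (hC : ∫ σ in (-(Real.pi / τ))..(Real.pi / τ), ∑ k : S, jbr (k:ℤ) ^ (2 * s) *
        (jbr ‖dtau τ (σ - ((k : ℤ) : ℝ) ^ 2)‖ ^ (2 * (3 / 8) : ℝ) *
        ‖(τ : ℂ) * ∑ m ∈ F, ((η ((m:ℝ) * τ) : ℂ) * w ((m:ℝ) * τ + t') k) *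
          Complex.exp (Complex.I * m * τ * ((σ - ((k : ℤ) : ℝ) ^ 2 : ℝ) : ℂ))‖ ^ 2) ≤ C) :
    XdNorm τ s (3 / 8) (fun n x => (η ((n : ℝ) * τ) : ℂ) * v ((n : ℝ) * τ + t') x) ≤ √C := by
  unfold XdNorm
  refine Real.sqrt_le_sqrt (le_trans (le_of_eq ?_) hC)
  have hpos : -(Real.pi / τ) ≤ Real.pi / τ := by
    have : 0 < Real.pi / τ := by have := Real.pi_pos; positivity
    linarith
  rw [intervalIntegral.integral_of_le hpos]
  congr 1
  ext σ
  simp_rw [coeff_cmul]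
  rw [tsum_eq_sum (s := S)]
  · rw [← Finset.sum_coe_sort S (fun k : ℤ => jbr k ^ (2 * s) * jbr ‖dtau τ (σ - (k : ℝ) ^ 2)‖ ^ (2 * (3 / 8) : ℝ) *
      ‖(τ : ℂ) * ∑' m : ℤ, (η ((m:ℝ) * τ) : ℂ) * fourierCoeff (v ((m:ℝ) * τ + t')) k *
        Complex.exp (Complex.I * m * τ * σ)‖ ^ 2)]
    refine Finset.sum_congr rfl fun k _ => ?_
    rw [mul_assoc]
    congr 3
    rw [tsum_eq_sum (s := F)]
    · have : ∑ m ∈ F, (η ((m:ℝ) * τ) : ℂ) * fourierCoeff (v ((m:ℝ) * τ + t')) k *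
          Complex.exp (Complex.I * m * τ * σ) = Complex.exp (-Complex.I * t' * ((k:ℤ) : ℂ) ^ 2) *
          ∑ m ∈ F, ((η ((m:ℝ) * τ) : ℂ) * w ((m:ℝ) * τ + t') k) *
          Complex.exp (Complex.I * m * τ * ((σ - ((k : ℤ) : ℝ) ^ 2 : ℝ) : ℂ)) := by
        rw [Finset.mul_sum]
        refine Finset.sum_congr rfl fun m _ => ?_
        rw [hv]
        have e : Complex.exp (-Complex.I * (((m:ℝ) * τ + t' : ℝ) : ℂ) * ((k:ℤ) : ℂ) ^ 2) *
            Complex.exp (Complex.I * m * τ * σ) = Complex.exp (-Complex.I * t' * ((k:ℤ) : ℂ) ^ 2) *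
            Complex.exp (Complex.I * m * τ * ((σ - ((k : ℤ) : ℝ) ^ 2 : ℝ) : ℂ)) := by
          rw [← Complex.exp_add, ← Complex.exp_add]
          congr 1; push_cast; ring
        linear_combination (η ((m:ℝ) * τ) : ℂ) * w ((m:ℝ) * τ + t') k * e
      rw [this, norm_mul, norm_mul, norm_mul, norm_phase, one_mul]
    · intro m hm
      simp [hF m hm]
  · intro k hk
    simp [hv0 _ k hk]

theorem J_exists (τ : ℝ) (hτ : 0 < τ) (h1 : τ ≤ 1) : ∃ J : ℕ, 2 ^ J * τ ≤ 1 ∧ 1 < 2 ^ (J + 1) * τ := by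
  obtain ⟨n, hn1, hn2⟩ := exists_nat_pow_near (one_le_inv_iff₀.mpr ⟨hτ, h1⟩) (by norm_num : (1:ℝ) < 2)
  refine ⟨n, ?_, ?_⟩
  · calc 2 ^ n * τ ≤ τ⁻¹ * τ := by gcongr
      _ = 1 := inv_mul_cancel₀ hτ.ne'
  · calc 1 = τ⁻¹ * τ := (inv_mul_cancel₀ hτ.ne').symm
      _ < 2 ^ (n + 1) * τ := by gcongr

theorem a_diff (η : ℝ → ℝ) (E L : ℝ) (hE0 : 0 ≤ E) (hL0 : 0 ≤ L) (hE : ∀ x, |η x| ≤ E)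
    (hL : ∀ x y, |η x - η y| ≤ L * |x - y|)
    (S : Finset ℤ) (om : ℤ → ℝ) (hom : ∀ k, 0 ≤ om k) (z z' : ES S) (x y K h : ℝ) (hh : 0 ≤ h) (hh1 : h ≤ 1)
    (hxy : |x - y| = h) (hK : 0 ≤ K) (hz : ∑ k : S, om k * ‖z k‖ ^ 2 ≤ K)
    (hzz : ∑ k : S, om k * ‖(z - z') k‖ ^ 2 ≤ K * h) :
    ∑ k : S, om k * ‖(η x : ℂ) * z' k - (η y : ℂ) * z k‖ ^ 2 ≤ (2 * E ^ 2 * K + 2 * L ^ 2 * K) * h := by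
  have pt : ∀ k : S, om k * ‖(η x : ℂ) * z' k - (η y : ℂ) * z k‖ ^ 2 ≤
      2 * E ^ 2 * (om k * ‖(z - z') k‖ ^ 2) + 2 * L ^ 2 * h ^ 2 * (om k * ‖z k‖ ^ 2) := by
    intro k
    have e : (η x : ℂ) * z' k - (η y : ℂ) * z k = ((η x - η y : ℝ) : ℂ) * z k - (η x : ℂ) * (z - z') k := by
      rw [PiLp.sub_apply]; push_cast; ring
    have h1 : ‖(η x : ℂ) * z' k - (η y : ℂ) * z k‖ ≤ L * h * ‖z k‖ + E * ‖(z - z') k‖ := by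
      rw [e]
      refine (norm_sub_le _ _).trans ?_
      rw [norm_mul, norm_mul, Complex.norm_real, Complex.norm_real, Real.norm_eq_abs, Real.norm_eq_abs]
      have := hL x y
      rw [hxy] at this
      gcongr
      exact hE x
    have h2 : ‖(η x : ℂ) * z' k - (η y : ℂ) * z k‖ ^ 2 ≤
        2 * E ^ 2 * ‖(z - z') k‖ ^ 2 + 2 * L ^ 2 * h ^ 2 * ‖z k‖ ^ 2 := by
      calc _ ≤ (L * h * ‖z k‖ + E * ‖(z - z') k‖) ^ 2 := by gcongr
        _ ≤ _ := by nlinarith [sq_nonneg (L * h * ‖z k‖ - E * ‖(z - z') k‖)]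
    have := mul_le_mul_of_nonneg_left h2 (hom k)
    refine this.trans (le_of_eq ?_)
    ring
  refine (Finset.sum_le_sum fun k _ => pt k).trans ?_
  rw [Finset.sum_add_distrib, ← Finset.mul_sum, ← Finset.mul_sum]
  have hsq : h ^ 2 ≤ h := by nlinarith
  calc _ ≤ 2 * E ^ 2 * (K * h) + 2 * L ^ 2 * h ^ 2 * K := by gcongr
    _ ≤ 2 * E ^ 2 * (K * h) + 2 * L ^ 2 * h * K := by gcongr
    _ = _ := by ring

theorem final_aux (μ : ℝ) (hμ : μ = 1 ∨ μ = -1)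
    (s₀ : ℝ) (u₀ : Torus → ℂ) (hu₀ : InHs s₀ u₀)
    (η : ℝ → ℝ) (hη : ContDiff ℝ (⊤ : ℕ∞) η) (hηc : HasCompactSupport η)
    (s₁ : ℝ) (hs₁ : 0 ≤ s₁) (hs₁lt : s₁ < s₀) :
    ∃ C > (0 : ℝ), ∀ τ ∈ Set.Ioc (0 : ℝ) 1, ∀ v : ℝ → Torus → ℂ,
      IsProjSolution μ τ u₀ v →
      ∀ t' ∈ Set.Icc (0 : ℝ) (4 * τ),
        XdNorm τ s₁ (3 / 8) (fun n x => (η ((n : ℝ) * τ) : ℂ) * v ((n : ℝ) * τ + t') x)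
          ≤ C := by
  -- bounds on the cutoff
  obtain ⟨E, hE⟩ := hηc.exists_bound_of_continuous hη.continuous
  have hE0 : 0 ≤ E := (norm_nonneg _).trans (hE 0)
  obtain ⟨L, hL⟩ := hη.lipschitzWith_of_hasCompactSupport hηc (by simp)
  have hL' : ∀ x y, |η x - η y| ≤ L * |x - y| := fun x y => by
    have := hL.dist_le_mul x y
    rwa [Real.dist_eq, Real.dist_eq] at this
  obtain ⟨R0, hR0, hsub⟩ : ∃ R0 : ℝ, 0 < R0 ∧ ∀ x, R0 < |x| → η x = 0 := by
    obtain ⟨r, hr⟩ := (hηc.isCompact.isBounded).subset_closedBall 0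
    refine ⟨max r 1, by positivity, fun x hx => ?_⟩
    by_contra h
    have := hr (subset_tsupport η h)
    rw [Metric.mem_closedBall, dist_zero_right, Real.norm_eq_abs] at this
    exact absurd (this.trans (le_max_left r 1)) (not_le.mpr hx)
  set N : ℝ := ∑' k : ℤ, jbr k ^ (2 * s₀) * ‖fourierCoeff u₀ k‖ ^ 2 with hN
  have hN0 : 0 ≤ N := tsum_nonneg fun k => mul_nonneg (jbr_nn _ _) (by positivity)
  obtain ⟨K, hK0, hK⟩ := hs_all N (R0 + 8) s₀ s₁ hN0 (by linarith) hs₁ hs₁lt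
  set B : ℝ := E ^ 2 * K + (2 * E ^ 2 * K + 2 * (L:ℝ) ^ 2 * K) with hB
  have hB0 : 0 ≤ B := by positivity
  have hG0 : 0 ≤ (1 - (2⁻¹ : ℝ) ^ (1 / 4 : ℝ))⁻¹ := by
    have : (2⁻¹ : ℝ) ^ (1 / 4 : ℝ) < 1 := Real.rpow_lt_one (by norm_num) (by norm_num) (by norm_num)
    exact inv_nonneg.mpr (by linarith)
  have hpi := Real.pi_pos
  set C : ℝ := 10 * Real.pi * (2 * R0 + 5) * B * (1 + (1 - (2⁻¹ : ℝ) ^ (1 / 4 : ℝ))⁻¹) with hC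
  refine ⟨√C + 1, by positivity, ?_⟩
  rintro τ ⟨hτ, hτ1⟩ v hv t' ⟨ht0, ht4⟩
  obtain ⟨w, hw, hw0, hwv, hwv0⟩ := to_sol hv
  obtain ⟨J, hJ1, hJ2⟩ := J_exists τ hτ hτ1
  have hmu : |μ| ≤ 1 := by rcases hμ with h | h <;> simp [h]
  obtain ⟨b1, b2⟩ := hK (SF τ) μ hmu w hw (by
    simp_rw [hw0]
    rw [Finset.sum_coe_sort (SF τ) (fun k : ℤ => jbr k ^ (2 * s₀) * ‖fourierCoeff u₀ k‖ ^ 2)]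
    exact hu₀.2.sum_le_tsum _ (fun k _ => mul_nonneg (jbr_nn _ _) (by positivity)))
  set M : ℤ := ⌈(R0 + 1) / τ⌉ with hM
  have hM1 : R0 + 1 ≤ M * τ := by
    rw [← div_le_iff₀ hτ]; exact Int.le_ceil _
  have hM2 : M * τ ≤ R0 + 2 := by
    have h3 := (Int.ceil_lt_add_one ((R0 + 1) / τ)).le
    rw [← hM] at h3
    calc (M:ℝ) * τ ≤ ((R0 + 1) / τ + 1) * τ := by gcongr
      _ = R0 + 1 + τ := by field_simp
      _ ≤ R0 + 2 := by linarith
  have hM0 : 0 ≤ M := by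
    have : (0:ℝ) < M := by
      by_contra h
      rw [not_lt] at h
      nlinarith
    exact_mod_cast this.le
  set F : Finset ℤ := Finset.Icc (-M) M with hF
  have hFout : ∀ m ∉ F, R0 + 1 < |(m:ℝ) * τ| := by
    intro m hm
    have h1 : M < |m| := by
      by_contra h
      rw [not_lt, abs_le] at h
      exact hm (Finset.mem_Icc.mpr h)
    have h2 : (M:ℝ) < |(m:ℝ)| := by exact_mod_cast h1
    rw [abs_mul, abs_of_pos hτ]
    nlinarith
  have hFin : ∀ m ∈ F, |(m:ℝ) * τ| ≤ R0 + 2 := by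
    intro m hm
    have h1 : |m| ≤ M := abs_le.mpr (Finset.mem_Icc.mp hm)
    have h2 : |(m:ℝ)| ≤ M := by exact_mod_cast h1
    rw [abs_mul, abs_of_pos hτ]
    nlinarith
  have hcard : τ * F.card ≤ 2 * R0 + 5 := by
    have : (F.card : ℤ) = 2 * M + 1 := by
      rw [hF, Int.card_Icc, Int.toNat_of_nonneg (by omega)]; ring
    have h2 : (F.card : ℝ) = 2 * M + 1 := by exact_mod_cast this
    rw [h2]; nlinarith
  have hpow : ∀ j ≤ J, (2:ℝ) ^ j * τ ≤ 1 := by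
    intro j hj
    refine le_trans ?_ hJ1
    have : (2:ℝ) ^ j ≤ 2 ^ J := pow_le_pow_right₀ (by norm_num) hj
    gcongr
  have hη0 : ∀ m ∉ F, η ((m:ℝ) * τ) = 0 := fun m hm => hsub _ (by linarith [hFout m hm])
  have hη1 : ∀ j ≤ J, ∀ m ∉ F, η (((m - 2 ^ j : ℤ):ℝ) * τ) = 0 := by
    intro j hj m hm
    apply hsub
    have h1 := hFout m hm
    have h2 := hpow j hj
    have h3 : (0:ℝ) ≤ 2 ^ j * τ := by positivity
    have h4 : ((m - 2 ^ j : ℤ):ℝ) * τ = (m:ℝ) * τ - 2 ^ j * τ := by push_cast; ring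
    have h5 := abs_sub_abs_le_abs_sub ((m:ℝ) * τ) (2 ^ j * τ)
    rw [abs_of_nonneg h3] at h5
    rw [h4]; linarith
  refine le_trans (XdNorm_le τ s₁ C hτ t' η v (SF τ) F w hwv hwv0 hη0 ?_) (by linarith)
  have hmain := disc_main τ hτ J hJ1 hJ2 F (SF τ) (fun k => jbr k ^ (2 * s₁)) (fun k => jbr_nn _ _)
    (fun k m => (η ((m:ℝ) * τ) : ℂ) * w ((m:ℝ) * τ + t') k) B
    (fun k m hm => by simp only [hη0 m hm]; simp)
    (fun k j hj m hm => by simp only [hη1 j hj m hm]; simp)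
    ?_ ?_ hB0
  · refine hmain.trans ?_
    rw [hC]
    gcongr
  · intro m hm
    have h1 := hFin m hm
    rw [abs_le] at h1
    have h2 := b1 ((m:ℝ) * τ + t') (abs_le.mpr ⟨by linarith, by linarith⟩)
    have h3 : ∀ k : SF τ, jbr (k:ℤ) ^ (2 * s₁) * ‖(η ((m:ℝ) * τ) : ℂ) * w ((m:ℝ) * τ + t') k‖ ^ 2 ≤
        E ^ 2 * (jbr (k:ℤ) ^ (2 * s₁) * ‖w ((m:ℝ) * τ + t') k‖ ^ 2) := by
      intro k
      rw [norm_mul, Complex.norm_real, mul_pow]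
      have h4 : ‖η ((m:ℝ) * τ)‖ ^ 2 ≤ E ^ 2 := by gcongr; exact hE _
      have h5 : 0 ≤ jbr (k:ℤ) ^ (2 * s₁) * ‖w ((m:ℝ) * τ + t') k‖ ^ 2 :=
        mul_nonneg (jbr_nn _ _) (by positivity)
      have := mul_le_mul_of_nonneg_right h4 h5
      linarith
    refine (Finset.sum_le_sum fun k _ => h3 k).trans ?_
    rw [← Finset.mul_sum]
    have h6 : E ^ 2 * ∑ k : SF τ, jbr (k:ℤ) ^ (2 * s₁) * ‖w ((m:ℝ) * τ + t') k‖ ^ 2 ≤ E ^ 2 * K := by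
      gcongr
    have h7 : 0 ≤ 2 * E ^ 2 * K + 2 * (L:ℝ) ^ 2 * K := by positivity
    linarith
  · intro j hj m hm
    have h1 := hFin m hm
    rw [abs_le] at h1
    have h2 := hpow j hj
    have h3 : (0:ℝ) ≤ 2 ^ j * τ := by positivity
    have h4 : ((m - 2 ^ j : ℤ):ℝ) * τ = (m:ℝ) * τ - 2 ^ j * τ := by push_cast; ring
    have c1 := b1 ((m:ℝ) * τ + t') (abs_le.mpr ⟨by linarith, by linarith⟩)
    have c2 := b2 (((m - 2 ^ j : ℤ):ℝ) * τ + t') ((m:ℝ) * τ + t') (by rw [h4]; linarith)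
      (by rw [h4]; linarith) (by linarith)
    have c3 := a_diff η E L hE0 L.2 hE hL' (SF τ) (fun k => jbr k ^ (2 * s₁)) (fun k => jbr_nn _ _)
      (w ((m:ℝ) * τ + t')) (w (((m - 2 ^ j : ℤ):ℝ) * τ + t')) (((m - 2 ^ j : ℤ):ℝ) * τ) ((m:ℝ) * τ) K
      (2 ^ j * τ) h3 h2 (by rw [h4, sub_sub_cancel_left, abs_neg, abs_of_nonneg h3]) hK0 c1
      (c2.trans (le_of_eq (by rw [h4]; ring)))
    refine c3.trans ?_
    have : 0 ≤ E ^ 2 * K := by positivity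
    gcongr
    linarith

/-- Uniform-in-`τ` discrete Bourgain bound for the time-shifted grid
restrictions of the projected solution. -/
theorem projected_solution_discrete_bound (μ : ℝ) (hμ : μ = 1 ∨ μ = -1)
    (s₀ : ℝ) (hs₀ : 0 < s₀) (u₀ : Torus → ℂ) (hu₀ : InHs s₀ u₀)
    (η : ℝ → ℝ) (hη : ContDiff ℝ (⊤ : ℕ∞) η) (hηc : HasCompactSupport η)
    (s₁ : ℝ) (hs₁ : 0 ≤ s₁) (hs₁lt : s₁ < s₀) :
    ∃ C > (0 : ℝ), ∀ τ ∈ Set.Ioc (0 : ℝ) 1, ∀ v : ℝ → Torus → ℂ,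
      IsProjSolution μ τ u₀ v → ContHsOn s₀ Set.univ v →
      ∀ t' ∈ Set.Icc (0 : ℝ) (4 * τ),
        XdNorm τ s₁ (3 / 8) (fun n x => (η ((n : ℝ) * τ) : ℂ) * v ((n : ℝ) * τ + t') x)
          ≤ C := by
  obtain ⟨C, hC, h⟩ := final_aux μ hμ s₀ u₀ hu₀ η hη hηc s₁ hs₁ hs₁lt
  exact ⟨C, hC, fun τ hτ v hv _ => h τ hτ v hv⟩
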